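/- Theorem D, ℚ(√−2)-dihedral family: For every integer n ≥ 1, let z_n = (2·4^n + 1)/3 and take r = 24·z_n. Then the quotient #{primes ℓ with 5 ≤ ℓ ≤ x and c_r(ν_r(ℓ)) = 1} / π(x) tends to (1/2)^{n+1} (in ℝ, as the natural number x → ∞). -/

import Mathlib

open Polynomial Filter

/-- The `N`-th Fourier coefficient of the mod-2 eta power `η^r(q^{m_r})`:
the coefficient of `X^N` in `X^{b_r} · ∏_{n=1}^{N} (1 − X^{m_r·n})^r` over `ZMod 2`,
where `m_r = 24 / gcd 24 r` and `b_r = r / gcd 24 r`. -/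
noncomputable def etaCoeff (r N : ℕ) : ZMod 2 :=
  (X ^ (r / Nat.gcd 24 r) *
    ∏ n ∈ Finset.Icc 1 N,
      ((1 : Polynomial (ZMod 2)) - X ^ (24 / Nat.gcd 24 r * n)) ^ r).coeff N

/-- `ν_r(ℓ)`: the smallest multiple of `ℓ` that is `≥ b_r` and congruent to `b_r`
modulo `m_r`. -/
noncomputable def nuR (r ℓ : ℕ) : ℕ :=
  sInf {N : ℕ | ℓ ∣ N ∧ r / Nat.gcd 24 r ≤ N ∧
    N % (24 / Nat.gcd 24 r) = (r / Nat.gcd 24 r) % (24 / Nat.gcd 24 r)}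

/-- `π(x)`: the number of primes `≤ x`. -/
def primePi (x : ℕ) : ℕ := ((Finset.range (x + 1)).filter Nat.Prime).card

/-- The number of primes `ℓ` with `5 ≤ ℓ ≤ x` and `c_r(ν_r(ℓ)) = 1`. -/
noncomputable def etaDensityCount (r x : ℕ) : ℕ :=
  ((Finset.range (x + 1)).filter
    (fun ℓ => ℓ.Prime ∧ 5 ≤ ℓ ∧ etaCoeff r (nuR r ℓ) = 1)).card

/-!
Since `3 * z = 2 * 4 ^ n + 1`, we have `24 * z = 2 ^ 3 + 2 ^ (2 * n + 4)`, so modulo two the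
Frobenius endomorphism and Euler's pentagonal number theorem write `∏ (1 - q ^ k) ^ (24 * z)` as a
product of two sparse series. Its coefficient at a prime `ℓ` counts, up to signs, the
representations `3 * ℓ = u ^ 2 + 2 * 4 ^ n * w ^ 2` with `w` odd. There is at most one, and it
exists exactly if `ℓ = x ^ 2 + 2 * y ^ 2` with `y / x ≡ 1 + 2 ^ n` modulo `2 ^ (n + 1)`.

The slopes `y / x` modulo `2 ^ (n + 1)` of the elements `x + y √-2` of odd norm form a cyclic group
of order `2 ^ (n + 1)`, over which the primes of `ℤ[√-2]` equidistribute. The Dirichlet series of a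
nontrivial character continues to the left of `re s = 1` because the character sums to zero over
each vertical segment of length `2 ^ (n + 1)`. If the character has order greater than two, the
`3-4-1` inequality shows that the series does not vanish on that line; characters of order at most
two only see the residue of `ℓ` modulo `8`, and Dirichlet's theorem applies. A Tauberian argument
with the Fejér kernel (Wiener–Ikehara) turns this into the density `2⁻¹ ^ (n + 1)`.
-/

namespace EtaDensity

section Fejer

open MeasureTheory Topology Set

/-! ### The Fejér kernel -/

/-- The Fejér kernel, written as the cosine transform of the tent function. -/
noncomputable def fejer (u : ℝ) : ℝ := ∫ τ in (0 : ℝ)..1, (1 - τ) * (2 * Real.cos (τ * u))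

lemma fejer_eq {u : ℝ} (hu : u ≠ 0) : fejer u = 2 * (1 - Real.cos u) / u ^ 2 := by
  have hderiv : ∀ τ ∈ uIcc (0 : ℝ) 1, HasDerivAt
      (fun τ : ℝ => 2 * ((1 - τ) * Real.sin (τ * u) / u - Real.cos (τ * u) / u ^ 2))
      ((1 - τ) * (2 * Real.cos (τ * u))) τ := by
    intro τ _
    have hlin : HasDerivAt (fun τ : ℝ => τ * u) u τ := by
      simpa using (hasDerivAt_id τ).mul_const u
    have htent : HasDerivAt (fun τ : ℝ => 1 - τ) (-1) τ := by
      simpa using (hasDerivAt_id τ).const_sub 1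
    refine ((((htent.mul hlin.sin).div_const u).sub
      (hlin.cos.div_const (u ^ 2))).const_mul 2).congr_deriv ?_
    field_simp
    ring
  rw [fejer, intervalIntegral.integral_eq_sub_of_hasDerivAt hderiv
    (Continuous.intervalIntegrable (by fun_prop) _ _)]
  simp
  ring

lemma fejer_zero : fejer 0 = 1 := by
  simp only [fejer, mul_zero, Real.cos_zero, mul_one]
  rw [intervalIntegral.integral_mul_const, intervalIntegral.integral_sub (by simp) (by simp)]
  norm_num

@[fun_prop]
lemma continuous_fejer : Continuous fejer :=
  intervalIntegral.continuous_parametric_intervalIntegral_of_continuous' (by fun_prop) _ _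

lemma fejer_nonneg (u : ℝ) : 0 ≤ fejer u := by
  rcases eq_or_ne u 0 with rfl | hu
  · simp [fejer_zero]
  · rw [fejer_eq hu]
    have : 0 ≤ 1 - Real.cos u := sub_nonneg.mpr (Real.cos_le_one u)
    positivity

lemma fejer_le_two (u : ℝ) : fejer u ≤ 2 := by
  have h := intervalIntegral.norm_integral_le_of_norm_le_const (a := (0 : ℝ)) (b := 1)
    (f := fun τ : ℝ => (1 - τ) * (2 * Real.cos (τ * u))) (C := 2) fun τ hτ => by
      rw [uIoc_of_le zero_le_one] at hτ
      have htent : |1 - τ| ≤ 1 := by rw [abs_le]; constructor <;> linarith [hτ.1, hτ.2]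
      have hcos := Real.abs_cos_le_one (τ * u)
      rw [Real.norm_eq_abs, abs_mul, abs_mul, abs_two]
      nlinarith [abs_nonneg (1 - τ), abs_nonneg (Real.cos (τ * u))]
  simp only [Real.norm_eq_abs, sub_zero, abs_one, mul_one] at h
  exact (le_abs_self (fejer u)).trans h

lemma fejer_le (u : ℝ) : fejer u ≤ 8 * (1 + u ^ 2)⁻¹ := by
  rw [← div_eq_mul_inv]
  rcases le_total (u ^ 2) 1 with h | h
  · rw [le_div_iff₀ (by positivity)]
    nlinarith [fejer_nonneg u, fejer_le_two u]
  · have hu : u ≠ 0 := by rintro rfl; norm_num at h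
    rw [fejer_eq hu, div_le_div_iff₀ (by positivity) (by positivity)]
    nlinarith [Real.neg_one_le_cos u, Real.cos_le_one u]

lemma integrable_fejer : Integrable fejer := by
  refine (integrable_inv_one_add_sq.const_mul 8).mono' continuous_fejer.aestronglyMeasurable
    (Eventually.of_forall fun u => ?_)
  rw [Real.norm_of_nonneg (fejer_nonneg u)]
  exact fejer_le u

lemma integral_fejer_pos : 0 < ∫ u, fejer u := by
  rw [integral_pos_iff_support_of_nonneg fejer_nonneg integrable_fejer]
  exact continuous_fejer.isOpen_support.measure_pos _ ⟨0, by simp [fejer_zero]⟩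

lemma measurableSet_lt_abs (x : ℝ) : MeasurableSet {u : ℝ | x < |u|} :=
  (isOpen_lt continuous_const continuous_abs).measurableSet

lemma tendsto_setIntegral_fejer_lt_abs :
    Tendsto (fun x : ℝ => ∫ u in {u : ℝ | x < |u|}, fejer u) atTop (𝓝 0) := by
  simp_rw [← integral_indicator (measurableSet_lt_abs _)]
  rw [← integral_zero ℝ ℝ]
  refine tendsto_integral_filter_of_dominated_convergence fejer ?_ ?_ integrable_fejer ?_
  · exact Eventually.of_forall fun x =>
      (integrable_fejer.indicator (measurableSet_lt_abs x)).aestronglyMeasurable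
  · refine Eventually.of_forall fun x => Eventually.of_forall fun u => ?_
    rw [← Real.norm_of_nonneg (fejer_nonneg u)]
    exact norm_indicator_le_norm_self _ _
  · refine Eventually.of_forall fun u => tendsto_const_nhds.congr' ?_
    filter_upwards [eventually_ge_atTop |u|] with x hx
    rw [indicator_of_notMem (by simpa using hx)]

lemma integral_tent_mul_exp (u : ℝ) :
    ∫ τ in (-1 : ℝ)..1, ((1 - |τ| : ℝ) : ℂ) * Complex.exp ((τ * u : ℝ) * Complex.I) =
      fejer u := by
  set f : ℝ → ℂ := fun τ => ((1 - |τ| : ℝ) : ℂ) * Complex.exp ((τ * u : ℝ) * Complex.I) with hf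
  have hc : Continuous f := by fun_prop
  have hneg : ∫ τ in (-1 : ℝ)..0, f τ = ∫ τ in (0 : ℝ)..1, f (-τ) := by
    rw [intervalIntegral.integral_comp_neg, neg_zero]
  rw [← intervalIntegral.integral_add_adjacent_intervals (b := 0)
      (hc.intervalIntegrable _ _) (hc.intervalIntegrable _ _), hneg,
    ← intervalIntegral.integral_add (Continuous.intervalIntegrable (by fun_prop) _ _)
      (hc.intervalIntegrable _ _), fejer, ← intervalIntegral.integral_ofReal]
  refine intervalIntegral.integral_congr fun τ hτ => ?_
  rw [uIcc_of_le zero_le_one] at hτ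
  simp only [hf, abs_neg, abs_of_nonneg hτ.1]
  push_cast
  rw [Complex.cos]
  ring_nf

/-! ### Fejér means of functions with a regular Laplace transform -/

lemma integral_mul_fejer_eq {μ : Measure ℝ} [SFinite μ] {f : ℝ → ℂ} (hf : Integrable f μ)
    (lam y : ℝ) :
    ∫ t, f t * (fejer (lam * (y - t)) : ℂ) ∂μ =
      ∫ τ in (-1 : ℝ)..1, ((1 - |τ| : ℝ) : ℂ) * Complex.exp ((τ * (lam * y) : ℝ) * Complex.I) *
        ∫ t, f t * Complex.exp (-(lam * τ * Complex.I) * t) ∂μ := by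
  have hfubini : Integrable (Function.uncurry fun t τ : ℝ => f t * ((1 - |τ| : ℝ) : ℂ) *
      Complex.exp ((τ * (lam * (y - t)) : ℝ) * Complex.I))
      (μ.prod (volume.restrict (Ioc (-1 : ℝ) 1))) := by
    have htent : IntegrableOn (fun τ : ℝ => ((1 - |τ| : ℝ) : ℂ)) (Ioc (-1) 1) :=
      Continuous.integrableOn_Ioc (by fun_prop)
    refine (hf.mul_prod htent).mul_bdd (c := 1)
      (Continuous.aestronglyMeasurable (by fun_prop)) (Eventually.of_forall fun z => ?_)
    exact (Complex.norm_exp_ofReal_mul_I _).le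
  calc ∫ t, f t * (fejer (lam * (y - t)) : ℂ) ∂μ
      = ∫ t, (∫ τ in Ioc (-1 : ℝ) 1, f t * ((1 - |τ| : ℝ) : ℂ) *
          Complex.exp ((τ * (lam * (y - t)) : ℝ) * Complex.I)) ∂μ := by
        simp_rw [mul_assoc, integral_const_mul]
        simp_rw [← intervalIntegral.integral_of_le (show (-1 : ℝ) ≤ 1 by norm_num),
          integral_tent_mul_exp]
    _ = ∫ τ in Ioc (-1 : ℝ) 1, ∫ t, f t * ((1 - |τ| : ℝ) : ℂ) *
          Complex.exp ((τ * (lam * (y - t)) : ℝ) * Complex.I) ∂μ := integral_integral_swap hfubini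
    _ = _ := by
        rw [intervalIntegral.integral_of_le (by norm_num)]
        congr 1 with τ
        rw [← integral_const_mul]
        congr 1 with t
        have hexp : Complex.exp ((τ * (lam * (y - t)) : ℝ) * Complex.I) =
            Complex.exp ((τ * (lam * y) : ℝ) * Complex.I) *
              Complex.exp (-(lam * τ * Complex.I) * t) := by
          rw [← Complex.exp_add]
          push_cast
          ring_nf
        rw [hexp]
        ring

lemma tendsto_integral_exp_neg_smul_nhdsGT {E : Type*} [NormedAddCommGroup E] [NormedSpace ℝ E]
    {f : ℝ → E} (hf : IntegrableOn f (Ioi 0)) :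
    Tendsto (fun ε : ℝ => ∫ t in Ioi (0 : ℝ), Real.exp (-ε * t) • f t) (𝓝[>] 0)
      (𝓝 (∫ t in Ioi (0 : ℝ), f t)) := by
  refine tendsto_integral_filter_of_dominated_convergence (fun t => ‖f t‖)
    (Eventually.of_forall fun ε => ?_) ?_ hf.norm (Eventually.of_forall fun t => ?_)
  · exact (Continuous.aestronglyMeasurable (by fun_prop)).smul hf.aestronglyMeasurable
  · refine eventually_nhdsWithin_of_forall fun ε hε => ?_
    refine (ae_restrict_iff' measurableSet_Ioi).mpr (Eventually.of_forall fun t ht => ?_)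
    rw [norm_smul, Real.norm_of_nonneg (Real.exp_pos _).le]
    refine mul_le_of_le_one_left (norm_nonneg _) (Real.exp_le_one_iff.mpr ?_)
    rw [neg_mul]
    exact neg_nonpos.mpr (mul_pos hε ht).le
  · have hcont : Continuous fun ε : ℝ => Real.exp (-ε * t) • f t := by fun_prop
    simpa using (hcont.tendsto 0).mono_left nhdsWithin_le_nhds

lemma tendsto_intervalIntegral_mul_nhdsGT {G : ℂ → ℂ} (hG : ContinuousOn G {s | 0 ≤ s.re})
    {w : ℝ → ℂ} (hw : Continuous w) (lam a b : ℝ) :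
    Tendsto (fun ε : ℝ => ∫ τ in a..b, w τ * G (ε + lam * τ * Complex.I)) (𝓝[>] 0)
      (𝓝 (∫ τ in a..b, w τ * G (lam * τ * Complex.I))) := by
  have hG' : Continuous fun p : ℝ × ℝ => G ((max p.1 0 : ℝ) + lam * p.2 * Complex.I) :=
    hG.comp_continuous (by fun_prop) fun p => by simp
  have hcont : Continuous fun ε : ℝ =>
      ∫ τ in a..b, w τ * G ((max ε 0 : ℝ) + lam * τ * Complex.I) :=
    intervalIntegral.continuous_parametric_intervalIntegral_of_continuous'
      ((hw.comp continuous_snd).mul hG') _ _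
  have hlim := (hcont.tendsto 0).mono_left (nhdsWithin_le_nhds (s := Ioi 0))
  simp only [max_self, Complex.ofReal_zero, zero_add] at hlim
  refine hlim.congr' (eventually_nhdsWithin_of_forall fun ε hε => ?_)
  simp only [max_eq_left (le_of_lt (mem_Ioi.mp hε))]

lemma tendsto_intervalIntegral_exp_mul_atTop (f : ℝ → ℂ) {a b : ℝ} (hab : a ≤ b) :
    Tendsto (fun y : ℝ => ∫ τ in a..b, Complex.exp ((τ * y : ℝ) * Complex.I) * f τ) atTop
      (𝓝 0) := by
  have hfreq : Tendsto (fun y : ℝ => -y / (2 * Real.pi)) atTop (cocompact ℝ) :=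
    (tendsto_neg_atTop_atBot.atBot_div_const (by positivity)).mono_right atBot_le_cocompact
  refine ((Real.tendsto_integral_exp_smul_cocompact ((Ioc a b).indicator f)).comp hfreq).congr
    fun y => ?_
  rw [intervalIntegral.integral_of_le hab, ← integral_indicator measurableSet_Ioc]
  refine integral_congr_ae (Eventually.of_forall fun τ => ?_)
  have hphase : 2 * Real.pi * -(τ * (-y / (2 * Real.pi))) = τ * y := by field_simp
  simp only [indicator_apply]
  split_ifs
  · rw [Circle.smul_def, Real.fourierChar_apply, smul_eq_mul, hphase]
  · rw [smul_zero]

section LaplaceTransform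

variable {b : ℝ → ℝ} {M : ℝ} {G : ℂ → ℂ} {lam : ℝ}

lemma integrable_comp_mul_sub {E : Type*} [NormedAddCommGroup E] {f : ℝ → E} (hf : Integrable f)
    (hlam : lam ≠ 0) (y : ℝ) : Integrable fun t => f (lam * (y - t)) :=
  (hf.comp_mul_left' hlam).comp_sub_left y

lemma integrable_mul_fejer (hb : Measurable b) (hM : ∀ t, |b t| ≤ M) (hlam : lam ≠ 0) (y : ℝ) :
    Integrable fun t => b t * fejer (lam * (y - t)) :=
  (integrable_comp_mul_sub integrable_fejer hlam y).bdd_mul hb.aestronglyMeasurable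
    (Eventually.of_forall hM)

lemma integral_mul_fejer_eq_boundary (hb : Measurable b) (hM : ∀ t, |b t| ≤ M)
    (hG : ContinuousOn G {s | 0 ≤ s.re})
    (hGb : ∀ s : ℂ, 0 < s.re → G s = ∫ t in Ioi (0 : ℝ), (b t : ℂ) * Complex.exp (-s * t))
    (hlam : lam ≠ 0) (y : ℝ) :
    ((∫ t in Ioi (0 : ℝ), b t * fejer (lam * (y - t)) : ℝ) : ℂ) =
      ∫ τ in (-1 : ℝ)..1, ((1 - |τ| : ℝ) : ℂ) * Complex.exp ((τ * (lam * y) : ℝ) * Complex.I) *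
        G (lam * τ * Complex.I) := by
  refine tendsto_nhds_unique ((Complex.continuous_ofReal.tendsto _).comp
    (tendsto_integral_exp_neg_smul_nhdsGT (integrable_mul_fejer hb hM hlam y).integrableOn))
    ((tendsto_intervalIntegral_mul_nhdsGT hG (by fun_prop) lam (-1) 1).congr'
      (eventually_nhdsWithin_of_forall fun ε hε => ?_))
  have hε' : (0 : ℝ) < ε := hε
  have hf : IntegrableOn (fun t : ℝ => (b t : ℂ) * Complex.exp (-ε * t)) (Ioi 0) := by
    refine (integrableOn_exp_mul_complex_Ioi (by simpa using hε') 0).bdd_mul (c := M)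
      (Complex.measurable_ofReal.comp hb).aestronglyMeasurable (Eventually.of_forall fun t => ?_)
    simpa using hM t
  have hshift : ∀ τ : ℝ, G (ε + lam * τ * Complex.I) = ∫ t in Ioi (0 : ℝ),
      (b t : ℂ) * Complex.exp (-ε * t) * Complex.exp (-(lam * τ * Complex.I) * t) := by
    intro τ
    rw [hGb _ (by simpa using hε')]
    simp_rw [mul_assoc (b _ : ℂ), ← Complex.exp_add]
    ring_nf
  simp_rw [hshift, ← integral_mul_fejer_eq hf lam y, Function.comp, ← integral_complex_ofReal]
  congr 1 with t
  simp only [smul_eq_mul, Complex.ofReal_mul, Complex.ofReal_exp, Complex.ofReal_neg]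
  ring

theorem tendsto_integral_mul_fejer (hb : Measurable b) (hM : ∀ t, |b t| ≤ M)
    (hG : ContinuousOn G {s | 0 ≤ s.re})
    (hGb : ∀ s : ℂ, 0 < s.re → G s = ∫ t in Ioi (0 : ℝ), (b t : ℂ) * Complex.exp (-s * t))
    (hlam : 0 < lam) :
    Tendsto (fun y : ℝ => ∫ t in Ioi (0 : ℝ), b t * fejer (lam * (y - t))) atTop (𝓝 0) := by
  have hRL := (tendsto_intervalIntegral_exp_mul_atTop
    (fun τ : ℝ => ((1 - |τ| : ℝ) : ℂ) * G (lam * τ * Complex.I))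
    (show (-1 : ℝ) ≤ 1 by norm_num)).comp (tendsto_id.const_mul_atTop hlam)
  suffices h : Tendsto (fun y : ℝ =>
      ((∫ t in Ioi (0 : ℝ), b t * fejer (lam * (y - t)) : ℝ) : ℂ)) atTop (𝓝 0) from
    (Complex.continuous_re.tendsto 0).comp h
  refine hRL.congr fun y => ?_
  rw [integral_mul_fejer_eq_boundary hb hM hG hGb hlam.ne']
  simp only [Function.comp, id, mul_left_comm (Complex.exp _), mul_assoc]

end LaplaceTransform

end Fejer

section WienerIkehara

open MeasureTheory Topology Set

lemma integral_comp_mul_sub {E : Type*} [NormedAddCommGroup E] [NormedSpace ℝ E] (f : ℝ → E)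
    {lam : ℝ} (hlam : 0 < lam) (y : ℝ) : ∫ t, f (lam * (y - t)) = lam⁻¹ • ∫ u, f u := by
  rw [integral_sub_left_eq_self (fun t => f (lam * t)) volume y, Measure.integral_comp_mul_left,
    abs_of_pos (inv_pos.mpr hlam)]

section Window

variable {g : ℝ → ℝ} {M m δ : ℝ}

lemma mul_fejer_sub_le_indicator {y lam : ℝ} (hM : ∀ t, |g t| ≤ M) (hlam : 0 < lam) (hδ : δ < y)
    (hw : ∀ t ∈ Icc (y - δ) (y + δ), m ≤ g t) (t : ℝ) :
    m * fejer (lam * (y - t)) -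
        (M + m) * {u : ℝ | lam * δ < |u|}.indicator fejer (lam * (y - t)) ≤
      (Ioi (0 : ℝ)).indicator (fun t => g t * fejer (lam * (y - t))) t := by
  have hf := fejer_nonneg (lam * (y - t))
  have hiff : lam * δ < |lam * (y - t)| ↔ δ < |y - t| := by
    rw [abs_mul, abs_of_pos hlam, mul_lt_mul_iff_right₀ hlam]
  simp only [indicator_apply, mem_ofPred_eq, mem_Ioi, hiff]
  have hgM := abs_le.mp (hM t)
  rcases lt_or_ge δ |y - t| with hout | hin
  · rw [if_pos hout]
    split_ifs <;> nlinarith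
  · obtain ⟨hlow, hup⟩ := abs_le.mp hin
    rw [if_neg hin.not_gt, if_pos (by linarith)]
    have := hw t ⟨by linarith, by linarith⟩
    nlinarith

lemma window_bound {y lam : ℝ} (hg : Measurable g) (hM : ∀ t, |g t| ≤ M) (hlam : 0 < lam)
    (hδ : δ < y) (hw : ∀ t ∈ Icc (y - δ) (y + δ), m ≤ g t) :
    m * (∫ u, fejer u) - (M + m) * (∫ u in {u : ℝ | lam * δ < |u|}, fejer u) ≤
      lam * ∫ t in Ioi (0 : ℝ), g t * fejer (lam * (y - t)) := by
  have hmain := (integrable_comp_mul_sub integrable_fejer hlam.ne' y).const_mul m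
  have htail := (integrable_comp_mul_sub
    (integrable_fejer.indicator (measurableSet_lt_abs (lam * δ))) hlam.ne' y).const_mul (M + m)
  have hle := integral_mono (hmain.sub htail)
    ((integrable_mul_fejer hg hM hlam.ne' y).indicator measurableSet_Ioi)
    (mul_fejer_sub_le_indicator hM hlam hδ hw)
  simp only [Pi.sub_apply] at hle
  rw [integral_sub hmain htail, integral_const_mul, integral_const_mul,
    integral_comp_mul_sub _ hlam, integral_comp_mul_sub _ hlam,
    integral_indicator (measurableSet_lt_abs _), integral_indicator measurableSet_Ioi,
    smul_eq_mul, smul_eq_mul] at hle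
  calc _ = lam * (m * (lam⁻¹ * ∫ u, fejer u) -
        (M + m) * (lam⁻¹ * ∫ u in {u : ℝ | lam * δ < |u|}, fejer u)) := by field_simp
    _ ≤ _ := mul_le_mul_of_nonneg_left hle hlam.le

lemma not_frequently_forall_window_le (hg : Measurable g) (hM : ∀ t, |g t| ≤ M) (hm : 0 < m)
    (hδ : 0 < δ)
    (hK : ∀ lam : ℝ, 0 < lam →
      Tendsto (fun y : ℝ => ∫ t in Ioi (0 : ℝ), g t * fejer (lam * (y - t))) atTop (𝓝 0)) :
    ¬ ∃ᶠ y in atTop, ∀ t ∈ Icc (y - δ) (y + δ), m ≤ g t := by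
  intro hw
  have hpos : 0 < m * (∫ u, fejer u) / 2 := half_pos (mul_pos hm integral_fejer_pos)
  have htail : Tendsto (fun lam : ℝ => (M + m) * ∫ u in {u : ℝ | lam * δ < |u|}, fejer u) atTop
      (𝓝 0) := by
    simpa using
      (tendsto_setIntegral_fejer_lt_abs.comp (tendsto_id.atTop_mul_const hδ)).const_mul (M + m)
  obtain ⟨lam, hlam_tail, hlam⟩ :=
    ((htail.eventually (gt_mem_nhds hpos)).and (eventually_gt_atTop 0)).exists
  have hmean : Tendsto (fun y : ℝ => lam * ∫ t in Ioi (0 : ℝ), g t * fejer (lam * (y - t))) atTop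
      (𝓝 0) := by simpa using (hK lam hlam).const_mul lam
  obtain ⟨y, hy_window, hy_mean, hy⟩ := (hw.and_eventually
    ((hmean.eventually (gt_mem_nhds hpos)).and (eventually_gt_atTop δ))).exists
  have := window_bound hg hM hlam hy hy_window
  linarith

end Window

section SlowDecrease

lemma exists_pos_forall_exp_mul_lt {a b : ℝ} (h : a < b) :
    ∃ δ > 0, ∀ x ∈ Icc 0 (2 * δ), Real.exp x * a < b := by
  have hc : ContinuousAt (fun x : ℝ => Real.exp x * a) 0 := by fun_prop
  obtain ⟨r, hr, hball⟩ := Metric.eventually_nhds_iff.mp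
    (hc.eventually (gt_mem_nhds (show Real.exp 0 * a < b by simpa using h)))
  refine ⟨r / 4, by positivity, fun x hx => hball ?_⟩
  rw [Real.dist_eq, sub_zero, abs_of_nonneg hx.1]
  linarith [hx.2]

variable {B : ℝ → ℝ} {c M : ℝ}

lemma le_exp_sub_mul (hmono : Monotone fun t => Real.exp t * B t) {s t : ℝ} (hst : s ≤ t) :
    B s ≤ Real.exp (t - s) * B t := by
  rw [Real.exp_sub, div_mul_eq_mul_div, le_div_iff₀ (Real.exp_pos s), mul_comm]
  exact hmono hst

lemma measurable_of_monotone_exp_mul (hmono : Monotone fun t => Real.exp t * B t) :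
    Measurable B := by
  have h : B = fun t => Real.exp (-t) * (Real.exp t * B t) := by
    ext t
    rw [← mul_assoc, ← Real.exp_add, neg_add_cancel, Real.exp_zero, one_mul]
  rw [h]
  exact Measurable.mul (by fun_prop) hmono.measurable

lemma eventually_lt_of_fejer_means (hmono : Monotone fun t => Real.exp t * B t)
    (hM : ∀ t, |B t - c| ≤ M)
    (hK : ∀ lam : ℝ, 0 < lam →
      Tendsto (fun y : ℝ => ∫ t in Ioi (0 : ℝ), (B t - c) * fejer (lam * (y - t))) atTop (𝓝 0))
    {a : ℝ} (ha : a < c) : ∀ᶠ t in atTop, a < B t := by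
  by_contra hcon
  have hfreq : ∃ᶠ t in atTop, B t ≤ a := by simpa [Filter.Frequently] using hcon
  obtain ⟨δ, hδ, hexp⟩ := exists_pos_forall_exp_mul_lt (show a < (a + c) / 2 by linarith)
  have hB := measurable_of_monotone_exp_mul hmono
  refine not_frequently_forall_window_le (g := fun t => -(B t - c)) (M := M) (by fun_prop)
    (by simpa only [abs_neg] using hM) (show 0 < (c - a) / 2 by linarith) hδ ?_ ?_
  · intro lam hlam
    simp only [neg_mul, integral_neg]
    simpa only [neg_zero] using (hK lam hlam).neg
  · refine (tendsto_atTop_add_const_right atTop (-δ) tendsto_id).frequently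
      (hfreq.mono fun u hu t ht => ?_)
    simp only [id] at ht
    have hle := le_exp_sub_mul hmono (show t ≤ u by linarith [ht.2])
    have hlt := hexp (u - t) ⟨by linarith [ht.2], by linarith [ht.1]⟩
    have := mul_le_mul_of_nonneg_left hu (Real.exp_pos (u - t)).le
    linarith

lemma eventually_gt_of_fejer_means (hmono : Monotone fun t => Real.exp t * B t)
    (hM : ∀ t, |B t - c| ≤ M)
    (hK : ∀ lam : ℝ, 0 < lam →
      Tendsto (fun y : ℝ => ∫ t in Ioi (0 : ℝ), (B t - c) * fejer (lam * (y - t))) atTop (𝓝 0))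
    {a : ℝ} (ha : c < a) : ∀ᶠ t in atTop, B t < a := by
  by_contra hcon
  have hfreq : ∃ᶠ t in atTop, a ≤ B t := by simpa [Filter.Frequently] using hcon
  obtain ⟨δ, hδ, hexp⟩ := exists_pos_forall_exp_mul_lt (show (a + c) / 2 < a by linarith)
  have hB := measurable_of_monotone_exp_mul hmono
  refine not_frequently_forall_window_le (g := fun t => B t - c) (by fun_prop) hM
    (show 0 < (a - c) / 2 by linarith) hδ hK ?_
  refine (tendsto_atTop_add_const_right atTop δ tendsto_id).frequently
    (hfreq.mono fun u hu t ht => ?_)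
  simp only [id] at ht
  have hle := le_exp_sub_mul hmono (show u ≤ t by linarith [ht.1])
  have hlt := hexp (t - u) ⟨by linarith [ht.1], by linarith [ht.2]⟩
  have := lt_of_mul_lt_mul_left (hlt.trans_le (hu.trans hle)) (Real.exp_pos (t - u)).le
  linarith

theorem tendsto_of_fejer_means (hmono : Monotone fun t => Real.exp t * B t)
    (hM : ∀ t, |B t - c| ≤ M)
    (hK : ∀ lam : ℝ, 0 < lam →
      Tendsto (fun y : ℝ => ∫ t in Ioi (0 : ℝ), (B t - c) * fejer (lam * (y - t))) atTop (𝓝 0)) :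
    Tendsto B atTop (𝓝 c) :=
  tendsto_order.mpr ⟨fun _ => eventually_lt_of_fejer_means hmono hM hK,
    fun _ => eventually_gt_of_fejer_means hmono hM hK⟩

end SlowDecrease

/-! ### The Wiener–Ikehara theorem -/

/-- `F` has finite limits from the open half plane `1 < re s` at every point of its closure. -/
def HasBoundaryLimits (F : ℂ → ℂ) : Prop :=
  ∀ s : ℂ, 1 ≤ s.re → ∃ l, Tendsto F (𝓝[{z | 1 < z.re}] s) (𝓝 l)

namespace HasBoundaryLimits

variable {F H : ℂ → ℂ}

lemma add (hF : HasBoundaryLimits F) (hH : HasBoundaryLimits H) :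
    HasBoundaryLimits fun s => F s + H s := fun s hs =>
  let ⟨l, hl⟩ := hF s hs
  let ⟨m, hm⟩ := hH s hs
  ⟨l + m, hl.add hm⟩

lemma const_mul (c : ℂ) (hF : HasBoundaryLimits F) :
    HasBoundaryLimits fun s => c * F s := fun s hs =>
  let ⟨l, hl⟩ := hF s hs
  ⟨c * l, hl.const_mul c⟩

lemma sub (hF : HasBoundaryLimits F) (hH : HasBoundaryLimits H) :
    HasBoundaryLimits fun s => F s - H s := fun s hs =>
  let ⟨l, hl⟩ := hF s hs
  let ⟨m, hm⟩ := hH s hs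
  ⟨l - m, hl.sub hm⟩

lemma sum {ι : Type*} (t : Finset ι) {F : ι → ℂ → ℂ} (hF : ∀ i ∈ t, HasBoundaryLimits (F i)) :
    HasBoundaryLimits fun s => ∑ i ∈ t, F i s := fun s hs => by
  choose! l hl using fun i hi => hF i hi s hs
  exact ⟨∑ i ∈ t, l i, tendsto_finsetSum t hl⟩

lemma congr (hF : HasBoundaryLimits F) (h : ∀ s : ℂ, 1 < s.re → F s = H s) :
    HasBoundaryLimits H := fun s hs =>
  let ⟨l, hl⟩ := hF s hs
  ⟨l, hl.congr' (eventually_of_mem self_mem_nhdsWithin fun z hz => h z hz)⟩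

lemma of_continuousOn (hF : ContinuousOn F {s | 1 ≤ s.re}) : HasBoundaryLimits F := fun s hs =>
  ⟨F s, (hF s hs).mono fun _ hz => (le_of_lt hz : (1 : ℝ) ≤ _)⟩

lemma exists_continuousOn_eq (hF : HasBoundaryLimits F) :
    ∃ G : ℂ → ℂ, ContinuousOn G {s | 1 ≤ s.re} ∧ ∀ s : ℂ, 1 < s.re → G s = F s := by
  refine ⟨extendFrom {z : ℂ | 1 < z.re} F,
    continuousOn_extendFrom (Complex.closure_setOfPred_lt_re 1).ge fun s hs => hF s hs,
    fun s hs => ?_⟩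
  obtain ⟨l, hl⟩ := hF s (le_of_lt hs)
  have hs' : s ∈ {z : ℂ | 1 < z.re} := hs
  rw [extendFrom_eq (subset_closure hs') hl]
  exact tendsto_nhds_unique (hl.mono_left (pure_le_nhdsWithin hs')) (tendsto_pure_nhds F s)

end HasBoundaryLimits

/-- The average `x⁻¹ ∑_{k ≤ x} a k` in the logarithmic variable `t = log x`. -/
noncomputable def expMean (a : ℕ → ℝ) (t : ℝ) : ℝ :=
  (∑ k ∈ Finset.Icc 1 ⌊Real.exp t⌋₊, a k) * Real.exp (-t)

section ExpMean

variable {a : ℕ → ℝ} {C : ℝ}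

lemma expMean_nonneg (ha : ∀ n, 0 ≤ a n) (t : ℝ) : 0 ≤ expMean a t :=
  mul_nonneg (Finset.sum_nonneg fun k _ => ha k) (Real.exp_pos _).le

lemma nonneg_of_sum_le (ha : ∀ n, 0 ≤ a n) (hC : ∀ N : ℕ, ∑ k ∈ Finset.Icc 1 N, a k ≤ C * N) :
    0 ≤ C := by
  simpa using (ha 1).trans (by simpa using hC 1)

lemma expMean_le (ha : ∀ n, 0 ≤ a n) (hC : ∀ N : ℕ, ∑ k ∈ Finset.Icc 1 N, a k ≤ C * N) (t : ℝ) :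
    expMean a t ≤ C := by
  rw [expMean, Real.exp_neg, ← div_eq_mul_inv, div_le_iff₀ (Real.exp_pos t)]
  exact (hC _).trans
    (mul_le_mul_of_nonneg_left (Nat.floor_le (Real.exp_pos t).le) (nonneg_of_sum_le ha hC))

lemma monotone_exp_mul_expMean (ha : ∀ n, 0 ≤ a n) :
    Monotone fun t => Real.exp t * expMean a t := by
  have h : (fun t => Real.exp t * expMean a t) =
      fun t => ∑ k ∈ Finset.Icc 1 ⌊Real.exp t⌋₊, a k := by
    ext t
    rw [expMean, mul_left_comm, ← Real.exp_add, add_neg_cancel, Real.exp_zero, mul_one]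
  rw [h]
  exact fun s t hst => Finset.sum_le_sum_of_subset_of_nonneg
    (Finset.Icc_subset_Icc le_rfl (Nat.floor_mono (Real.exp_monotone hst))) fun k _ _ => ha k

lemma expMean_log_natCast (a : ℕ → ℝ) {N : ℕ} (hN : 0 < N) :
    expMean a (Real.log N) = (∑ k ∈ Finset.Icc 1 N, a k) / N := by
  rw [expMean, Real.exp_neg, Real.exp_log (by exact_mod_cast hN), Nat.floor_natCast,
    div_eq_mul_inv]

lemma integral_Ioi_one_mul_cpow (A : ℝ → ℝ) (s : ℂ) :
    ∫ t in Ioi (1 : ℝ), (A t : ℂ) * (t : ℂ) ^ (-(s + 1)) =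
      ∫ u in Ioi (0 : ℝ), ((A (Real.exp u) * Real.exp (-u) : ℝ) : ℂ) *
        Complex.exp (-(s - 1) * u) := by
  have h := integral_comp_exp_Ioi (fun t : ℝ => (A t : ℂ) * (t : ℂ) ^ (-(s + 1))) 0
  rw [Real.exp_zero] at h
  rw [← h]
  refine setIntegral_congr_fun measurableSet_Ioi fun u _ => ?_
  simp only [Complex.real_smul]
  rw [Complex.ofReal_mul, Complex.ofReal_exp, Complex.ofReal_exp,
    Complex.cpow_def_of_ne_zero (Complex.exp_ne_zero _), ← Complex.ofReal_exp,
    ← Complex.ofReal_log (Real.exp_pos u).le, Real.log_exp, Complex.ofReal_exp,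
    mul_left_comm, ← Complex.exp_add, mul_assoc, ← Complex.exp_add]
  congr 2
  push_cast
  ring

lemma sum_isBigO_rpow_one (ha : ∀ n, 0 ≤ a n)
    (hC : ∀ N : ℕ, ∑ k ∈ Finset.Icc 1 N, a k ≤ C * N) :
    (fun n ↦ ∑ k ∈ Finset.Icc 1 n, a k) =O[atTop] fun n : ℕ ↦ (n : ℝ) ^ (1 : ℝ) := by
  refine Asymptotics.IsBigO.of_bound C (Eventually.of_forall fun N => ?_)
  rw [Real.norm_of_nonneg (Finset.sum_nonneg fun k _ => ha k), Real.rpow_one,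
    Real.norm_of_nonneg (Nat.cast_nonneg N)]
  exact hC N

lemma LSeries_eq_mul_integral_expMean (ha : ∀ n, 0 ≤ a n)
    (hC : ∀ N : ℕ, ∑ k ∈ Finset.Icc 1 N, a k ≤ C * N) {s : ℂ} (hs : 1 < s.re) :
    LSeries (fun n => (a n : ℂ)) s =
      s * ∫ t in Ioi (0 : ℝ), (expMean a t : ℂ) * Complex.exp (-(s - 1) * t) := by
  rw [LSeries_eq_mul_integral_of_nonneg a zero_le_one hs (sum_isBigO_rpow_one ha hC) ha]
  have h := integral_Ioi_one_mul_cpow (fun t => ∑ k ∈ Finset.Icc 1 ⌊t⌋₊, a k) s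
  simp only [Complex.ofReal_sum] at h
  rw [h]
  rfl

lemma integral_expMean_sub_mul_exp (ha : ∀ n, 0 ≤ a n)
    (hC : ∀ N : ℕ, ∑ k ∈ Finset.Icc 1 N, a k ≤ C * N) (c : ℝ) {s : ℂ} (hs : 0 < s.re) :
    ∫ t in Ioi (0 : ℝ), ((expMean a t - c : ℝ) : ℂ) * Complex.exp (-s * t) =
      (LSeries (fun n => (a n : ℂ)) (s + 1) - c / (s + 1 - 1)) / (s + 1) - c / (s + 1) := by
  have hs0 : s ≠ 0 := fun h => by simp [h] at hs
  have hs1 : s + 1 ≠ 0 := Complex.ne_zero_of_re_pos (by simpa using by linarith)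
  have hexp : IntegrableOn (fun t : ℝ => Complex.exp (-s * t)) (Ioi 0) :=
    integrableOn_exp_mul_complex_Ioi (by simpa using hs) 0
  have hmean : IntegrableOn (fun t : ℝ => (expMean a t : ℂ) * Complex.exp (-s * t)) (Ioi 0) := by
    refine hexp.bdd_mul (c := C) (Complex.measurable_ofReal.comp
      (measurable_of_monotone_exp_mul (monotone_exp_mul_expMean ha))).aestronglyMeasurable
      (Eventually.of_forall fun t => ?_)
    rw [Complex.norm_real, Real.norm_of_nonneg (expMean_nonneg ha t)]
    exact expMean_le ha hC t
  simp only [Complex.ofReal_sub, sub_mul]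
  rw [LSeries_eq_mul_integral_expMean ha hC (by simpa using hs),
    integral_sub hmean (hexp.const_mul _), integral_const_mul,
    integral_exp_mul_complex_Ioi (by simpa using hs)]
  simp only [add_sub_cancel_right, Complex.ofReal_zero, mul_zero, Complex.exp_zero]
  field_simp
  ring

theorem wiener_ikehara (ha : ∀ n, 0 ≤ a n) (hC : ∀ N : ℕ, ∑ k ∈ Finset.Icc 1 N, a k ≤ C * N)
    {c : ℝ} (h : HasBoundaryLimits fun s => LSeries (fun n => (a n : ℂ)) s - c / (s - 1)) :
    Tendsto (fun N : ℕ => (∑ k ∈ Finset.Icc 1 N, a k) / N) atTop (𝓝 c) := by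
  obtain ⟨G, hG, hGeq⟩ := h.exists_continuousOn_eq
  have hmono := monotone_exp_mul_expMean ha
  have hmeas : Measurable fun t => expMean a t - c :=
    (measurable_of_monotone_exp_mul hmono).sub_const c
  have hbound : ∀ t, |expMean a t - c| ≤ C + |c| := fun t => by
    refine (abs_sub _ _).trans ?_
    rw [abs_of_nonneg (expMean_nonneg ha t)]
    linarith [expMean_le ha hC t]
  have hcont : ContinuousOn (fun s : ℂ => G (s + 1) / (s + 1) - c / (s + 1)) {s | 0 ≤ s.re} := by
    have hne : ∀ s ∈ {s : ℂ | 0 ≤ s.re}, s + 1 ≠ 0 := fun s hs =>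
      Complex.ne_zero_of_re_pos (by simpa using by linarith [hs.out])
    have hshift : ContinuousOn (fun s : ℂ => G (s + 1)) {s | 0 ≤ s.re} :=
      hG.comp (by fun_prop) fun s hs => by simpa using hs
    exact (hshift.div (by fun_prop) hne).sub (continuousOn_const.div (by fun_prop) hne)
  have hlim : Tendsto (expMean a) atTop (𝓝 c) :=
    tendsto_of_fejer_means hmono hbound fun lam hlam =>
      tendsto_integral_mul_fejer hmeas hbound hcont (fun s hs => by
        rw [integral_expMean_sub_mul_exp ha hC c hs, hGeq _ (by simpa using hs)]) hlam
  refine (hlim.comp (Real.tendsto_log_atTop.comp tendsto_natCast_atTop_atTop)).congr' ?_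
  filter_upwards [eventually_gt_atTop 0] with N hN
  exact expMean_log_natCast a hN

end ExpMean

end WienerIkehara

/-! ### Prime counting from Dirichlet series over primes -/

section PrimeCounting

open Topology Set

lemma hasBoundaryLimits_LSeries {f : ℕ → ℂ} (hf : LSeriesSummable f 1) :
    HasBoundaryLimits (LSeries f) := by
  refine HasBoundaryLimits.of_continuousOn <|
    continuousOn_tsum (fun n => ?_) hf.norm fun n s hs =>
      LSeries.norm_term_le_of_re_le_re f (by simpa using hs) n
  rcases eq_or_ne n 0 with rfl | hn
  · simpa using continuousOn_const
  · simp only [LSeries.term_of_ne_zero hn]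
    have hn' : (n : ℂ) ≠ 0 := by exact_mod_cast hn
    exact (continuous_const.div (continuous_id.const_cpow (Or.inl hn'))
      fun s => by simp [Complex.cpow_eq_zero_iff, hn']).continuousOn

/-- The function equal to `log p` at the primes `p ∈ S` and `0` elsewhere. -/
noncomputable def primeLog (S : Set ℕ) (n : ℕ) : ℝ :=
  {p | p.Prime ∧ p ∈ S}.indicator (fun n => Real.log n) n

lemma primeLog_of_mem {S : Set ℕ} {p : ℕ} (hp : p.Prime) (h : p ∈ S) :
    primeLog S p = Real.log p := by
  simp [primeLog, hp, h]

lemma primeLog_of_notMem {S : Set ℕ} {p : ℕ} (h : p ∉ S) : primeLog S p = 0 := by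
  simp [primeLog, h]

lemma primeLog_of_not_prime {S : Set ℕ} {p : ℕ} (h : ¬ p.Prime) : primeLog S p = 0 := by
  simp [primeLog, h]

open Classical in
/-- The finset of primes `p ≤ x` with `p ∈ S`. -/
noncomputable def primesIn (S : Set ℕ) (x : ℕ) : Finset ℕ :=
  (Nat.primesLE x).filter (· ∈ S)

lemma primesIn_univ (x : ℕ) : primesIn univ x = Nat.primesLE x := by
  simp [primesIn]

lemma primesIn_subset_primesLE (S : Set ℕ) (x : ℕ) : primesIn S x ⊆ Nat.primesLE x := by
  simp [primesIn]

lemma log_le_log_of_mem_primesLE {p x : ℕ} (hp : p ∈ Nat.primesLE x) :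
    Real.log p ≤ Real.log x :=
  Real.log_le_log (by exact_mod_cast (Nat.prime_of_mem_primesLE hp).pos)
    (by exact_mod_cast Nat.le_of_mem_primesLE hp)

lemma primeLog_nonneg (S : Set ℕ) (n : ℕ) : 0 ≤ primeLog S n :=
  indicator_nonneg (fun n _ => Real.log_natCast_nonneg n) n

lemma sum_primeLog (S : Set ℕ) (N : ℕ) :
    ∑ k ∈ Finset.Icc 1 N, primeLog S k = ∑ p ∈ primesIn S N, Real.log p := by
  classical
  rw [primesIn, Nat.primesLE_eq_filter_Icc_one, Finset.filter_filter, Finset.sum_filter]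
  simp only [primeLog, indicator_apply, mem_ofPred_eq]

lemma sum_primeLog_univ (N : ℕ) :
    ∑ k ∈ Finset.Icc 1 N, primeLog univ k = Chebyshev.theta N := by
  rw [sum_primeLog, primesIn_univ, Chebyshev.theta_eq_sum_primesLE_log]

lemma sum_primeLog_le (S : Set ℕ) (N : ℕ) :
    ∑ k ∈ Finset.Icc 1 N, primeLog S k ≤ Real.log 4 * N := by
  refine le_trans ?_ (Chebyshev.theta_le_log4_mul_x (Nat.cast_nonneg N))
  rw [sum_primeLog, Chebyshev.theta_eq_sum_primesLE_log]
  exact Finset.sum_le_sum_of_subset_of_nonneg (primesIn_subset_primesLE S N)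
    fun p _ _ => Real.log_natCast_nonneg p

lemma LSeriesSummable_primeLog (S : Set ℕ) {s : ℂ} (hs : 1 < s.re) :
    LSeriesSummable (fun n => (primeLog S n : ℂ)) s :=
  LSeriesSummable_of_sum_norm_bigO_and_nonneg
    (sum_isBigO_rpow_one (primeLog_nonneg S) (sum_primeLog_le S)) (primeLog_nonneg S)
    zero_le_one hs

section ResidueClass

open ArithmeticFunction vonMangoldt

/-- The restriction to non-primes of the von Mangoldt function of a residue class. -/
noncomputable def nonprimeResidueClass {q : ℕ} (a : ZMod q) (n : ℕ) : ℝ :=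
  if n.Prime then 0 else residueClass a n

lemma residueClass_eq_primeLog_add {q : ℕ} (a : ZMod q) (n : ℕ) :
    residueClass a n = primeLog {n | (n : ZMod q) = a} n + nonprimeResidueClass a n := by
  by_cases hn : n.Prime
  · by_cases hna : (n : ZMod q) = a <;>
      simp [primeLog, nonprimeResidueClass, residueClass, hn, hna, vonMangoldt_apply_prime]
  · simp [primeLog, nonprimeResidueClass, hn]

lemma LSeriesSummable_nonprimeResidueClass {q : ℕ} (a : ZMod q) :
    LSeriesSummable (fun n => (nonprimeResidueClass a n : ℂ)) 1 := by
  have hsum := (summable_residueClass_non_primes_div a).hasSum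
  refine (Complex.hasSum_ofReal.mpr hsum).summable.congr fun n => ?_
  rcases eq_or_ne n 0 with rfl | hn
  · simp
  · simp [LSeries.term_of_ne_zero hn, nonprimeResidueClass]

lemma hasBoundaryLimits_primeLog_residue {q : ℕ} [NeZero q] {a : ZMod q} (ha : IsUnit a) :
    HasBoundaryLimits fun s => LSeries (fun n => (primeLog {n | (n : ZMod q) = a} n : ℂ)) s -
      (q.totient : ℂ)⁻¹ / (s - 1) := by
  have hnonprime := LSeriesSummable_nonprimeResidueClass a
  refine ((HasBoundaryLimits.of_continuousOn (continuousOn_LFunctionResidueClassAux a)).sub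
    (hasBoundaryLimits_LSeries hnonprime)).congr fun s hs => ?_
  have hsum : LSeries (fun n => (residueClass a n : ℂ)) s =
      LSeries (fun n => (primeLog {n | (n : ZMod q) = a} n : ℂ)) s +
        LSeries (fun n => (nonprimeResidueClass a n : ℂ)) s := by
    rw [← LSeries_add (LSeriesSummable_primeLog _ hs)
      (hnonprime.of_re_le_re (by simpa using hs.le))]
    exact LSeries_congr (fun _ => by simp [residueClass_eq_primeLog_add]) s
  rw [eqOn_LFunctionResidueClassAux ha hs]
  dsimp only
  rw [hsum]
  ring

lemma hasBoundaryLimits_primeLog_univ :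
    HasBoundaryLimits fun s => LSeries (fun n => (primeLog univ n : ℂ)) s - 1 / (s - 1) := by
  have huniv : {n : ℕ | (n : ZMod 1) = 1} = univ :=
    eq_univ_of_forall fun n => Subsingleton.elim (n : ZMod 1) 1
  simpa [huniv] using hasBoundaryLimits_primeLog_residue (q := 1) (a := 1) isUnit_one

end ResidueClass

lemma tendsto_primeCounting_mul_log_sub_theta_div :
    Tendsto (fun x : ℕ => (Nat.primeCounting x * Real.log x - Chebyshev.theta x) / x)
      atTop (𝓝 0) := by
  have hO := Chebyshev.primeCounting_sub_theta_div_log_isBigO.mul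
    (Asymptotics.isBigO_refl (fun x : ℝ => Real.log x / x) atTop)
  have hlim : Tendsto (fun x : ℝ => x / Real.log x ^ 2 * (Real.log x / x)) atTop (𝓝 0) := by
    refine (tendsto_inv_atTop_zero.comp Real.tendsto_log_atTop).congr' ?_
    filter_upwards [eventually_gt_atTop 1] with x hx
    have := Real.log_pos hx
    simp only [Function.comp]
    field_simp
  refine ((hO.trans_tendsto hlim).comp tendsto_natCast_atTop_atTop).congr' ?_
  filter_upwards [eventually_gt_atTop 1] with x hx
  have := Real.log_pos (Nat.one_lt_cast.mpr hx)
  simp only [Function.comp, Nat.floor_natCast]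
  field_simp

lemma card_primesIn_mul_log_sub (S : Set ℕ) (x : ℕ) :
    (primesIn S x).card * Real.log x - ∑ k ∈ Finset.Icc 1 x, primeLog S k =
      ∑ p ∈ primesIn S x, (Real.log x - Real.log p) := by
  rw [sum_primeLog, Finset.sum_sub_distrib, Finset.sum_const, nsmul_eq_mul]

lemma tendsto_card_primesIn_mul_log_sub_div (S : Set ℕ) :
    Tendsto (fun x : ℕ =>
      ((primesIn S x).card * Real.log x - ∑ k ∈ Finset.Icc 1 x, primeLog S k) / x)
      atTop (𝓝 0) := by
  refine squeeze_zero (fun x => ?_) (fun x => ?_) tendsto_primeCounting_mul_log_sub_theta_div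
  · rw [card_primesIn_mul_log_sub]
    exact div_nonneg (Finset.sum_nonneg fun p hp =>
      sub_nonneg.mpr (log_le_log_of_mem_primesLE (primesIn_subset_primesLE S x hp)))
      (Nat.cast_nonneg x)
  · rw [← Nat.primesLE_card_eq_primeCounting, ← primesIn_univ, ← sum_primeLog_univ,
      card_primesIn_mul_log_sub, card_primesIn_mul_log_sub, primesIn_univ]
    gcongr ?_ / _
    exact Finset.sum_le_sum_of_subset_of_nonneg (primesIn_subset_primesLE S x)
      fun p hp _ => sub_nonneg.mpr (log_le_log_of_mem_primesLE hp)

lemma tendsto_card_primesIn_mul_log_div {S : Set ℕ} {c : ℝ}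
    (h : HasBoundaryLimits fun s => LSeries (fun n => (primeLog S n : ℂ)) s - c / (s - 1)) :
    Tendsto (fun x : ℕ => (primesIn S x).card * Real.log x / x) atTop (𝓝 c) := by
  have hadd := (tendsto_card_primesIn_mul_log_sub_div S).add
    (wiener_ikehara (primeLog_nonneg S) (sum_primeLog_le S) h)
  rw [zero_add] at hadd
  exact hadd.congr fun x => by rw [← add_div, sub_add_cancel]

theorem tendsto_card_primesIn_div_primeCounting {S : Set ℕ} {c : ℝ}
    (h : HasBoundaryLimits fun s => LSeries (fun n => (primeLog S n : ℂ)) s - c / (s - 1)) :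
    Tendsto (fun x : ℕ => ((primesIn S x).card : ℝ) / Nat.primeCounting x) atTop (𝓝 c) := by
  have hdiv := (tendsto_card_primesIn_mul_log_div h).div
    (tendsto_card_primesIn_mul_log_div (c := 1)
      (by simpa using hasBoundaryLimits_primeLog_univ)) one_ne_zero
  rw [div_one] at hdiv
  refine hdiv.congr' ?_
  filter_upwards [eventually_gt_atTop 1] with x hx
  have := (Real.log_pos (Nat.one_lt_cast.mpr hx)).ne'
  rw [Pi.div_apply, primesIn_univ, Nat.primesLE_card_eq_primeCounting]
  field_simp

end PrimeCounting

/-! ### Eta powers modulo two -/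

section EtaCoeff

open Finset.HasAntidiagonal (antidiagonal mem_antidiagonal antidiagonal.fst_le antidiagonal.snd_le)

section Pentagonal

variable (R : Type*) [CommRing R]

lemma coeff_prod_range_add {m N : ℕ} (hm : m ≤ N) (j : ℕ) :
    (∏ k ∈ Finset.range (N + j), (1 - X ^ (k + 1) : R[X])).coeff m =
      (∏ k ∈ Finset.range N, (1 - X ^ (k + 1) : R[X])).coeff m := by
  induction j with
  | zero => rfl
  | succ j ih =>
    rw [← add_assoc, Finset.prod_range_succ, mul_sub, mul_one, coeff_sub, coeff_mul_X_pow',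
      if_neg (by lia), sub_zero, ih]

lemma coeff_prod_range_one_sub_X_pow {m N : ℕ} (hm : m ≤ N) :
    (∏ k ∈ Finset.range N, (1 - X ^ (k + 1) : R[X])).coeff m =
      (PowerSeries.pentagonalSeries R).coeff m := by
  obtain ⟨s, hs⟩ := eventually_atTop.mp
    (PowerSeries.coeff_prod_one_sub_X_pow_eventually_eq R m)
  obtain ⟨b, hb⟩ := s.exists_nat_subset_range
  rw [← hs (Finset.range (N + b)) (hb.trans (Finset.range_subset_range.mpr (by lia))),
    ← coeff_prod_range_add R hm b, ← Polynomial.coeff_coe,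
    ← Polynomial.coeToPowerSeries.ringHom_apply, map_prod]
  simp

end Pentagonal

lemma isCoprime_six_iff {u : ℤ} : IsCoprime u 6 ↔ Odd u ∧ ¬ 3 ∣ u := by
  rw [show (6 : ℤ) = 2 * 3 by rfl, IsCoprime.mul_right_iff, isCoprime_comm,
    Int.prime_two.coprime_iff_not_dvd, isCoprime_comm, Int.prime_three.coprime_iff_not_dvd,
    ← even_iff_two_dvd, Int.not_even_iff_odd]

lemma isCoprime_six_iff_exists {u : ℤ} :
    IsCoprime u 6 ↔ ∃ k : ℤ, u ^ 2 = (6 * k - 1) ^ 2 := by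
  rw [isCoprime_six_iff]
  constructor
  · rintro ⟨hodd, h3⟩
    rcases (by grind : u % 6 = 1 ∨ u % 6 = 5) with h | h
    · exact ⟨-(u / 6), by rw [← neg_sq u]; congr 1; lia⟩
    · exact ⟨u / 6 + 1, by congr 1; lia⟩
  · rintro ⟨k, hk⟩
    rcases sq_eq_sq_iff_eq_or_eq_neg.mp hk with rfl | rfl <;> grind

/-- `m` is an exponent of `∏ (1 - q ^ k) ^ (2 ^ e)` modulo two. By Euler's pentagonal number theorem
these are the numbers `2 ^ e * (u ^ 2 - 1) / 24` with `u` coprime to `6`; we avoid the division. -/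
def IsEtaExponent (e m : ℕ) : Prop :=
  ∃ u : ℤ, IsCoprime u 6 ∧ 24 * (m : ℤ) + 2 ^ e = 2 ^ e * u ^ 2

lemma isEtaExponent_iff {e m : ℕ} :
    IsEtaExponent e m ↔ ∃ A ∈ Set.range pentagonal, m = 2 ^ e * A := by
  simp only [IsEtaExponent, isCoprime_six_iff_exists, Set.exists_range_iff]
  constructor
  · rintro ⟨u, ⟨k, hk⟩, hm⟩
    refine ⟨k, ?_⟩
    zify
    rw [hk] at hm
    refine mul_left_cancel₀ (by norm_num : (24 : ℤ) ≠ 0) ?_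
    linear_combination hm - 12 * 2 ^ e * two_mul_natCast_pentagonal k
  · rintro ⟨k, rfl⟩
    refine ⟨6 * k - 1, ⟨k, rfl⟩, ?_⟩
    push_cast
    linear_combination 12 * 2 ^ e * two_mul_natCast_pentagonal k

lemma exists_natCast_eq_of_isCoprime_six {u : ℤ} (hu : IsCoprime u 6) (e : ℕ) :
    ∃ m : ℕ, 24 * (m : ℤ) + 2 ^ e = 2 ^ e * u ^ 2 := by
  obtain ⟨k, hk⟩ := isCoprime_six_iff_exists.mp hu
  refine ⟨2 ^ e * pentagonal k, ?_⟩
  push_cast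
  linear_combination 12 * 2 ^ e * two_mul_natCast_pentagonal k - 2 ^ e * hk

lemma expand_prime_pow (p : ℕ) [Fact p.Prime] (k : ℕ) (f : (ZMod p)[X]) :
    expand (ZMod p) (p ^ k) f = f ^ p ^ k := by
  induction k with
  | zero => simp
  | succ k ih => rw [pow_succ, expand_mul, ZMod.expand_card, map_pow, ih, ← pow_mul]

open Classical in
lemma coeff_prod_range_zmod_two {m N : ℕ} (hm : m ≤ N) :
    (∏ k ∈ Finset.range N, (1 - X ^ (k + 1) : (ZMod 2)[X])).coeff m =
      if m ∈ Set.range pentagonal then 1 else 0 := by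
  rw [coeff_prod_range_one_sub_X_pow _ hm]
  split_ifs with h
  · exact Fin.eq_one_of_ne_zero _ fun h0 =>
      (PowerSeries.coeff_pentagonalSeries_eq_zero_iff (ZMod 2)).mp h0 h
  · exact PowerSeries.coeff_pentagonalSeries_eq_zero _ h

open Classical in
lemma coeff_prod_pow_two_pow {e m N : ℕ} (hm : m ≤ N) :
    ((∏ k ∈ Finset.range N, (1 - X ^ (k + 1) : (ZMod 2)[X])) ^ 2 ^ e).coeff m =
      if IsEtaExponent e m then 1 else 0 := by
  have he : 0 < 2 ^ e := by positivity
  rw [← expand_prime_pow, coeff_expand he]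
  simp only [isEtaExponent_iff]
  by_cases hdvd : 2 ^ e ∣ m
  · obtain ⟨A, rfl⟩ := hdvd
    rw [if_pos (dvd_mul_right _ _), Nat.mul_div_cancel_left _ he,
      coeff_prod_range_zmod_two ((Nat.le_mul_of_pos_left A he).trans hm)]
    simp
  · rw [if_neg hdvd, if_neg]
    rintro ⟨A, -, rfl⟩
    exact hdvd (dvd_mul_right _ _)

open Classical in
lemma coeff_prod_pow_two_pow_add {i j d N : ℕ} (hd : d ≤ N) :
    ((∏ k ∈ Finset.range N, (1 - X ^ (k + 1) : (ZMod 2)[X])) ^ (2 ^ i + 2 ^ j)).coeff d =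
      (((antidiagonal d).filter
        fun p => IsEtaExponent i p.1 ∧ IsEtaExponent j p.2).card : ZMod 2) := by
  rw [pow_add, coeff_mul, Finset.card_filter, Nat.cast_sum]
  refine Finset.sum_congr rfl fun p hp => ?_
  rw [coeff_prod_pow_two_pow ((antidiagonal.fst_le hp).trans hd),
    coeff_prod_pow_two_pow ((antidiagonal.snd_le hp).trans hd), ite_mul, one_mul, zero_mul,
    ← ite_and, Nat.cast_ite, Nat.cast_one, Nat.cast_zero]

lemma natCast_card_eq_one_iff {α : Type*} {s : Finset α} (hs : s.card ≤ 1) :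
    (s.card : ZMod 2) = 1 ↔ s.Nonempty := by
  rw [← Finset.card_pos]
  interval_cases s.card <;> simp

lemma etaCoeff_twentyFour_mul (z N : ℕ) :
    etaCoeff (24 * z) N =
      (X ^ z * (∏ k ∈ Finset.range N, (1 - X ^ (k + 1) : (ZMod 2)[X])) ^ (24 * z)).coeff N := by
  rw [etaCoeff, Nat.gcd_eq_left (dvd_mul_right 24 z), Nat.mul_div_cancel_left z (by norm_num),
    Finset.prod_pow, Finset.range_eq_Ico,
    Finset.prod_Ico_add' (fun k => (1 - X ^ k : (ZMod 2)[X])) 0 N 1]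
  simp [Finset.Ico_add_one_right_eq_Icc]

lemma nuR_twentyFour_mul {z ℓ : ℕ} (hz : 0 < z) (hℓ : z ≤ ℓ) : nuR (24 * z) ℓ = ℓ := by
  rw [nuR, Nat.gcd_eq_left (dvd_mul_right 24 z), Nat.mul_div_cancel_left z (by norm_num)]
  have hmem : ℓ ∈ {N : ℕ | ℓ ∣ N ∧ z ≤ N ∧ N % (24 / 24) = z % (24 / 24)} :=
    ⟨dvd_rfl, hℓ, by simp [Nat.mod_one]⟩
  exact le_antisymm (Nat.sInf_le hmem)
    (le_csInf ⟨ℓ, hmem⟩ fun N hN => Nat.le_of_dvd (hz.trans_le hN.2.1) hN.1)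

end EtaCoeff

section QuadraticForms

variable {D u w u' w' m : ℤ}

lemma mul_eq_mul_of_two_mul_dvd (hm : 0 < m) (hD : 3 ≤ D)
    (h : u ^ 2 + D * w ^ 2 = 3 * m) (h' : u' ^ 2 + D * w' ^ 2 = 3 * m)
    (hdvd : 2 * m ∣ u * w' - u' * w) : u * w' = u' * w := by
  have brahmagupta :
      (3 * m) ^ 2 = (u * u' + D * w * w') ^ 2 + D * (u * w' - u' * w) ^ 2 := by
    linear_combination -(3 * m) * h' - (u' ^ 2 + D * w' ^ 2) * h
  have hlt : |u * w' - u' * w| < 2 * m := by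
    refine abs_lt_of_sq_lt_sq ?_ (by positivity)
    nlinarith [sq_nonneg (u * u' + D * w * w'), sq_nonneg (u * w' - u' * w), pow_pos hm 2]
  exact sub_eq_zero.mp (Int.eq_zero_of_abs_lt_dvd hdvd hlt)

lemma sq_eq_of_mul_eq_mul (hm : m ≠ 0)
    (h : u ^ 2 + D * w ^ 2 = m) (h' : u' ^ 2 + D * w' ^ 2 = m)
    (heq : u * w' = u' * w) : w ^ 2 = w' ^ 2 := by
  refine mul_left_cancel₀ hm ?_
  linear_combination -(u * w' + u' * w) * heq - w ^ 2 * h' + w' ^ 2 * h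

lemma sq_eq_of_sq_add_mul_sq_eq {ℓ : ℕ} (hℓ : ℓ.Prime) (hℓ2 : ℓ ≠ 2) (hD : 3 ≤ D)
    (hu : Odd u) (hw : Odd w) (hu' : Odd u') (hw' : Odd w')
    (h : u ^ 2 + D * w ^ 2 = 3 * ℓ) (h' : u' ^ 2 + D * w' ^ 2 = 3 * ℓ) : w ^ 2 = w' ^ 2 := by
  have hℓ0 : (0 : ℤ) < ℓ := by exact_mod_cast hℓ.pos
  have hcop : IsCoprime (2 : ℤ) ℓ :=
    Nat.isCoprime_iff_coprime.mpr ((Nat.coprime_primes Nat.prime_two hℓ).mpr hℓ2.symm)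
  wlog hdvd : (ℓ : ℤ) ∣ u * w' - u' * w generalizing w'
  · have hprod : (ℓ : ℤ) ∣ (u * w' - u' * w) * (u * -w' - u' * w) :=
      ⟨3 * (w ^ 2 - w' ^ 2), by linear_combination w ^ 2 * h' - w' ^ 2 * h⟩
    rw [← neg_sq w']
    exact this hw'.neg (by rwa [neg_sq])
      (((Nat.prime_iff_prime_int.mp hℓ).dvd_or_dvd hprod).resolve_left hdvd)
  have heven : Even (u * w' - u' * w) := (hu.mul hw').sub_odd (hu'.mul hw)
  exact sq_eq_of_mul_eq_mul (by positivity) h h'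
    (mul_eq_mul_of_two_mul_dvd hℓ0 hD h h' (hcop.mul_dvd heven.two_dvd hdvd))

lemma odd_left_of_odd_sq_add_two_mul {a b : ℤ} (h : Odd (a ^ 2 + 2 * b)) : Odd a := by
  rw [Int.odd_add] at h
  exact (Int.odd_pow' two_ne_zero).mp (h.mpr (even_two_mul b))

lemma isCoprime_six_of_sq_add_mul_sq_eq {z : ℤ} (hm : ¬ 3 ∣ m) (hu : Odd u) (hw : Odd w)
    (h : u ^ 2 + (3 * z - 1) * w ^ 2 = 3 * m) : IsCoprime u 6 ∧ IsCoprime w 6 := by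
  have h3 : (3 : ℤ) ∣ u ↔ 3 ∣ w := by
    rw [← Int.prime_three.dvd_pow_iff_dvd two_ne_zero, ← Int.prime_three.dvd_pow_iff_dvd
      (a := w) two_ne_zero]
    exact dvd_iff_dvd_of_dvd_sub ⟨m - z * w ^ 2, by linear_combination h⟩
  have hw3 : ¬ (3 : ℤ) ∣ w := by
    intro hw3
    obtain ⟨b, rfl⟩ := hw3
    obtain ⟨a, rfl⟩ := h3.mpr (dvd_mul_right 3 b)
    exact hm ⟨a ^ 2 + (3 * z - 1) * b ^ 2, by linarith⟩
  exact ⟨isCoprime_six_iff.mpr ⟨hu, h3.not.mpr hw3⟩, isCoprime_six_iff.mpr ⟨hw, hw3⟩⟩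

end QuadraticForms

section DihedralSet

variable {n : ℕ}

/-- The numbers `ℓ = x ^ 2 + 2 * y ^ 2` with `y / x` in a prescribed residue class modulo
`2 ^ (n + 1)`. For primes `ℓ` this is a splitting condition in a ring class field of `ℚ(√-2)`. -/
def dihedralSet (n : ℕ) : Set ℕ :=
  {ℓ | ∃ x y : ℤ, x ^ 2 + 2 * y ^ 2 = ℓ ∧ (y : ZMod (2 ^ (n + 1))) = x * (1 + 2 ^ n)}

lemma intCast_eq_mul_one_add_two_pow_iff {x y : ℤ} (hx : Odd x) :
    (y : ZMod (2 ^ (n + 1))) = x * (1 + 2 ^ n) ↔ ∃ w, Odd w ∧ x - y = 2 ^ n * w := by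
  have hcast : (y : ZMod (2 ^ (n + 1))) = x * (1 + 2 ^ n) ↔
      (2 ^ (n + 1) : ℤ) ∣ x * (1 + 2 ^ n) - y := by
    have := ZMod.intCast_eq_intCast_iff_dvd_sub y (x * (1 + 2 ^ n)) (2 ^ (n + 1))
    push_cast at this
    exact this
  rw [hcast]
  constructor
  · rintro ⟨k, hk⟩
    exact ⟨2 * k - x, (even_two_mul k).sub_odd hx, by linear_combination hk⟩
  · rintro ⟨w, hw, h⟩
    obtain ⟨k, hk⟩ := hw.add_odd hx
    exact ⟨k, by linear_combination h + 2 ^ n * hk⟩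

-- The two representations are related by `3 (x² + 2 y²) = (x + 2 y)² + 2 (x - y)²`.
lemma mem_dihedralSet_iff {ℓ : ℕ} (hodd : Odd ℓ) :
    ℓ ∈ dihedralSet n ↔ ∃ u w : ℤ, Odd w ∧ u ^ 2 + 2 * 4 ^ n * w ^ 2 = 3 * ℓ := by
  have h4 : (4 : ℤ) ^ n = (2 ^ n) ^ 2 := by rw [← pow_mul, mul_comm, pow_mul]; norm_num
  have hx {x y : ℤ} (h : x ^ 2 + 2 * y ^ 2 = ℓ) : Odd x :=
    odd_left_of_odd_sq_add_two_mul (b := y ^ 2) (by rw [h]; exact_mod_cast hodd)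
  constructor
  · rintro ⟨x, y, h, hxy⟩
    obtain ⟨w, hw, hw'⟩ := (intCast_eq_mul_one_add_two_pow_iff (hx h)).mp hxy
    refine ⟨x + 2 * y, w, hw, ?_⟩
    linear_combination 3 * h + 2 * w ^ 2 * h4 - 2 * (2 ^ n * w + (x - y)) * hw'
  · rintro ⟨u, w, hw, h⟩
    wlog hdvd : (3 : ℤ) ∣ u - 2 ^ n * w generalizing u
    · refine this (-u) (by rwa [neg_sq]) ((Int.prime_three.dvd_or_dvd ?_).resolve_left hdvd)
      exact ⟨4 ^ n * w ^ 2 - ℓ, by linear_combination -h - w ^ 2 * h4⟩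
    obtain ⟨y, hy⟩ := hdvd
    have hℓ : (2 ^ n * w + y) ^ 2 + 2 * y ^ 2 = ℓ := by
      rw [h4, show u = 2 ^ n * w + 3 * y by lia] at h
      linarith
    exact ⟨2 ^ n * w + y, y, hℓ,
      (intCast_eq_mul_one_add_two_pow_iff (hx hℓ)).mpr ⟨w, hw, by ring⟩⟩

end DihedralSet

section Density

open Topology

open Finset.HasAntidiagonal (antidiagonal mem_antidiagonal)

variable {n z ℓ : ℕ}

lemma sq_add_mul_sq_eq_iff {i j : ℕ} {u w : ℤ} (hz : 3 * z = 2 * 4 ^ n + 1) (hzℓ : z ≤ ℓ)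
    (hi : 24 * (i : ℤ) + 2 ^ 3 = 2 ^ 3 * u ^ 2)
    (hj : 24 * (j : ℤ) + 2 ^ (2 * n + 4) = 2 ^ (2 * n + 4) * w ^ 2) :
    i + j = ℓ - z ↔ u ^ 2 + 2 * 4 ^ n * w ^ 2 = 3 * ℓ := by
  rw [pow_add, pow_mul] at hj
  norm_num at hj
  zify [hzℓ] at hz ⊢
  constructor <;> intro h
  · linarith
  · linarith

lemma eq_of_isEtaExponent (hn : 1 ≤ n) (hz : 3 * z = 2 * 4 ^ n + 1) (hzℓ : z ≤ ℓ)
    (hℓ : ℓ.Prime) (hℓ2 : ℓ ≠ 2) {p q : ℕ × ℕ}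
    (hp : p ∈ antidiagonal (ℓ - z)) (hq : q ∈ antidiagonal (ℓ - z))
    (hp' : IsEtaExponent 3 p.1 ∧ IsEtaExponent (2 * n + 4) p.2)
    (hq' : IsEtaExponent 3 q.1 ∧ IsEtaExponent (2 * n + 4) q.2) : p = q := by
  obtain ⟨⟨u, hu, hpu⟩, w, hw, hpw⟩ := hp'
  obtain ⟨⟨u', hu', hqu⟩, w', hw', hqw⟩ := hq'
  rw [mem_antidiagonal] at hp hq
  have hD : (3 : ℤ) ≤ 2 * 4 ^ n := by
    linarith [pow_le_pow_right₀ (by norm_num : (1 : ℤ) ≤ 4) hn]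
  have hsq : w ^ 2 = w' ^ 2 := sq_eq_of_sq_add_mul_sq_eq hℓ hℓ2 hD
    (isCoprime_six_iff.mp hu).1 (isCoprime_six_iff.mp hw).1
    (isCoprime_six_iff.mp hu').1 (isCoprime_six_iff.mp hw').1
    ((sq_add_mul_sq_eq_iff hz hzℓ hpu hpw).mp hp) ((sq_add_mul_sq_eq_iff hz hzℓ hqu hqw).mp hq)
  rw [hsq] at hpw
  exact Prod.ext (by lia) (by lia)

lemma exists_isEtaExponent_iff (hz : 3 * z = 2 * 4 ^ n + 1) (hzℓ : z ≤ ℓ)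
    (hodd : Odd ℓ) (h3 : ¬ 3 ∣ ℓ) :
    (∃ p ∈ antidiagonal (ℓ - z), IsEtaExponent 3 p.1 ∧ IsEtaExponent (2 * n + 4) p.2) ↔
      ∃ u w : ℤ, Odd w ∧ u ^ 2 + 2 * 4 ^ n * w ^ 2 = 3 * ℓ := by
  constructor
  · rintro ⟨p, hp, ⟨u, _, hpu⟩, w, hw, hpw⟩
    exact ⟨u, w, (isCoprime_six_iff.mp hw).1,
      (sq_add_mul_sq_eq_iff hz hzℓ hpu hpw).mp (mem_antidiagonal.mp hp)⟩
  · rintro ⟨u, w, hw, h⟩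
    have hu : Odd u := by
      refine odd_left_of_odd_sq_add_two_mul (b := 4 ^ n * w ^ 2) ?_
      rw [← mul_assoc, h]
      exact_mod_cast (by decide : Odd 3).mul hodd
    have hzZ : (3 * z - 1 : ℤ) = 2 * 4 ^ n := by zify at hz; linarith
    obtain ⟨hu6, hw6⟩ := isCoprime_six_of_sq_add_mul_sq_eq (z := z) (m := ℓ)
      (by exact_mod_cast h3) hu hw (by rw [hzZ, h])
    obtain ⟨i, hi⟩ := exists_natCast_eq_of_isCoprime_six hu6 3
    obtain ⟨j, hj⟩ := exists_natCast_eq_of_isCoprime_six hw6 (2 * n + 4)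
    exact ⟨(i, j), mem_antidiagonal.mpr ((sq_add_mul_sq_eq_iff hz hzℓ hi hj).mpr h),
      ⟨u, hu6, hi⟩, w, hw6, hj⟩

theorem etaCoeff_nuR_eq_one_iff (hn : 1 ≤ n) (hz : 3 * z = 2 * 4 ^ n + 1) (hzℓ : z ≤ ℓ)
    (hℓ : ℓ.Prime) (hℓ5 : 5 ≤ ℓ) :
    etaCoeff (24 * z) (nuR (24 * z) ℓ) = 1 ↔ ℓ ∈ dihedralSet n := by
  classical
  have hodd : Odd ℓ := hℓ.odd_of_ne_two (by lia)
  have h3 : ¬ 3 ∣ ℓ := fun h => by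
    have := (Nat.prime_dvd_prime_iff_eq Nat.prime_three hℓ).mp h
    lia
  have hsum : 24 * z = 2 ^ 3 + 2 ^ (2 * n + 4) := by rw [pow_add, pow_mul]; lia
  rw [nuR_twentyFour_mul (by lia) hzℓ, etaCoeff_twentyFour_mul, coeff_X_pow_mul', if_pos hzℓ,
    hsum, coeff_prod_pow_two_pow_add (Nat.sub_le ℓ z), mem_dihedralSet_iff hodd,
    ← exists_isEtaExponent_iff hz hzℓ hodd h3, natCast_card_eq_one_iff, Finset.filter_nonempty_iff]
  refine Finset.card_le_one.mpr fun p hp q hq => ?_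
  rw [Finset.mem_filter] at hp hq
  exact eq_of_isEtaExponent hn hz hzℓ hℓ (by lia) hp.1 hq.1 hp.2 hq.2

lemma primePi_eq_primeCounting (x : ℕ) : primePi x = Nat.primeCounting x :=
  Nat.primesLE_card_eq_primeCounting x

lemma tendsto_div_primeCounting_of_le_add {a b : ℕ → ℕ} {K : ℕ} {c : ℝ}
    (hab : ∀ x, a x ≤ b x + K) (hba : ∀ x, b x ≤ a x + K)
    (hb : Tendsto (fun x : ℕ => (b x : ℝ) / Nat.primeCounting x) atTop (𝓝 c)) :
    Tendsto (fun x : ℕ => (a x : ℝ) / Nat.primeCounting x) atTop (𝓝 c) := by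
  have hK : Tendsto (fun x : ℕ => (K : ℝ) / Nat.primeCounting x) atTop (𝓝 0) :=
    tendsto_const_nhds.div_atTop (tendsto_natCast_atTop_atTop.comp Nat.tendsto_primeCounting)
  have hdiff : Tendsto (fun x : ℕ => (a x : ℝ) / Nat.primeCounting x -
      (b x : ℝ) / Nat.primeCounting x) atTop (𝓝 0) := by
    refine squeeze_zero_norm (fun x => ?_) hK
    rw [← sub_div, norm_div, Real.norm_natCast]
    gcongr
    rw [Real.norm_eq_abs, abs_le, neg_le_sub_iff_le_add, sub_le_iff_le_add']
    exact ⟨by exact_mod_cast hba x, by exact_mod_cast hab x⟩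
  simpa using hdiff.add hb

lemma card_le_card_add_of_forall_ge {s t : Finset ℕ} {K : ℕ} (h : ∀ k ∈ s, K ≤ k → k ∈ t) :
    s.card ≤ t.card + K := by
  have hsub : s ⊆ t ∪ Finset.range K := fun k hk => by
    rw [Finset.mem_union, Finset.mem_range]
    exact (le_or_gt K k).imp_left (h k hk)
  exact (Finset.card_le_card hsub).trans
    ((Finset.card_union_le _ _).trans_eq (by rw [Finset.card_range]))

lemma tendsto_etaDensityCount_div (hn : 1 ≤ n) (hz : 3 * z = 2 * 4 ^ n + 1) {c : ℝ}
    (h : Tendsto (fun x : ℕ => ((primesIn (dihedralSet n) x).card : ℝ) / Nat.primeCounting x)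
      atTop (𝓝 c)) :
    Tendsto (fun x : ℕ => (etaDensityCount (24 * z) x : ℝ) / primePi x) atTop (𝓝 c) := by
  simp only [primePi_eq_primeCounting]
  refine tendsto_div_primeCounting_of_le_add (K := z + 5) (fun x => ?_) (fun x => ?_) h
  all_goals
    refine card_le_card_add_of_forall_ge fun ℓ hℓ hK => ?_
    simp only [primesIn, Finset.mem_filter, Finset.mem_range, Nat.mem_primesLE] at hℓ ⊢
  · obtain ⟨hx, hprime, h5, hcoeff⟩ := hℓ
    exact ⟨⟨by lia, hprime⟩,
      (etaCoeff_nuR_eq_one_iff hn hz (by lia) hprime h5).mp hcoeff⟩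
  · obtain ⟨⟨hx, hprime⟩, hmem⟩ := hℓ
    exact ⟨by lia, hprime, by lia,
      (etaCoeff_nuR_eq_one_iff hn hz (by lia) hprime (by lia)).mpr hmem⟩

end Density

/-! ### The ring `ℤ[√-2]` -/

/-- The ring of integers `ℤ[√-2]` of `ℚ(√-2)`. -/
abbrev ZSqrtNegTwo := ℤ√(-2)

namespace ZSqrtNegTwo

/-- The absolute norm `a ^ 2 + 2 * b ^ 2` of `a + b√-2`, as a natural number. -/
def natNorm (α : ZSqrtNegTwo) : ℕ := α.norm.natAbs

lemma natCast_natNorm_eq_norm (α : ZSqrtNegTwo) : (natNorm α : ℤ) = α.norm :=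
  Int.natAbs_of_nonneg (Zsqrtd.norm_nonneg (by norm_num) α)

lemma natCast_natNorm (α : ZSqrtNegTwo) : (natNorm α : ℤ) = α.re ^ 2 + 2 * α.im ^ 2 := by
  rw [natCast_natNorm_eq_norm, Zsqrtd.norm_def]
  ring

lemma realCast_natNorm (α : ZSqrtNegTwo) :
    (natNorm α : ℝ) = (α.re : ℝ) ^ 2 + 2 * (α.im : ℝ) ^ 2 := by
  exact_mod_cast congrArg (Int.cast : ℤ → ℝ) (natCast_natNorm α)

lemma mul_star_eq_natNorm (α : ZSqrtNegTwo) : α * star α = (natNorm α : ZSqrtNegTwo) := by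
  rw [← Zsqrtd.norm_eq_mul_conj, ← natCast_natNorm_eq_norm, Int.cast_natCast]

lemma natNorm_mul (α β : ZSqrtNegTwo) : natNorm (α * β) = natNorm α * natNorm β := by
  rw [natNorm, Zsqrtd.norm_mul, Int.natAbs_mul, natNorm, natNorm]

@[simp] lemma natNorm_neg (α : ZSqrtNegTwo) : natNorm (-α) = natNorm α := by
  rw [natNorm, Zsqrtd.norm_neg, natNorm]

@[simp] lemma natNorm_star (α : ZSqrtNegTwo) : natNorm (star α) = natNorm α := by
  rw [natNorm, Zsqrtd.norm_conj, natNorm]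

@[simp] lemma natNorm_one : natNorm 1 = 1 := by simp [natNorm]

@[simp] lemma natNorm_zero : natNorm 0 = 0 := by simp [natNorm]

lemma natNorm_natCast (n : ℕ) : natNorm (n : ZSqrtNegTwo) = n ^ 2 := by
  rw [natNorm, Zsqrtd.norm_natCast, ← Nat.cast_mul, Int.natAbs_natCast, sq]

lemma natNorm_eq_zero_iff {α : ZSqrtNegTwo} : natNorm α = 0 ↔ α = 0 := by
  rw [natNorm, Int.natAbs_eq_zero, Zsqrtd.norm_eq_zero_iff (by norm_num)]

lemma natNorm_pos {α : ZSqrtNegTwo} (h : α ≠ 0) : 0 < natNorm α :=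
  Nat.pos_of_ne_zero (natNorm_eq_zero_iff.not.mpr h)

lemma isUnit_iff {α : ZSqrtNegTwo} : IsUnit α ↔ natNorm α = 1 := Zsqrtd.norm_eq_one_iff.symm

lemma natNorm_eq_one_iff {α : ZSqrtNegTwo} : natNorm α = 1 ↔ α = 1 ∨ α = -1 := by
  refine ⟨fun h => ?_, by rintro (rfl | rfl) <;> simp⟩
  have hnorm : 1 = α.re ^ 2 + 2 * α.im ^ 2 := by rw [← natCast_natNorm, h, Nat.cast_one]
  have him : α.im = 0 := by
    by_contra him
    nlinarith [sq_pos_of_ne_zero him, sq_nonneg α.re]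
  have hre : α.re = 1 ∨ α.re = -1 := sq_eq_one_iff.mp (by rw [hnorm, him]; ring)
  exact hre.imp (fun hre => by ext <;> simp [hre, him]) (fun hre => by ext <;> simp [hre, him])

lemma exists_four_mul_sub_mul_sq_le (a : ℤ) {b : ℤ} (hb : 0 < b) :
    ∃ q : ℤ, 4 * (a - b * q) ^ 2 ≤ b ^ 2 := by
  refine ⟨(2 * a + b) / (2 * b), ?_⟩
  have hdiv := Int.mul_ediv_add_emod (2 * a + b) (2 * b)
  have hnonneg := Int.emod_nonneg (2 * a + b) (b := 2 * b) (by lia)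
  have hlt := Int.emod_lt_of_pos (2 * a + b) (b := 2 * b) (by lia)
  have hrem : 2 * (a - b * ((2 * a + b) / (2 * b))) = (2 * a + b) % (2 * b) - b := by linarith
  calc 4 * (a - b * ((2 * a + b) / (2 * b))) ^ 2 = ((2 * a + b) % (2 * b) - b) ^ 2 := by
        rw [← hrem]; ring
    _ ≤ b ^ 2 := sq_le_sq' (by linarith) (by linarith)

lemma exists_natNorm_sub_mul_lt (x : ZSqrtNegTwo) {y : ZSqrtNegTwo} (hy : y ≠ 0) :
    ∃ q, natNorm (x - y * q) < natNorm y := by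
  have hN : (0 : ℤ) < natNorm y := by exact_mod_cast natNorm_pos hy
  obtain ⟨a, ha⟩ := exists_four_mul_sub_mul_sq_le (x * star y).re hN
  obtain ⟨b, hb⟩ := exists_four_mul_sub_mul_sq_le (x * star y).im hN
  refine ⟨⟨a, b⟩, ?_⟩
  have hmul : (x - y * ⟨a, b⟩) * star y = x * star y - (natNorm y : ZSqrtNegTwo) * ⟨a, b⟩ := by
    rw [← mul_star_eq_natNorm]; ring
  have hnorm : (natNorm (x - y * ⟨a, b⟩) : ℤ) * natNorm y =
      ((x * star y).re - natNorm y * a) ^ 2 + 2 * ((x * star y).im - natNorm y * b) ^ 2 := by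
    rw [← Nat.cast_mul, ← natNorm_star y, ← natNorm_mul, hmul, natCast_natNorm, natNorm_star]
    simp
  zify
  nlinarith

instance : Nontrivial ZSqrtNegTwo := ⟨⟨0, 1, by decide⟩⟩

instance : NoZeroDivisors ZSqrtNegTwo where
  eq_zero_or_eq_zero_of_mul_eq_zero {a b} h := by
    rw [← natNorm_eq_zero_iff, natNorm_mul, mul_eq_zero] at h
    exact h.imp natNorm_eq_zero_iff.mp natNorm_eq_zero_iff.mp

instance : IsDomain ZSqrtNegTwo := NoZeroDivisors.to_isDomain _

instance : IsPrincipalIdealRing ZSqrtNegTwo := by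
  have hquot (x y : ZSqrtNegTwo) :
      ∃ q, (y = 0 → q = 0) ∧ (y ≠ 0 → natNorm (x - y * q) < natNorm y) := by
    by_cases hy : y = 0
    · exact ⟨0, fun _ => rfl, fun h => absurd hy h⟩
    · obtain ⟨q, hq⟩ := exists_natNorm_sub_mul_lt x hy
      exact ⟨q, fun h => absurd h hy, fun _ => hq⟩
  choose quot quot_zero natNorm_lt using hquot
  let _ : EuclideanDomain ZSqrtNegTwo :=
    { (inferInstance : CommRing ZSqrtNegTwo), (inferInstance : Nontrivial ZSqrtNegTwo) with
      quotient := quot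
      remainder := fun x y => x - y * quot x y
      quotient_zero := fun x => quot_zero x 0 rfl
      quotient_mul_add_remainder_eq := fun x y => add_sub_cancel (y * quot x y) x
      r := fun x y => natNorm x < natNorm y
      r_wellFounded := (measure natNorm).wf
      remainder_lt := fun x y hy => natNorm_lt x y hy
      mul_left_not_lt := fun x y hy => by
        rw [natNorm_mul, not_lt]
        exact Nat.le_mul_of_pos_right _ (natNorm_pos hy) }
  exact EuclideanDomain.to_principal_ideal_domain

lemma two_le_natNorm_of_prime {π : ZSqrtNegTwo} (h : Prime π) : 2 ≤ natNorm π := by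
  have hpos := natNorm_pos h.ne_zero
  have hne : natNorm π ≠ 1 := isUnit_iff.not.mp h.not_isUnit
  lia

lemma prime_of_natNorm_prime {π : ZSqrtNegTwo} (h : (natNorm π).Prime) : Prime π := by
  rw [← irreducible_iff_prime]
  refine ⟨fun hu => h.one_lt.ne' (isUnit_iff.mp hu), fun a b hab => ?_⟩
  rw [hab, natNorm_mul] at h
  rcases Nat.prime_mul_iff.mp h with ⟨-, hb⟩ | ⟨-, ha⟩
  · exact Or.inr (isUnit_iff.mpr hb)
  · exact Or.inl (isUnit_iff.mpr ha)

lemma associated_iff {α β : ZSqrtNegTwo} : Associated α β ↔ β = α ∨ β = -α := by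
  constructor
  · rintro ⟨u, rfl⟩
    exact (natNorm_eq_one_iff.mp (isUnit_iff.mp u.isUnit)).imp (fun h => by simp [h])
      (fun h => by simp [h])
  · rintro (rfl | rfl)
    · rfl
    · exact (Associated.refl α).neg_right

lemma associated_of_dvd_of_natNorm_eq {α β : ZSqrtNegTwo} (h0 : α ≠ 0) (h : β ∣ α)
    (hnorm : natNorm β = natNorm α) : Associated β α := by
  obtain ⟨δ, rfl⟩ := h
  refine associated_mul_unit_right β δ (isUnit_iff.mpr ?_)
  rw [natNorm_mul, eq_comm, Nat.mul_eq_left (natNorm_pos (left_ne_zero_of_mul h0)).ne'] at hnorm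
  exact hnorm

lemma exists_prime_dvd_natCast {π : ZSqrtNegTwo} (h : Prime π) :
    ∃ p : ℕ, p.Prime ∧ π ∣ (p : ZSqrtNegTwo) := by
  have hdvd : π ∣ (natNorm π : ZSqrtNegTwo) := ⟨star π, (mul_star_eq_natNorm π).symm⟩
  rw [← Nat.prod_primeFactorsList (natNorm_pos h.ne_zero).ne', Nat.cast_list_prod,
    h.dvd_prod_iff] at hdvd
  obtain ⟨_, hmem, hdvd⟩ := hdvd
  obtain ⟨p, hp, rfl⟩ := List.mem_map.mp hmem
  exact ⟨p, Nat.prime_of_mem_primeFactorsList hp, hdvd⟩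

lemma im_eq_zero_of_prime {π : ZSqrtNegTwo} (h : Prime π) (hn : ¬ (natNorm π).Prime) :
    π.im = 0 := by
  obtain ⟨p, hp, hdvd⟩ := exists_prime_dvd_natCast h
  have hnorm : natNorm π = p ^ 2 := by
    obtain ⟨δ, hδ⟩ := hdvd
    have hmul : natNorm π * natNorm δ = p ^ 2 := by rw [← natNorm_mul, ← hδ, natNorm_natCast]
    by_contra hne
    have hδ1 : natNorm δ ≠ 1 := fun hδ1 => hne (by rw [← hmul, hδ1, mul_one])
    exact hn (((hp.mul_eq_prime_sq_iff (isUnit_iff.not.mp h.not_isUnit) hδ1).mp hmul).1 ▸ hp)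
  have hassoc := associated_of_dvd_of_natNorm_eq (by exact_mod_cast hp.ne_zero) hdvd
    (hnorm.trans (natNorm_natCast p).symm)
  rcases associated_iff.mp hassoc.symm with rfl | rfl <;> simp

lemma eq_or_of_natNorm_eq_prime {α β : ZSqrtNegTwo} (hα : (natNorm α).Prime)
    (h : natNorm β = natNorm α) : β = α ∨ β = -α ∨ β = star α ∨ β = -star α := by
  have hβ : Prime β := prime_of_natNorm_prime (h ▸ hα)
  have hα0 : α ≠ 0 := fun h0 => hα.ne_zero (natNorm_eq_zero_iff.mpr h0)
  have hdvd : β ∣ α * star α := ⟨star β, by rw [mul_star_eq_natNorm, mul_star_eq_natNorm, h]⟩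
  rcases hβ.dvd_or_dvd hdvd with hdvd | hdvd
  · have := associated_iff.mp (associated_of_dvd_of_natNorm_eq hα0 hdvd h).symm
    tauto
  · have := associated_iff.mp
      (associated_of_dvd_of_natNorm_eq (star_ne_zero.mpr hα0) hdvd (by rw [h, natNorm_star])).symm
    tauto

lemma odd_natNorm_iff {α : ZSqrtNegTwo} : Odd (natNorm α) ↔ Odd α.re := by
  rw [← Int.odd_coe_nat, natCast_natNorm]
  simp [parity_simps]

lemma im_ne_zero_of_natNorm_prime {α : ZSqrtNegTwo} (hα : (natNorm α).Prime) : α.im ≠ 0 := by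
  intro him
  have hsq : natNorm α = α.re.natAbs ^ 2 := by
    zify
    rw [natCast_natNorm, him, sq_abs]
    ring
  exact Nat.Prime.not_prime_pow le_rfl (hsq ▸ hα)

lemma setOf_natNorm_eq {α : ZSqrtNegTwo} (hα : (natNorm α).Prime) :
    {β | natNorm β = natNorm α} = (({α, -α, star α, -star α} : Finset ZSqrtNegTwo) : Set _) := by
  ext β
  simp only [Set.mem_ofPred_eq, Finset.coe_insert, Finset.coe_singleton, Set.mem_insert_iff,
    Set.mem_singleton_iff]
  refine ⟨eq_or_of_natNorm_eq_prime hα, ?_⟩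
  rintro (rfl | rfl | rfl | rfl) <;> simp

lemma ne_neg_self_of_odd_natNorm {α : ZSqrtNegTwo} (h : Odd (natNorm α)) : α ≠ -α := by
  intro heq
  have hre := congrArg Zsqrtd.re heq
  obtain ⟨a, ha⟩ := odd_natNorm_iff.mp h
  rw [Zsqrtd.re_neg] at hre
  lia

lemma ne_star_self_of_natNorm_prime {α : ZSqrtNegTwo} (hα : (natNorm α).Prime) : α ≠ star α := by
  intro heq
  have him := congrArg Zsqrtd.im heq
  have := im_ne_zero_of_natNorm_prime hα
  rw [Zsqrtd.im_star] at him
  lia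

lemma ne_neg_star_self_of_odd_natNorm {α : ZSqrtNegTwo} (h : Odd (natNorm α)) : α ≠ -star α := by
  intro heq
  have hre := congrArg Zsqrtd.re heq
  obtain ⟨a, ha⟩ := odd_natNorm_iff.mp h
  rw [Zsqrtd.re_neg, Zsqrtd.re_star] at hre
  lia

lemma not_prime_natCast {p : ℕ} (hp : p.Prime) {x : ℤ} (h : (p : ℤ) ∣ x ^ 2 + 2) :
    ¬ Prime (p : ZSqrtNegTwo) := by
  intro hprime
  have hmul : (⟨x, 1⟩ : ZSqrtNegTwo) * ⟨x, -1⟩ = ((x ^ 2 + 2 : ℤ) : ZSqrtNegTwo) := by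
    ext <;> simp [sq]
  have hdvd : (p : ZSqrtNegTwo) ∣ (⟨x, 1⟩ : ZSqrtNegTwo) * ⟨x, -1⟩ := by
    rw [hmul]
    exact_mod_cast Int.cast_dvd_cast (α := ZSqrtNegTwo) _ _ h
  have hone : (p : ℤ) ∣ 1 := by
    rcases hprime.dvd_or_dvd hdvd with ⟨δ, hδ⟩ | ⟨δ, hδ⟩
    · exact ⟨δ.im, by simpa using congrArg Zsqrtd.im hδ⟩
    · exact ⟨-δ.im, by simpa [neg_eq_iff_eq_neg] using congrArg Zsqrtd.im hδ⟩
  exact hp.one_lt.ne' (by exact_mod_cast Int.eq_one_of_dvd_one (by positivity) hone)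

lemma exists_natNorm_eq {p : ℕ} (hp : p.Prime) (h : p % 8 = 1 ∨ p % 8 = 3) :
    ∃ α : ZSqrtNegTwo, natNorm α = p := by
  have := Fact.mk hp
  obtain ⟨y, hy⟩ := (ZMod.exists_sq_eq_neg_two_iff (by rintro rfl; simp at h)).mpr h
  obtain ⟨x, rfl⟩ := ZMod.intCast_surjective y
  have hdvd : (p : ℤ) ∣ x ^ 2 + 2 := by
    rw [← ZMod.intCast_zmod_eq_zero_iff_dvd]
    push_cast
    rw [sq, ← hy]
    ring
  have hred := not_prime_natCast hp hdvd
  have hunit : ¬ IsUnit (p : ZSqrtNegTwo) := by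
    rw [isUnit_iff, natNorm_natCast]
    exact (Nat.one_lt_pow two_ne_zero hp.one_lt).ne'
  rw [← irreducible_iff_prime, irreducible_iff] at hred
  push Not at hred
  obtain ⟨a, b, hab, ha, hb⟩ := hred hunit
  rw [isUnit_iff] at ha hb
  have hmul : natNorm a * natNorm b = p ^ 2 := by rw [← natNorm_mul, ← hab, natNorm_natCast]
  exact ⟨a, ((hp.mul_eq_prime_sq_iff ha hb).mp hmul).1⟩

lemma natNorm_mod_eight {α : ZSqrtNegTwo} (h : Odd (natNorm α)) :
    (Even α.im ∧ natNorm α % 8 = 1) ∨ (Odd α.im ∧ natNorm α % 8 = 3) := by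
  obtain ⟨a, ha⟩ := odd_natNorm_iff.mp h
  obtain ⟨c, hc⟩ := Int.even_mul_succ_self a
  rcases Int.even_or_odd' α.im with ⟨b, hb | hb⟩
  · refine Or.inl ⟨⟨b, by lia⟩, ?_⟩
    have : (natNorm α : ℤ) = 8 * (c + b ^ 2) + 1 := by
      rw [natCast_natNorm, ha, hb]
      linear_combination 4 * hc
    lia
  · refine Or.inr ⟨⟨b, hb⟩, ?_⟩
    have : (natNorm α : ℤ) = 8 * (c + b ^ 2 + b) + 3 := by
      rw [natCast_natNorm, ha, hb]
      linear_combination 4 * hc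
    lia

/-! ### Logarithmically weighted valuations -/

open Classical in
/-- `log (natNorm π)` if `π` is a prime of `ℤ[√-2]`, and zero otherwise. -/
noncomputable def logPrimeNorm (π : ZSqrtNegTwo) : ℝ :=
  if Prime π then Real.log (natNorm π) else 0

/-- The `π`-adic valuation of `γ` times `log (natNorm π)`, for a prime `π` of `ℤ[√-2]`; zero if `π`
is not prime. -/
noncomputable def logVal (π γ : ZSqrtNegTwo) : ℝ := multiplicity π γ * logPrimeNorm π

lemma logPrimeNorm_of_prime {π : ZSqrtNegTwo} (h : Prime π) :
    logPrimeNorm π = Real.log (natNorm π) := if_pos h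

lemma logPrimeNorm_of_not_prime {π : ZSqrtNegTwo} (h : ¬ Prime π) : logPrimeNorm π = 0 := if_neg h

lemma logPrimeNorm_neg (π : ZSqrtNegTwo) : logPrimeNorm (-π) = logPrimeNorm π := by
  have hiff : Prime (-π) ↔ Prime π := ⟨fun h => neg_neg π ▸ h.neg, Prime.neg⟩
  rw [logPrimeNorm, logPrimeNorm, hiff, natNorm_neg]

lemma logPrimeNorm_nonneg (π : ZSqrtNegTwo) : 0 ≤ logPrimeNorm π := by
  unfold logPrimeNorm
  split_ifs <;> [exact Real.log_natCast_nonneg _; rfl]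

lemma logVal_nonneg (π γ : ZSqrtNegTwo) : 0 ≤ logVal π γ :=
  mul_nonneg (Nat.cast_nonneg _) (logPrimeNorm_nonneg π)

lemma logVal_of_not_prime {π : ZSqrtNegTwo} (h : ¬ Prime π) (γ : ZSqrtNegTwo) :
    logVal π γ = 0 := by
  rw [logVal, logPrimeNorm_of_not_prime h, mul_zero]

lemma logVal_mul {π α β : ZSqrtNegTwo} (hα : α ≠ 0) (hβ : β ≠ 0) :
    logVal π (α * β) = logVal π α + logVal π β := by
  by_cases h : Prime π
  · rw [logVal, multiplicity_mul h (FiniteMultiplicity.of_prime_left h (mul_ne_zero hα hβ)),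
      Nat.cast_add, add_mul, logVal, logVal]
  · simp only [logVal_of_not_prime h, add_zero]

lemma logVal_self (π : ZSqrtNegTwo) : logVal π π = logPrimeNorm π := by
  rw [logVal, multiplicity_self, Nat.cast_one, one_mul]

lemma logVal_eq_zero_of_not_dvd {π γ : ZSqrtNegTwo} (h : ¬ π ∣ γ) : logVal π γ = 0 := by
  rw [logVal, multiplicity_eq_zero.mpr h, Nat.cast_zero, zero_mul]

lemma logVal_eq_zero_of_isUnit {u : ZSqrtNegTwo} (hu : IsUnit u) (π : ZSqrtNegTwo) :
    logVal π u = 0 := by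
  by_cases h : Prime π
  · exact logVal_eq_zero_of_not_dvd fun hd => h.not_isUnit (isUnit_of_dvd_unit hd hu)
  · exact logVal_of_not_prime h u

lemma logVal_neg_self {π : ZSqrtNegTwo} (hπ : Prime π) : logVal (-π) π = logPrimeNorm π := by
  have hmul := logVal_mul (π := -π) (α := -1) (β := -π) (by simp) (neg_ne_zero.mpr hπ.ne_zero)
  rwa [neg_one_mul, neg_neg, logVal_self, logVal_eq_zero_of_isUnit isUnit_one.neg, zero_add,
    logPrimeNorm_neg] at hmul

lemma hasSum_logVal_of_prime {p : ZSqrtNegTwo} (hp : Prime p) :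
    HasSum (fun π => logVal π p) (2 * Real.log (natNorm p)) := by
  have hne : p ≠ -p := by
    intro h
    have hre := congrArg Zsqrtd.re h
    have him := congrArg Zsqrtd.im h
    rw [Zsqrtd.re_neg] at hre
    rw [Zsqrtd.im_neg] at him
    exact hp.ne_zero (Zsqrtd.ext (by rw [Zsqrtd.re_zero]; lia) (by rw [Zsqrtd.im_zero]; lia))
  have hsum : HasSum (fun π => logVal π p) (∑ π ∈ {p, -p}, logVal π p) := by
    refine hasSum_sum_of_ne_finset_zero fun π hπ => ?_
    by_cases h : Prime π
    · refine logVal_eq_zero_of_not_dvd fun hd => hπ ?_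
      rw [Finset.mem_insert, Finset.mem_singleton]
      exact associated_iff.mp (h.associated_of_dvd hp hd).symm
    · exact logVal_of_not_prime h p
  rwa [Finset.sum_pair hne, logVal_self, logVal_neg_self hp, ← two_mul,
    logPrimeNorm_of_prime hp] at hsum

-- The factor `2` appears because `π` and `-π` are counted separately.
lemma hasSum_logVal {γ : ZSqrtNegTwo} (hγ : γ ≠ 0) :
    HasSum (fun π => logVal π γ) (2 * Real.log (natNorm γ)) := by
  induction γ using UniqueFactorizationMonoid.induction_on_prime with
  | h₁ => exact absurd rfl hγ
  | h₂ u hu =>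
    simp only [logVal_eq_zero_of_isUnit hu, isUnit_iff.mp hu, Nat.cast_one, Real.log_one, mul_zero]
    exact hasSum_zero
  | h₃ a p ha hp ih =>
    have hlog : 2 * Real.log (natNorm (p * a)) =
        2 * Real.log (natNorm p) + 2 * Real.log (natNorm a) := by
      rw [natNorm_mul, Nat.cast_mul, Real.log_mul, mul_add]
      · exact_mod_cast (natNorm_pos hp.ne_zero).ne'
      · exact_mod_cast (natNorm_pos ha).ne'
    simp only [logVal_mul hp.ne_zero ha, hlog]
    exact (hasSum_logVal_of_prime hp).add (ih ha)

/-! ### Dirichlet series over `ℤ[√-2]` -/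

section DirichletSeries

open Topology

lemma norm_coordinates_sq_le_natNorm (α : ZSqrtNegTwo) :
    ‖(![α.re, α.im] : Fin 2 → ℤ)‖ ^ 2 ≤ natNorm α := by
  have hmax : ‖(![α.re, α.im] : Fin 2 → ℤ)‖ ≤ max |(α.re : ℝ)| |(α.im : ℝ)| := by
    rw [pi_norm_le_iff_of_nonneg (by positivity)]
    intro i
    fin_cases i <;> simp [Int.norm_eq_abs]
  refine (pow_le_pow_left₀ (norm_nonneg _) hmax 2).trans ?_
  rw [realCast_natNorm]
  rcases max_choice |(α.re : ℝ)| |(α.im : ℝ)| with h | h <;> rw [h, sq_abs] <;>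
    nlinarith [sq_nonneg (α.re : ℝ), sq_nonneg (α.im : ℝ)]

lemma summable_natNorm_rpow {σ : ℝ} (hσ : 1 < σ) :
    Summable fun α : ZSqrtNegTwo => (natNorm α : ℝ) ^ (-σ) := by
  have hinj : Function.Injective fun α : ZSqrtNegTwo => ![α.re, α.im] := fun α β h =>
    Zsqrtd.ext (by simpa using congrFun h 0) (by simpa using congrFun h 1)
  have hsum := EisensteinSeries.summable_one_div_norm_rpow (k := 2 * σ) (by linarith)
  refine (hsum.comp_injective hinj).of_nonneg_of_le (fun _ => by positivity) fun α => ?_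
  simp only [Function.comp]
  rcases eq_or_ne α 0 with rfl | hα
  · rw [natNorm_zero, Nat.cast_zero, Real.zero_rpow (by linarith)]
    positivity
  · have hpos : (0 : ℝ) < ‖(![α.re, α.im] : Fin 2 → ℤ)‖ :=
      norm_pos_iff.mpr fun h => hα (hinj (by simpa using h))
    rw [show -(2 * σ) = 2 * -σ by ring, Real.rpow_mul hpos.le, Real.rpow_two]
    exact Real.rpow_le_rpow_of_nonpos (by positivity) (norm_coordinates_sq_le_natNorm α)
      (by linarith)

lemma summable_log_natNorm_mul_rpow {σ : ℝ} (hσ : 1 < σ) :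
    Summable fun α : ZSqrtNegTwo => Real.log (natNorm α) * (natNorm α : ℝ) ^ (-σ) := by
  obtain ⟨τ, hτ, hτσ⟩ := exists_between hσ
  have hε : 0 < σ - τ := by linarith
  refine Summable.of_nonneg_of_le
    (fun α => mul_nonneg (Real.log_natCast_nonneg _) (by positivity)) (fun α => ?_)
    ((summable_natNorm_rpow hτ).mul_left (1 / (σ - τ)))
  rcases eq_or_ne α 0 with rfl | hα
  · rw [natNorm_zero, Nat.cast_zero, Real.log_zero, zero_mul]
    positivity
  have hpos : (0 : ℝ) < natNorm α := by exact_mod_cast natNorm_pos hα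
  calc Real.log (natNorm α) * (natNorm α : ℝ) ^ (-σ)
      ≤ ((natNorm α : ℝ) ^ (σ - τ) / (σ - τ)) * (natNorm α : ℝ) ^ (-σ) :=
        mul_le_mul_of_nonneg_right (Real.log_le_rpow_div hpos.le hε) (by positivity)
    _ = 1 / (σ - τ) * (natNorm α : ℝ) ^ (-τ) := by
        rw [show -τ = (σ - τ) + -σ by ring, Real.rpow_add hpos]
        ring

variable (χ : ZSqrtNegTwo →*₀ ℂ)

/-- The general term of the Dirichlet series over `ℤ[√-2]` attached to `χ`. -/
noncomputable def term (s : ℂ) (α : ZSqrtNegTwo) : ℂ := χ α * (natNorm α : ℂ) ^ (-s)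

/-- The Dirichlet series attached to `χ`. The sum is over the elements of `ℤ[√-2]`, not its ideals,
so it is twice the usual `L`-series if `χ (-1) = 1`. -/
noncomputable def lseries (s : ℂ) : ℂ := ∑' α, term χ s α

@[simp] lemma term_zero (s : ℂ) : term χ s 0 = 0 := by simp [term]

lemma term_mul (s : ℂ) (α β : ZSqrtNegTwo) :
    term χ s (α * β) = term χ s α * term χ s β := by
  rw [term, term, term, map_mul, natNorm_mul, Nat.cast_mul, Complex.natCast_mul_natCast_cpow,
    mul_mul_mul_comm]

variable {χ}

lemma norm_term_le (hχ : ∀ α, ‖χ α‖ ≤ 1) (s : ℂ) (α : ZSqrtNegTwo) :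
    ‖term χ s α‖ ≤ (natNorm α : ℝ) ^ (-s.re) := by
  rcases eq_or_ne α 0 with rfl | hα
  · rw [term_zero, norm_zero]
    positivity
  · rw [term, norm_mul, Complex.norm_natCast_cpow_of_pos (natNorm_pos hα), Complex.neg_re]
    exact mul_le_of_le_one_left (by positivity) (hχ α)

lemma norm_term_le_one (hχ : ∀ α, ‖χ α‖ ≤ 1) {s : ℂ} (hs : 0 < s.re) (α : ZSqrtNegTwo) :
    ‖term χ s α‖ ≤ 1 := by
  rcases eq_or_ne α 0 with rfl | hα
  · simp
  · exact (norm_term_le hχ s α).trans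
      (Real.rpow_le_one_of_one_le_of_nonpos (by exact_mod_cast natNorm_pos hα) (by linarith))

lemma natNorm_rpow_neg_le {σ τ : ℝ} (h : σ ≤ τ) (hσ : 0 < σ) (α : ZSqrtNegTwo) :
    (natNorm α : ℝ) ^ (-τ) ≤ (natNorm α : ℝ) ^ (-σ) := by
  rcases eq_or_ne α 0 with rfl | hα
  · rw [natNorm_zero, Nat.cast_zero, Real.zero_rpow (by linarith), Real.zero_rpow (by linarith)]
  · exact Real.rpow_le_rpow_of_exponent_le (by exact_mod_cast natNorm_pos hα) (by linarith)

lemma summable_norm_term (hχ : ∀ α, ‖χ α‖ ≤ 1) {s : ℂ} (hs : 1 < s.re) :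
    Summable fun α => ‖term χ s α‖ :=
  (summable_natNorm_rpow hs).of_nonneg_of_le (fun _ => norm_nonneg _) (norm_term_le hχ s)

lemma hasSum_lseries (hχ : ∀ α, ‖χ α‖ ≤ 1) {s : ℂ} (hs : 1 < s.re) :
    HasSum (term χ s) (lseries χ s) :=
  (summable_norm_term hχ hs).of_norm.hasSum

lemma hasDerivAt_term (s : ℂ) (α : ZSqrtNegTwo) :
    HasDerivAt (fun z => term χ z α) (-(Real.log (natNorm α) : ℂ) * term χ s α) s := by
  rcases eq_or_ne α 0 with rfl | hα
  · simpa using hasDerivAt_const s (0 : ℂ)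
  have hne : (natNorm α : ℂ) ≠ 0 := by exact_mod_cast (natNorm_pos hα).ne'
  refine (((hasDerivAt_neg s).const_cpow (Or.inl hne)).const_mul (χ α)).congr_deriv ?_
  rw [term, Complex.natCast_log]
  ring

lemma hasSum_deriv_lseries (hχ : ∀ α, ‖χ α‖ ≤ 1) {s : ℂ} (hs : 1 < s.re) :
    HasSum (fun α => -(Real.log (natNorm α) : ℂ) * term χ s α) (deriv (lseries χ) s) := by
  obtain ⟨δ, hδ, hδs⟩ := exists_between hs
  have hopen : IsOpen {z : ℂ | δ < z.re} := isOpen_lt continuous_const Complex.continuous_re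
  have hderiv := Complex.hasSum_deriv_of_summable_norm (F := fun α z => term χ z α)
    (summable_natNorm_rpow hδ)
    (fun α z _ => (hasDerivAt_term z α).differentiableAt.differentiableWithinAt) hopen
    (fun α z hz => (norm_term_le hχ z α).trans
      (natNorm_rpow_neg_le (le_of_lt hz) (by linarith) α)) hδs
  simpa only [(hasDerivAt_term s _).deriv] using! hderiv

end DirichletSeries

/-! ### Analytic continuation -/

section Continuation

variable {χ : ZSqrtNegTwo →*₀ ℂ}

lemma norm_cpow_neg_sub_cpow_neg_le {m a b σ : ℝ} (hm : 1 ≤ m) (ha : m ≤ a) (hb : m ≤ b)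
    (hσ : 0 < σ) {s : ℂ} (hs : σ ≤ s.re) :
    ‖(a : ℂ) ^ (-s) - (b : ℂ) ^ (-s)‖ ≤ ‖s‖ * m ^ (-(σ + 1)) * |a - b| := by
  have hs0 : -s ≠ 0 := neg_ne_zero.mpr fun h => by
    rw [h, Complex.zero_re] at hs
    linarith
  have hderiv (x : ℝ) (hx : m ≤ x) :
      HasDerivWithinAt (fun x : ℝ => (x : ℂ) ^ (-s)) (-s * (x : ℂ) ^ (-s - 1)) (Set.Ici m) x :=
    (hasDerivAt_ofReal_cpow_const (by linarith) hs0).hasDerivWithinAt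
  have hbound (x : ℝ) (hx : m ≤ x) : ‖-s * (x : ℂ) ^ (-s - 1)‖ ≤ ‖s‖ * m ^ (-(σ + 1)) := by
    rw [norm_mul, norm_neg, Complex.norm_cpow_eq_rpow_re_of_pos (by linarith)]
    refine mul_le_mul_of_nonneg_left ?_ (norm_nonneg s)
    simp only [Complex.sub_re, Complex.neg_re, Complex.one_re]
    exact (Real.rpow_le_rpow_of_exponent_le (hm.trans hx) (by linarith)).trans
      (Real.rpow_le_rpow_of_nonpos (by linarith) hx (by linarith))
  exact (convex_Ici m).norm_image_sub_le_of_norm_hasDerivWithin_le hderiv hbound hb ha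

lemma realCast_natNorm_add (α : ZSqrtNegTwo) (y : ℕ) :
    (natNorm (α + ⟨0, y⟩) : ℝ) = natNorm α + 4 * (α.im * y) + 2 * (y : ℝ) ^ 2 := by
  rw [realCast_natNorm, realCast_natNorm, Zsqrtd.re_add, Zsqrtd.im_add]
  push_cast
  ring

lemma natNorm_div_four_le_natNorm_add {M y : ℕ} (hy : y < M) {α : ZSqrtNegTwo}
    (hα : 8 * (M : ℝ) ^ 2 ≤ natNorm α) : (natNorm α : ℝ) / 4 ≤ natNorm (α + ⟨0, y⟩) := by
  have hyM : (y : ℝ) ^ 2 ≤ M ^ 2 := by gcongr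
  rw [realCast_natNorm_add]
  nlinarith [sq_nonneg ((α.im : ℝ) + 2 * y), sq_nonneg (α.re : ℝ), realCast_natNorm α]

lemma abs_natNorm_add_sub_natNorm_le {M y : ℕ} (hy : y < M) {α : ZSqrtNegTwo}
    (hα : 8 * (M : ℝ) ^ 2 ≤ natNorm α) :
    |(natNorm (α + ⟨0, y⟩) : ℝ) - natNorm α| ≤ 6 * (M : ℝ) ^ 2 * √(natNorm α) := by
  have hyM : (y : ℝ) ≤ M := by exact_mod_cast hy.le
  have hM : (1 : ℝ) ≤ M := by exact_mod_cast (show 1 ≤ M by lia)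
  have him : |(α.im : ℝ)| ≤ √(natNorm α) := by
    refine Real.abs_le_sqrt ?_
    rw [realCast_natNorm]
    nlinarith [sq_nonneg (α.re : ℝ), sq_nonneg (α.im : ℝ)]
  have hsqrt : 1 ≤ √(natNorm α : ℝ) := Real.one_le_sqrt.mpr (by nlinarith)
  calc |(natNorm (α + ⟨0, y⟩) : ℝ) - natNorm α|
      = |4 * ((α.im : ℝ) * y) + 2 * (y : ℝ) ^ 2| := by rw [realCast_natNorm_add]; ring_nf
    _ ≤ 4 * (|(α.im : ℝ)| * y) + 2 * (y : ℝ) ^ 2 := by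
        refine (abs_add_le _ _).trans_eq ?_
        simp [abs_mul]
    _ ≤ 4 * (√(natNorm α) * M) + 2 * (M : ℝ) ^ 2 := by gcongr
    _ ≤ 4 * (√(natNorm α) * (M : ℝ) ^ 2) + 2 * ((M : ℝ) ^ 2 * √(natNorm α)) := by
        gcongr
        · exact le_self_pow₀ hM two_ne_zero
        · exact le_mul_of_one_le_right (by positivity) hsqrt
    _ = 6 * (M : ℝ) ^ 2 * √(natNorm α) := by ring

lemma norm_sum_translates_le (hχ : ∀ α, ‖χ α‖ ≤ 1) {s : ℂ} (hs : 0 < s.re) (M : ℕ)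
    (α : ZSqrtNegTwo) : ‖∑ y ∈ Finset.range M, term χ s (α + ⟨0, y⟩)‖ ≤ M :=
  (norm_sum_le_of_le _ fun _ _ => norm_term_le_one hχ hs _).trans_eq (by simp)

lemma one_le_rpow_mul_rpow_neg {a b t : ℝ} (ha : 0 < a) (hab : a ≤ b) (ht : 0 ≤ t) :
    1 ≤ b ^ t * a ^ (-t) := by
  rw [Real.rpow_neg ha.le, ← div_eq_mul_inv, ← Real.div_rpow (by linarith) ha.le]
  exact Real.one_le_rpow ((one_le_div ha).mpr hab) ht

-- Since the values of `χ` sum to zero, `natNorm α ^ (-s)` may be subtracted from each summand.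
lemma norm_sum_translates_le_of_le_natNorm (hχ : ∀ α, ‖χ α‖ ≤ 1) {M : ℕ} (hM : 0 < M)
    (hsum : ∀ α, ∑ y ∈ Finset.range M, χ (α + ⟨0, y⟩) = 0) {s : ℂ} (hs : 3 / 4 ≤ s.re)
    {α : ZSqrtNegTwo} (hα : 8 * (M : ℝ) ^ 2 ≤ natNorm α) :
    ‖∑ y ∈ Finset.range M, term χ s (α + ⟨0, y⟩)‖ ≤
      M * (‖s‖ * 4 ^ (7 / 4 : ℝ) * (6 * M ^ 2)) * (natNorm α : ℝ) ^ (-(5 / 4) : ℝ) := by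
  have hM1 : (1 : ℝ) ≤ M := by exact_mod_cast hM
  have hN : (0 : ℝ) < natNorm α := by nlinarith
  have hsub : ∑ y ∈ Finset.range M, term χ s (α + ⟨0, y⟩) = ∑ y ∈ Finset.range M,
      χ (α + ⟨0, y⟩) *
        (((natNorm (α + ⟨0, y⟩) : ℝ) : ℂ) ^ (-s) - ((natNorm α : ℝ) : ℂ) ^ (-s)) := by
    simp only [mul_sub, Finset.sum_sub_distrib, ← Finset.sum_mul, hsum, zero_mul, sub_zero]
    simp [term]
  have hterm (y : ℕ) (hy : y ∈ Finset.range M) : ‖χ (α + ⟨0, y⟩) *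
      (((natNorm (α + ⟨0, y⟩) : ℝ) : ℂ) ^ (-s) - ((natNorm α : ℝ) : ℂ) ^ (-s))‖ ≤
      ‖s‖ * ((natNorm α : ℝ) / 4) ^ (-(3 / 4 + 1) : ℝ) * (6 * M ^ 2 * √(natNorm α)) := by
    have hy := Finset.mem_range.mp hy
    rw [norm_mul]
    refine (mul_le_of_le_one_left (norm_nonneg _) (hχ _)).trans ?_
    refine (norm_cpow_neg_sub_cpow_neg_le (m := (natNorm α : ℝ) / 4) (by nlinarith)
      (natNorm_div_four_le_natNorm_add hy hα) (by linarith) (by norm_num) hs).trans ?_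
    gcongr
    exact abs_natNorm_add_sub_natNorm_le hy hα
  have hpow : ((natNorm α : ℝ) / 4) ^ (-(3 / 4 + 1) : ℝ) * √(natNorm α) =
      4 ^ (7 / 4 : ℝ) * (natNorm α : ℝ) ^ (-(5 / 4) : ℝ) := by
    rw [Real.div_rpow hN.le (by norm_num), Real.sqrt_eq_rpow, div_mul_eq_mul_div,
      ← Real.rpow_add hN, Real.rpow_neg (by norm_num : (0 : ℝ) ≤ 4) (3 / 4 + 1), div_inv_eq_mul]
    norm_num [mul_comm]
  rw [hsub]
  refine (norm_sum_le_of_le _ hterm).trans_eq ?_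
  rw [Finset.sum_const, Finset.card_range, nsmul_eq_mul]
  linear_combination (M : ℝ) * ‖s‖ * (6 * M ^ 2) * hpow

lemma exists_summable_bound_sum_translates (hχ : ∀ α, ‖χ α‖ ≤ 1) {M : ℕ} (hM : 0 < M)
    (hsum : ∀ α, ∑ y ∈ Finset.range M, χ (α + ⟨0, y⟩) = 0) (B : ℝ) :
    ∃ u : ZSqrtNegTwo → ℝ, Summable u ∧ ∀ s : ℂ, 3 / 4 < s.re → ‖s‖ ≤ B → ∀ α,
      ‖∑ y ∈ Finset.range M, term χ s (α + ⟨0, y⟩)‖ ≤ u α := by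
  set C : ℝ := M * (8 * M ^ 2) ^ (5 / 4 : ℝ) + M * (|B| * 4 ^ (7 / 4 : ℝ) * (6 * M ^ 2))
  refine ⟨fun α => C * (natNorm α : ℝ) ^ (-(5 / 4) : ℝ) + if α = 0 then (M : ℝ) else 0,
    ((summable_natNorm_rpow (by norm_num)).mul_left _).add
      (hasSum_ite_eq (0 : ZSqrtNegTwo) (M : ℝ)).summable, fun s hs hsB α => ?_⟩
  beta_reduce
  rcases eq_or_ne α 0 with rfl | hα
  · rw [if_pos rfl]
    exact (norm_sum_translates_le hχ (by linarith) M 0).trans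
      (le_add_of_nonneg_left (by positivity))
  rw [if_neg hα, add_zero]
  have hN : (0 : ℝ) < natNorm α := by exact_mod_cast natNorm_pos hα
  rcases le_total (natNorm α : ℝ) (8 * M ^ 2) with hsmall | hlarge
  · calc ‖∑ y ∈ Finset.range M, term χ s (α + ⟨0, y⟩)‖ ≤ M :=
          norm_sum_translates_le hχ (by linarith) M α
      _ ≤ M * ((8 * M ^ 2) ^ (5 / 4 : ℝ) * (natNorm α : ℝ) ^ (-(5 / 4) : ℝ)) :=
          le_mul_of_one_le_right (by positivity)
            (one_le_rpow_mul_rpow_neg hN hsmall (by norm_num))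
      _ ≤ C * (natNorm α : ℝ) ^ (-(5 / 4) : ℝ) := by
          rw [← mul_assoc]
          gcongr
          exact le_add_of_nonneg_right (by positivity)
  · refine (norm_sum_translates_le_of_le_natNorm hχ hM hsum hs.le hlarge).trans ?_
    gcongr
    refine le_trans ?_ (le_add_of_nonneg_left (by positivity))
    gcongr
    exact hsB.trans (le_abs_self B)

lemma differentiableOn_tsum_sum_translates (hχ : ∀ α, ‖χ α‖ ≤ 1) {M : ℕ} (hM : 0 < M)
    (hsum : ∀ α, ∑ y ∈ Finset.range M, χ (α + ⟨0, y⟩) = 0) :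
    DifferentiableOn ℂ (fun s => ∑' α, ∑ y ∈ Finset.range M, term χ s (α + ⟨0, y⟩))
      {s | 3 / 4 < s.re} := by
  intro s hs
  obtain ⟨u, hu, hbound⟩ := exists_summable_bound_sum_translates hχ hM hsum (‖s‖ + 1)
  have hopen : IsOpen ({s : ℂ | 3 / 4 < s.re} ∩ Metric.ball 0 (‖s‖ + 1)) :=
    (isOpen_lt continuous_const Complex.continuous_re).inter Metric.isOpen_ball
  have hdiff (α : ZSqrtNegTwo) :
      Differentiable ℂ fun z => ∑ y ∈ Finset.range M, term χ z (α + ⟨0, y⟩) :=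
    Differentiable.fun_sum fun y _ z => (hasDerivAt_term z (α + ⟨0, y⟩)).differentiableAt
  have htsum := Complex.differentiableOn_tsum_of_summable_norm hu
    (fun α => (hdiff α).differentiableOn) hopen
    (fun α z hz => hbound z hz.1 (mem_ball_zero_iff.mp hz.2).le α)
  exact (htsum.differentiableAt (hopen.mem_nhds ⟨hs, by simp⟩)).differentiableWithinAt

-- Averaging the series over the translates does not change its value for `1 < re s`.
lemma exists_differentiableOn_eq_lseries (hχ : ∀ α, ‖χ α‖ ≤ 1) {M : ℕ} (hM : 0 < M)
    (hsum : ∀ α, ∑ y ∈ Finset.range M, χ (α + ⟨0, y⟩) = 0) :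
    ∃ G : ℂ → ℂ, DifferentiableOn ℂ G {s | 3 / 4 < s.re} ∧
      ∀ s : ℂ, 1 < s.re → G s = lseries χ s := by
  refine ⟨fun s => (M : ℂ)⁻¹ * ∑' α, ∑ y ∈ Finset.range M, term χ s (α + ⟨0, y⟩),
    (differentiableOn_tsum_sum_translates hχ hM hsum).const_mul _, fun s hs => ?_⟩
  have htranslate (β : ZSqrtNegTwo) : HasSum (fun α => term χ s (α + β)) (lseries χ s) :=
    (Equiv.hasSum_iff (f := term χ s) (Equiv.addRight β)).mpr (hasSum_lseries hχ hs)
  have htsum := (hasSum_sum fun (y : ℕ) (_ : y ∈ Finset.range M) => htranslate ⟨0, y⟩).tsum_eq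
  beta_reduce
  rw [htsum, Finset.sum_const, Finset.card_range, nsmul_eq_mul,
    inv_mul_cancel_left₀ (by exact_mod_cast hM.ne')]

end Continuation

/-! ### Logarithmic derivatives -/

section LogDeriv

variable {χ : ZSqrtNegTwo →*₀ ℂ}

lemma norm_term_le_half (hχ : ∀ α, ‖χ α‖ ≤ 1) {s : ℂ} (hs : 1 ≤ s.re) {π : ZSqrtNegTwo}
    (hπ : Prime π) : ‖term χ s π‖ ≤ 1 / 2 := by
  have htwo : (2 : ℝ) ≤ natNorm π := by exact_mod_cast two_le_natNorm_of_prime hπ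
  calc ‖term χ s π‖ ≤ (natNorm π : ℝ) ^ (-s.re) := norm_term_le hχ s π
    _ ≤ (natNorm π : ℝ) ^ (-1 : ℝ) := natNorm_rpow_neg_le hs one_pos π
    _ ≤ (2 : ℝ) ^ (-1 : ℝ) := Real.rpow_le_rpow_of_nonpos two_pos htwo (by norm_num)
    _ = 1 / 2 := by norm_num [Real.rpow_neg_one]

lemma half_le_norm_one_sub_term (hχ : ∀ α, ‖χ α‖ ≤ 1) {s : ℂ} (hs : 1 ≤ s.re) {π : ZSqrtNegTwo}
    (hπ : Prime π) : 1 / 2 ≤ ‖1 - term χ s π‖ := by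
  have hsub := norm_sub_norm_le (1 : ℂ) (term χ s π)
  rw [norm_one] at hsub
  linarith [norm_term_le_half hχ hs hπ]

lemma one_sub_term_ne_zero (hχ : ∀ α, ‖χ α‖ ≤ 1) {s : ℂ} (hs : 1 ≤ s.re) {π : ZSqrtNegTwo}
    (hπ : Prime π) : 1 - term χ s π ≠ 0 :=
  norm_pos_iff.mp (one_half_pos.trans_le (half_le_norm_one_sub_term hχ hs hπ))

lemma logPrimeNorm_le (π : ZSqrtNegTwo) : logPrimeNorm π ≤ Real.log (natNorm π) := by
  unfold logPrimeNorm
  split_ifs <;> [rfl; exact Real.log_natCast_nonneg _]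

lemma summable_log_mul_norm_term (hχ : ∀ α, ‖χ α‖ ≤ 1) {s : ℂ} (hs : 1 < s.re) :
    Summable fun γ => Real.log (natNorm γ) * ‖term χ s γ‖ :=
  (summable_log_natNorm_mul_rpow hs).of_nonneg_of_le
    (fun _ => mul_nonneg (Real.log_natCast_nonneg _) (norm_nonneg _))
    (fun γ => mul_le_mul_of_nonneg_left (norm_term_le hχ s γ) (Real.log_natCast_nonneg _))

lemma summable_logVal_mul_term (hχ : ∀ α, ‖χ α‖ ≤ 1) {s : ℂ} (hs : 1 < s.re) :
    Summable fun x : ZSqrtNegTwo × ZSqrtNegTwo => (logVal x.2 x.1 : ℂ) * term χ s x.1 := by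
  have hrow (γ : ZSqrtNegTwo) : HasSum (fun π => logVal π γ * ‖term χ s γ‖)
      (2 * Real.log (natNorm γ) * ‖term χ s γ‖) := by
    rcases eq_or_ne γ 0 with rfl | hγ
    · simp
    · exact (hasSum_logVal hγ).mul_right _
  have hnorm : Summable fun x : ZSqrtNegTwo × ZSqrtNegTwo =>
      logVal x.2 x.1 * ‖term χ s x.1‖ := by
    rw [summable_prod_of_nonneg fun x => mul_nonneg (logVal_nonneg _ _) (norm_nonneg _)]
    refine ⟨fun γ => (hrow γ).summable, ?_⟩
    simp only [(hrow _).tsum_eq, mul_assoc]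
    exact (summable_log_mul_norm_term hχ hs).mul_left 2
  refine Summable.of_norm (hnorm.congr fun x => ?_)
  rw [norm_mul, Complex.norm_real, Real.norm_of_nonneg (logVal_nonneg _ _)]

lemma logVal_mul_term_mul {π : ZSqrtNegTwo} (hπ : π ≠ 0) (s : ℂ) (δ : ZSqrtNegTwo) :
    (logVal π (π * δ) : ℂ) * term χ s (π * δ) =
      term χ s π * ((logVal π δ : ℂ) * term χ s δ + logPrimeNorm π * term χ s δ) := by
  rcases eq_or_ne δ 0 with rfl | hδ
  · simp
  · rw [logVal_mul hπ hδ, logVal_self, term_mul]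
    push_cast
    ring

-- Only multiples `π * δ` contribute, so the sum `S` on the left satisfies
-- `S = term χ s π * (S + logPrimeNorm π * lseries χ s)`.
lemma tsum_logVal_mul_term (hχ : ∀ α, ‖χ α‖ ≤ 1) {s : ℂ} (hs : 1 < s.re) (π : ZSqrtNegTwo) :
    ∑' γ, (logVal π γ : ℂ) * term χ s γ =
      lseries χ s * (logPrimeNorm π * (term χ s π / (1 - term χ s π))) := by
  by_cases hπ : Prime π
  · have hsum : Summable fun γ => (logVal π γ : ℂ) * term χ s γ :=
      (summable_logVal_mul_term hχ hs).comp_injective (i := fun γ : ZSqrtNegTwo => (γ, π))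
        (Prod.mk_left_injective π)
    have hsupport : Function.support (fun γ => (logVal π γ : ℂ) * term χ s γ) ⊆
        Set.range fun δ : ZSqrtNegTwo => π * δ := by
      refine fun γ hγ => by_contra fun hrange => hγ ?_
      have hdvd : ¬ π ∣ γ := fun ⟨δ, hδ⟩ => hrange ⟨δ, hδ.symm⟩
      simp only [logVal_eq_zero_of_not_dvd hdvd, Complex.ofReal_zero, zero_mul]
    have hself := (mul_right_injective₀ hπ.ne_zero).tsum_eq hsupport
    simp only [logVal_mul_term_mul hπ.ne_zero] at hself
    have hseries := (hasSum_lseries hχ hs).mul_left (logPrimeNorm π : ℂ)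
    rw [tsum_mul_left, hsum.tsum_add hseries.summable, hseries.tsum_eq] at hself
    rw [mul_div_assoc', mul_div_assoc', eq_div_iff (one_sub_term_ne_zero hχ hs.le hπ)]
    linear_combination -hself
  · simp only [logVal_of_not_prime hπ, logPrimeNorm_of_not_prime hπ, Complex.ofReal_zero,
      zero_mul, mul_zero, tsum_zero]

lemma neg_two_mul_deriv_lseries_eq_tsum (hχ : ∀ α, ‖χ α‖ ≤ 1) {s : ℂ} (hs : 1 < s.re) :
    -2 * deriv (lseries χ) s =
      lseries χ s * ∑' π, logPrimeNorm π * (term χ s π / (1 - term χ s π)) := by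
  have hrow (γ : ZSqrtNegTwo) : ∑' π, (logVal π γ : ℂ) * term χ s γ =
      -2 * (-(Real.log (natNorm γ) : ℂ) * term χ s γ) := by
    rcases eq_or_ne γ 0 with rfl | hγ
    · simp
    · rw [((Complex.hasSum_ofReal.mpr (hasSum_logVal hγ)).mul_right (term χ s γ)).tsum_eq]
      push_cast
      ring
  calc -2 * deriv (lseries χ) s = ∑' γ, ∑' π, (logVal π γ : ℂ) * term χ s γ := by
        rw [← (hasSum_deriv_lseries hχ hs).tsum_eq, ← tsum_mul_left]
        exact tsum_congr fun γ => (hrow γ).symm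
    _ = ∑' π, ∑' γ, (logVal π γ : ℂ) * term χ s γ :=
        ((summable_logVal_mul_term hχ hs).tsum_comm
          (f := fun γ π => (logVal π γ : ℂ) * term χ s γ)).symm
    _ = lseries χ s * ∑' π, logPrimeNorm π * (term χ s π / (1 - term χ s π)) := by
        rw [← tsum_mul_left]
        exact tsum_congr (tsum_logVal_mul_term hχ hs)

variable (χ) in
/-- The Dirichlet series of `χ` over the primes of `ℤ[√-2]`, with logarithmic weights. -/
noncomputable def primeSeries (s : ℂ) : ℂ := ∑' π, (logPrimeNorm π : ℂ) * term χ s π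

variable (χ) in
/-- The contribution of proper prime powers to the logarithmic derivative of `lseries χ`. -/
noncomputable def primePowerSeries (s : ℂ) : ℂ :=
  ∑' π, (logPrimeNorm π : ℂ) * (term χ s π ^ 2 / (1 - term χ s π))

lemma norm_logPrimeNorm_mul_term_le (hχ : ∀ α, ‖χ α‖ ≤ 1) (s : ℂ) (π : ZSqrtNegTwo) :
    ‖(logPrimeNorm π : ℂ) * term χ s π‖ ≤
      Real.log (natNorm π) * (natNorm π : ℝ) ^ (-s.re) := by
  rw [norm_mul, Complex.norm_real, Real.norm_of_nonneg (logPrimeNorm_nonneg π)]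
  exact mul_le_mul (logPrimeNorm_le π) (norm_term_le hχ s π) (norm_nonneg _)
    (Real.log_natCast_nonneg _)

lemma hasSum_primeSeries (hχ : ∀ α, ‖χ α‖ ≤ 1) {s : ℂ} (hs : 1 < s.re) :
    HasSum (fun π => (logPrimeNorm π : ℂ) * term χ s π) (primeSeries χ s) :=
  (Summable.of_norm_bounded (summable_log_natNorm_mul_rpow hs)
    (norm_logPrimeNorm_mul_term_le hχ s)).hasSum

lemma continuous_term (π : ZSqrtNegTwo) : Continuous fun s => term χ s π :=
  continuous_iff_continuousAt.mpr fun s => (hasDerivAt_term s π).continuousAt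

lemma continuousOn_primeSeries (hχ : ∀ α, ‖χ α‖ ≤ 1) :
    ContinuousOn (primeSeries χ) {s | 1 < s.re} := by
  intro s hs
  obtain ⟨δ, hδ, hδs⟩ := exists_between (show 1 < s.re from hs)
  have hcont : ContinuousOn (primeSeries χ) {s | δ < s.re} :=
    continuousOn_tsum (fun π => (continuous_const.mul (continuous_term π)).continuousOn)
      (summable_log_natNorm_mul_rpow hδ) fun π s hs =>
        (norm_logPrimeNorm_mul_term_le hχ s π).trans
          (mul_le_mul_of_nonneg_left (natNorm_rpow_neg_le (le_of_lt hs) (by linarith) π)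
            (Real.log_natCast_nonneg _))
  have hopen : IsOpen {s : ℂ | δ < s.re} := isOpen_lt continuous_const Complex.continuous_re
  exact (hcont.continuousAt (hopen.mem_nhds hδs)).continuousWithinAt

lemma norm_logPrimeNorm_mul_term_sq_div_le (hχ : ∀ α, ‖χ α‖ ≤ 1) {s : ℂ} (hs : 1 ≤ s.re)
    (π : ZSqrtNegTwo) : ‖(logPrimeNorm π : ℂ) * (term χ s π ^ 2 / (1 - term χ s π))‖ ≤
      2 * (Real.log (natNorm π) * (natNorm π : ℝ) ^ (-2 : ℝ)) := by
  by_cases hπ : Prime π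
  · have hsq : ‖term χ s π‖ ^ 2 ≤ (natNorm π : ℝ) ^ (-2 : ℝ) := by
      have hterm : ‖term χ s π‖ ≤ (natNorm π : ℝ) ^ (-1 : ℝ) :=
        (norm_term_le hχ s π).trans (natNorm_rpow_neg_le hs one_pos π)
      refine (pow_le_pow_left₀ (norm_nonneg _) hterm 2).trans_eq ?_
      rw [← Real.rpow_natCast, ← Real.rpow_mul (by positivity)]
      norm_num
    rw [norm_mul, Complex.norm_real, Real.norm_of_nonneg (logPrimeNorm_nonneg π), norm_div,
      norm_pow]
    calc _ ≤ Real.log (natNorm π) * ((natNorm π : ℝ) ^ (-2 : ℝ) / (1 / 2)) :=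
          mul_le_mul (logPrimeNorm_le π)
            (div_le_div₀ (by positivity) hsq (by norm_num) (half_le_norm_one_sub_term hχ hs hπ))
            (by positivity) (Real.log_natCast_nonneg _)
      _ = 2 * (Real.log (natNorm π) * (natNorm π : ℝ) ^ (-2 : ℝ)) := by ring
  · rw [logPrimeNorm_of_not_prime hπ, Complex.ofReal_zero, zero_mul, norm_zero]
    have := Real.log_natCast_nonneg (natNorm π)
    positivity

lemma summable_two_mul_log_natNorm_mul_rpow_neg_two : Summable fun π : ZSqrtNegTwo =>
    2 * (Real.log (natNorm π) * (natNorm π : ℝ) ^ (-2 : ℝ)) :=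
  (summable_log_natNorm_mul_rpow one_lt_two).mul_left 2

lemma continuousOn_primePowerSeries (hχ : ∀ α, ‖χ α‖ ≤ 1) :
    ContinuousOn (primePowerSeries χ) {s | 1 ≤ s.re} := by
  refine continuousOn_tsum (fun π => ?_) summable_two_mul_log_natNorm_mul_rpow_neg_two
    (fun π s hs => norm_logPrimeNorm_mul_term_sq_div_le hχ hs π)
  by_cases hπ : Prime π
  · exact continuousOn_const.mul (((continuous_term π).pow 2).continuousOn.div
      (continuous_const.sub (continuous_term π)).continuousOn
      fun s hs => one_sub_term_ne_zero hχ hs hπ)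
  · simp only [logPrimeNorm_of_not_prime hπ, Complex.ofReal_zero, zero_mul]
    exact continuousOn_const

lemma neg_two_mul_deriv_lseries (hχ : ∀ α, ‖χ α‖ ≤ 1) {s : ℂ} (hs : 1 < s.re) :
    -2 * deriv (lseries χ) s = lseries χ s * (primeSeries χ s + primePowerSeries χ s) := by
  have hpower : Summable fun π =>
      (logPrimeNorm π : ℂ) * (term χ s π ^ 2 / (1 - term χ s π)) :=
    Summable.of_norm_bounded summable_two_mul_log_natNorm_mul_rpow_neg_two
      (norm_logPrimeNorm_mul_term_sq_div_le hχ hs.le)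
  rw [neg_two_mul_deriv_lseries_eq_tsum hχ hs, primeSeries, primePowerSeries,
    ← (hasSum_primeSeries hχ hs).summable.tsum_add hpower]
  congr 1
  refine tsum_congr fun π => ?_
  by_cases hπ : Prime π
  · have := one_sub_term_ne_zero hχ hs.le hπ
    field_simp
    ring
  · simp only [logPrimeNorm_of_not_prime hπ, Complex.ofReal_zero, zero_mul, add_zero]

lemma primeSeries_eq (hχ : ∀ α, ‖χ α‖ ≤ 1) {G : ℂ → ℂ}
    (hG : ∀ s : ℂ, 1 < s.re → G s = lseries χ s) {s : ℂ} (hs : 1 < s.re) (hne : G s ≠ 0) :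
    primeSeries χ s = -2 * logDeriv G s - primePowerSeries χ s := by
  have hopen : IsOpen {s : ℂ | 1 < s.re} := isOpen_lt continuous_const Complex.continuous_re
  have hderiv : deriv G s = deriv (lseries χ) s :=
    EventuallyEq.deriv_eq (eventually_of_mem (hopen.mem_nhds hs) hG)
  rw [logDeriv_apply, ← mul_div_assoc, hderiv, neg_two_mul_deriv_lseries hχ hs, ← hG s hs,
    mul_div_cancel_left₀ _ hne, add_sub_cancel_right]

end LogDeriv

/-! ### Nonvanishing on the line `re s = 1` -/

section Nonvanishing

open Topology

lemma tendsto_sub_mul_logDeriv {G : ℂ → ℂ} {z₀ : ℂ} (hG : AnalyticAt ℂ G z₀)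
    (hne : analyticOrderAt G z₀ ≠ ⊤) :
    Tendsto (fun z => (z - z₀) * logDeriv G z) (𝓝[≠] z₀) (𝓝 (analyticOrderNatAt G z₀)) := by
  obtain ⟨g, hg, hg0, hGg⟩ := hG.analyticOrderAt_ne_top.mp hne
  set m := analyticOrderNatAt G z₀
  have hlogDeriv : ∀ᶠ z in 𝓝[≠] z₀,
      m + (z - z₀) * logDeriv g z = (z - z₀) * logDeriv G z := by
    filter_upwards [self_mem_nhdsWithin, nhdsWithin_le_nhds hGg.eventually_nhds,
      nhdsWithin_le_nhds hg.eventually_analyticAt,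
      nhdsWithin_le_nhds (hg.continuousAt.eventually_ne hg0)] with z hz hGz hgz hgz0
    have hz0 : z - z₀ ≠ 0 := sub_ne_zero.mpr hz
    have hpow : HasDerivAt (fun z => (z - z₀) ^ m) (m * (z - z₀) ^ (m - 1) * 1) z :=
      ((hasDerivAt_id' z).sub_const z₀).fun_pow m
    have hlogPow : (z - z₀) * logDeriv (fun z => (z - z₀) ^ m) z = m := by
      rw [logDeriv_apply, hpow.deriv]
      rcases m with _ | k
      · simp
      · rw [Nat.add_sub_cancel, pow_succ]
        field_simp
    have hfun : logDeriv G z = logDeriv (fun z => (z - z₀) ^ m * g z) z := by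
      rw [logDeriv_apply, logDeriv_apply, EventuallyEq.deriv_eq hGz, hGz.self_of_nhds]
      simp only [smul_eq_mul]
    rw [hfun, logDeriv_mul (f := fun z => (z - z₀) ^ m) z (pow_ne_zero m hz0) hgz0
      hpow.differentiableAt hgz.differentiableAt, mul_add, hlogPow]
  have hsub : Tendsto (fun z => z - z₀) (𝓝[≠] z₀) (𝓝 0) :=
    tendsto_sub_nhds_zero_iff.mpr (tendsto_id'.mpr nhdsWithin_le_nhds)
  have hg' : Tendsto (logDeriv g) (𝓝[≠] z₀) (𝓝 (logDeriv g z₀)) :=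
    (hg.deriv.continuousAt.div hg.continuousAt hg0).tendsto.mono_left nhdsWithin_le_nhds
  simpa using! ((hsub.mul hg').const_add (m : ℂ)).congr' hlogDeriv

/-- A completely multiplicative function bounded by one and invariant under units whose sums over
the translates of some segment vanish, so that its Dirichlet series continues analytically to the
left of the line `re s = 1`. -/
structure IsBalanced (χ : ZSqrtNegTwo →*₀ ℂ) : Prop where
  norm_le : ∀ α, ‖χ α‖ ≤ 1
  map_neg_one : χ (-1) = 1
  exists_sum_eq_zero : ∃ M : ℕ, 0 < M ∧ ∀ α, ∑ y ∈ Finset.range M, χ (α + ⟨0, y⟩) = 0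

variable {χ : ZSqrtNegTwo →*₀ ℂ}

lemma tendsto_term_natCast (α : ZSqrtNegTwo) : Tendsto (fun n : ℕ => term χ n α) atTop
    (𝓝 (if natNorm α = 1 then χ α else 0)) := by
  rcases eq_or_ne α 0 with rfl | hα
  · simp
  split_ifs with hn
  · simp [term, hn]
  · have hlt : 1 < natNorm α := by
      have := natNorm_pos hα
      lia
    have hpow : Tendsto (fun n : ℕ => χ α * ((natNorm α : ℂ)⁻¹) ^ n) atTop (𝓝 (χ α * 0)) := by
      refine (tendsto_pow_atTop_nhds_zero_of_norm_lt_one ?_).const_mul _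
      rw [norm_inv, Complex.norm_natCast]
      exact inv_lt_one_of_one_lt₀ (by exact_mod_cast hlt)
    rw [mul_zero] at hpow
    refine hpow.congr fun n => ?_
    rw [term, Complex.cpow_neg, Complex.cpow_natCast, inv_pow]

lemma tendsto_lseries_natCast (hχ : ∀ α, ‖χ α‖ ≤ 1) :
    Tendsto (fun n : ℕ => lseries χ n) atTop (𝓝 (1 + χ (-1))) := by
  have hlim : ∑' α, (if natNorm α = 1 then χ α else 0) = 1 + χ (-1) := by
    rw [tsum_eq_sum (s := {1, -1}) fun α hα => if_neg (by simpa [natNorm_eq_one_iff] using hα),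
      Finset.sum_pair (by decide)]
    simp
  rw [← hlim]
  refine tendsto_tsum_of_dominated_convergence (summable_natNorm_rpow one_lt_two)
    tendsto_term_natCast ?_
  filter_upwards [eventually_ge_atTop 2] with n hn α
  refine (norm_term_le hχ _ α).trans (natNorm_rpow_neg_le ?_ two_pos α)
  rw [Complex.natCast_re]
  exact_mod_cast hn

namespace IsBalanced

lemma exists_lseries_ne_zero (hχ : IsBalanced χ) : ∃ s : ℂ, 1 < s.re ∧ lseries χ s ≠ 0 := by
  have hlim := tendsto_lseries_natCast hχ.norm_le
  rw [hχ.map_neg_one, one_add_one_eq_two] at hlim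
  obtain ⟨n, hne, hn⟩ := ((hlim.eventually_ne two_ne_zero).and (eventually_ge_atTop 2)).exists
  exact ⟨n, by rw [Complex.natCast_re]; exact_mod_cast hn, hne⟩

lemma exists_analyticOnNhd_eq_lseries (hχ : IsBalanced χ) :
    ∃ G : ℂ → ℂ, AnalyticOnNhd ℂ G {s | 3 / 4 < s.re} ∧
      ∀ s : ℂ, 1 < s.re → G s = lseries χ s := by
  obtain ⟨M, hM, hsum⟩ := hχ.exists_sum_eq_zero
  obtain ⟨G, hG, hGL⟩ := exists_differentiableOn_eq_lseries hχ.norm_le hM hsum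
  exact ⟨G, hG.analyticOnNhd (isOpen_lt continuous_const Complex.continuous_re), hGL⟩

variable {G : ℂ → ℂ} (hG : AnalyticOnNhd ℂ G {s | 3 / 4 < s.re})
  (hGL : ∀ s : ℂ, 1 < s.re → G s = lseries χ s)

include hG hGL

lemma analyticOrderAt_ne_top (hχ : IsBalanced χ) {z : ℂ} (hz : 3 / 4 < z.re) :
    analyticOrderAt G z ≠ ⊤ := by
  obtain ⟨s, hs, hne⟩ := hχ.exists_lseries_ne_zero
  have hs' : 3 / 4 < s.re := by linarith
  refine hG.analyticOrderAt_ne_top_of_isPreconnected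
    (convex_halfSpace_re_gt _).isPreconnected hs' hz ?_
  rw [(hG s hs').analyticOrderAt_eq_zero.mpr (hGL s hs ▸ hne)]
  exact ENat.zero_ne_top

lemma tendsto_sub_mul_primeSeries (hχ : IsBalanced χ) {z₀ : ℂ} (hz₀ : z₀.re = 1) :
    Tendsto (fun z => (z - z₀) * primeSeries χ z) (𝓝[{z | 1 < z.re}] z₀)
      (𝓝 (-2 * analyticOrderNatAt G z₀)) := by
  have hz₀' : 3 / 4 < z₀.re := by norm_num [hz₀]
  have hle : 𝓝[{z : ℂ | 1 < z.re}] z₀ ≤ 𝓝[≠] z₀ :=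
    nhdsWithin_mono _ fun z (hz : 1 < z.re) h => hz.ne' (h ▸ hz₀)
  have horder := hχ.analyticOrderAt_ne_top hG hGL hz₀'
  have hpower : Tendsto (primePowerSeries χ) (𝓝[{z | 1 < z.re}] z₀)
      (𝓝 (primePowerSeries χ z₀)) :=
    (continuousOn_primePowerSeries hχ.norm_le z₀ hz₀.ge).tendsto.mono_left
      (nhdsWithin_mono _ fun z (hz : 1 < z.re) => hz.le)
  have hsub : Tendsto (fun z => z - z₀) (𝓝[{z | 1 < z.re}] z₀) (𝓝 0) :=
    tendsto_sub_nhds_zero_iff.mpr (tendsto_id'.mpr nhdsWithin_le_nhds)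
  have hlim := (((tendsto_sub_mul_logDeriv (hG z₀ hz₀') horder).mono_left hle).const_mul
    (-2)).sub (hsub.mul hpower)
  rw [zero_mul, sub_zero] at hlim
  have hne : ∀ᶠ z in 𝓝[≠] z₀, G z ≠ 0 :=
    (hG z₀ hz₀').eventually_eq_zero_or_eventually_ne_zero.resolve_left
      (mt analyticOrderAt_eq_top.mpr horder)
  refine hlim.congr' ?_
  filter_upwards [self_mem_nhdsWithin, hle hne] with z hz hGz
  rw [primeSeries_eq hχ.norm_le hGL hz hGz]
  ring

lemma tendsto_sub_one_mul_primeSeries (hχ : IsBalanced χ) (t : ℝ) :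
    Tendsto (fun σ : ℝ => ((σ : ℂ) - 1) * primeSeries χ (σ + t * Complex.I)) (𝓝[>] 1)
      (𝓝 (-2 * analyticOrderNatAt G (1 + t * Complex.I))) := by
  have hline : Tendsto (fun σ : ℝ => (σ : ℂ) + t * Complex.I) (𝓝[>] 1)
      (𝓝[{z | 1 < z.re}] (1 + t * Complex.I)) := by
    refine tendsto_nhdsWithin_of_tendsto_nhds_of_eventually_within _ ?_ ?_
    · have hcont : Continuous fun σ : ℝ => (σ : ℂ) + t * Complex.I := by fun_prop
      simpa using (hcont.tendsto 1).mono_left nhdsWithin_le_nhds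
    · filter_upwards [self_mem_nhdsWithin] with σ hσ
      simpa using hσ
  refine ((hχ.tendsto_sub_mul_primeSeries hG hGL (by simp)).comp hline).congr fun σ => ?_
  simp only [Function.comp, add_sub_add_right_eq_sub]

end IsBalanced

lemma three_four_one {z : ℂ} (hz : z = 0 ∨ ‖z‖ = 1) :
    0 ≤ 3 * ‖z‖ + 4 * z.re + (z ^ 2).re := by
  rcases hz with rfl | hz
  · simp
  · have hsq := Complex.sq_norm z
    rw [hz, Complex.normSq_apply] at hsq
    rw [hz, sq, Complex.mul_re]
    nlinarith [sq_nonneg (z.re + 1)]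

section ThreeFourOne

variable {χ₀ χ₂ : ZSqrtNegTwo →*₀ ℂ} (hχ : ∀ α, χ α = 0 ∨ ‖χ α‖ = 1)
  (hχ₀ : ∀ α, χ₀ α = ‖χ α‖) (hχ₂ : ∀ α, χ₂ α = χ α ^ 2)

include hχ hχ₀ hχ₂

lemma re_term_three_four_one_nonneg (σ t : ℝ) (α : ZSqrtNegTwo) :
    0 ≤ (3 * term χ₀ σ α + 4 * term χ (σ + t * Complex.I) α +
      term χ₂ (σ + (2 * t : ℝ) * Complex.I) α).re := by
  rcases eq_or_ne α 0 with rfl | hα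
  · simp
  have hne : (natNorm α : ℂ) ≠ 0 := by exact_mod_cast (natNorm_pos hα).ne'
  set w : ℂ := (natNorm α : ℂ) ^ (-(t * Complex.I)) with hw
  have hwnorm : ‖w‖ = 1 := by
    rw [hw, Complex.norm_natCast_cpow_of_pos (natNorm_pos hα)]
    simp
  have hnorm : ‖χ α * w‖ = ‖χ α‖ := by rw [norm_mul, hwnorm, mul_one]
  have hpow : (natNorm α : ℂ) ^ (-(σ : ℂ)) = (((natNorm α : ℝ) ^ (-σ) : ℝ) : ℂ) := by
    rw [Complex.ofReal_cpow (by positivity)]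
    push_cast
    rfl
  have hpow₂ : (natNorm α : ℂ) ^ (-((2 * t : ℝ) * Complex.I)) = w ^ 2 := by
    rw [hw, ← Complex.cpow_nat_mul]
    push_cast
    ring_nf
  have hfactor : 3 * term χ₀ σ α + 4 * term χ (σ + t * Complex.I) α +
      term χ₂ (σ + (2 * t : ℝ) * Complex.I) α =
      (((natNorm α : ℝ) ^ (-σ) : ℝ) : ℂ) *
        (3 * (‖χ α * w‖ : ℝ) + 4 * (χ α * w) + (χ α * w) ^ 2) := by
    rw [term, term, term, neg_add, neg_add, Complex.cpow_add _ _ hne, Complex.cpow_add _ _ hne,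
      hpow, hpow₂, hχ₀, hχ₂, hnorm]
    ring
  rw [hfactor, Complex.re_ofReal_mul]
  refine mul_nonneg (by positivity) ?_
  have hzero : χ α * w = 0 ∨ ‖χ α * w‖ = 1 :=
    (hχ α).imp (fun h => by rw [h, zero_mul]) fun h => by rw [hnorm, h]
  simpa using three_four_one hzero

lemma re_primeSeries_three_four_one_nonneg {σ : ℝ} (hσ : 1 < σ) (t : ℝ) :
    0 ≤ (3 * primeSeries χ₀ σ + 4 * primeSeries χ (σ + t * Complex.I) +
      primeSeries χ₂ (σ + (2 * t : ℝ) * Complex.I)).re := by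
  have hle (α : ZSqrtNegTwo) : ‖χ α‖ ≤ 1 := by
    rcases hχ α with h | h <;> simp [h]
  have hle₀ (α : ZSqrtNegTwo) : ‖χ₀ α‖ ≤ 1 := by simpa [hχ₀] using hle α
  have hle₂ (α : ZSqrtNegTwo) : ‖χ₂ α‖ ≤ 1 := by
    rw [hχ₂, norm_pow]
    exact pow_le_one₀ (norm_nonneg _) (hle α)
  have hsum := (((hasSum_primeSeries hle₀ (s := σ) (by simpa using hσ)).mul_left 3).add
    ((hasSum_primeSeries hle (s := σ + t * Complex.I) (by simpa using hσ)).mul_left 4)).add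
    (hasSum_primeSeries hle₂ (s := σ + (2 * t : ℝ) * Complex.I) (by simpa using hσ))
  refine (Complex.hasSum_re hsum).nonneg fun π => ?_
  have hfactor := mul_nonneg (logPrimeNorm_nonneg π)
    (re_term_three_four_one_nonneg hχ hχ₀ hχ₂ σ t π)
  rw [← Complex.re_ofReal_mul] at hfactor
  refine hfactor.trans_eq (congrArg Complex.re ?_)
  ring

-- A zero of order `m ≥ 1` would force `3 * 2 - 4 * (2 * m) ≥ 0`.
lemma apply_ne_zero_of_re_eq_one (hbal : IsBalanced χ) (hbal₂ : IsBalanced χ₂)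
    (hpole : Tendsto (fun σ : ℝ => ((σ : ℂ) - 1) * primeSeries χ₀ σ) (𝓝[>] 1) (𝓝 2))
    {G : ℂ → ℂ} (hG : AnalyticOnNhd ℂ G {s | 3 / 4 < s.re})
    (hGL : ∀ s : ℂ, 1 < s.re → G s = lseries χ s) {z : ℂ} (hz : z.re = 1) : G z ≠ 0 := by
  obtain ⟨G₂, hG₂, hGL₂⟩ := hbal₂.exists_analyticOnNhd_eq_lseries
  obtain ⟨t, rfl⟩ : ∃ t : ℝ, z = 1 + t * Complex.I :=
    ⟨z.im, by rw [← Complex.ofReal_one, ← hz, Complex.re_add_im]⟩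
  set m := analyticOrderNatAt G (1 + t * Complex.I)
  set m₂ := analyticOrderNatAt G₂ (1 + (2 * t : ℝ) * Complex.I)
  have hz' : (3 / 4 : ℝ) < (1 + t * Complex.I).re := by norm_num [hz]
  have hlim := (Complex.continuous_re.tendsto _).comp (((hpole.const_mul 3).add
    ((hbal.tendsto_sub_one_mul_primeSeries hG hGL t).const_mul 4)).add
    (hbal₂.tendsto_sub_one_mul_primeSeries hG₂ hGL₂ (2 * t)))
  have hnonneg : 0 ≤ (3 * 2 + 4 * (-2 * (m : ℂ)) + -2 * (m₂ : ℂ)).re := by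
    refine ge_of_tendsto hlim ?_
    filter_upwards [self_mem_nhdsWithin] with σ hσ
    have hprod := mul_nonneg (sub_nonneg.mpr (le_of_lt hσ))
      (re_primeSeries_three_four_one_nonneg hχ hχ₀ hχ₂ hσ t)
    rw [← Complex.re_ofReal_mul] at hprod
    refine hprod.trans_eq (congrArg Complex.re ?_)
    push_cast
    ring
  have hreal : (3 * 2 + 4 * (-2 * (m : ℂ)) + -2 * (m₂ : ℂ)).re = 6 - 8 * m - 2 * m₂ := by
    simp
    ring
  have hm : 8 * m + 2 * m₂ ≤ 6 := by
    rw [hreal] at hnonneg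
    exact_mod_cast (by linarith : (8 : ℝ) * m + 2 * m₂ ≤ 6)
  refine (hG _ hz').analyticOrderAt_eq_zero.mp ?_
  rw [← Nat.cast_analyticOrderNatAt (hbal.analyticOrderAt_ne_top hG hGL hz')]
  exact_mod_cast (show m = 0 by lia)

lemma hasBoundaryLimits_primeSeries (hbal : IsBalanced χ) (hbal₂ : IsBalanced χ₂)
    (hpole : Tendsto (fun σ : ℝ => ((σ : ℂ) - 1) * primeSeries χ₀ σ) (𝓝[>] 1) (𝓝 2)) :
    HasBoundaryLimits (primeSeries χ) := by
  obtain ⟨G, hG, hGL⟩ := hbal.exists_analyticOnNhd_eq_lseries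
  intro z hz
  rcases hz.eq_or_lt with hz1 | hz1
  · have hGz := apply_ne_zero_of_re_eq_one hχ hχ₀ hχ₂ hbal hbal₂ hpole hG hGL hz1.symm
    have hGan := hG z (show 3 / 4 < z.re by linarith)
    have hlogDeriv : Tendsto (logDeriv G) (𝓝[{z | 1 < z.re}] z) (𝓝 (logDeriv G z)) :=
      (hGan.deriv.continuousAt.div hGan.continuousAt hGz).tendsto.mono_left nhdsWithin_le_nhds
    have hpower : Tendsto (primePowerSeries χ) (𝓝[{z | 1 < z.re}] z)
        (𝓝 (primePowerSeries χ z)) :=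
      (continuousOn_primePowerSeries hbal.norm_le z hz).tendsto.mono_left
        (nhdsWithin_mono _ fun w (hw : 1 < w.re) => hw.le)
    refine ⟨_, ((hlogDeriv.const_mul (-2)).sub hpower).congr' ?_⟩
    filter_upwards [self_mem_nhdsWithin,
      nhdsWithin_le_nhds (hGan.continuousAt.eventually_ne hGz)] with w hw hGw
    exact (primeSeries_eq hbal.norm_le hGL hw hGw).symm
  · exact ⟨_, (continuousOn_primeSeries hbal.norm_le z hz1).tendsto⟩

end ThreeFourOne

end Nonvanishing

end ZSqrtNegTwo

/-! ### Characters of slopes -/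

/-- The slopes `im α / re α` modulo `2 ^ k` of the elements `α` of `ℤ[√-2]` of odd norm; they form a
group under the addition law `(a, b) ↦ (a + b) / (1 - 2 a b)`. -/
def Slope (k : ℕ) : Type := ZMod (2 ^ k)

namespace Slope

variable {k : ℕ}

lemma isUnit_one_sub_two_mul (x : ZMod (2 ^ k)) : IsUnit (1 - 2 * x) := by
  refine IsNilpotent.isUnit_one_sub ⟨k, ?_⟩
  have hzero : (2 : ZMod (2 ^ k)) ^ k = 0 := by exact_mod_cast ZMod.natCast_self (2 ^ k)
  rw [mul_pow, hzero, zero_mul]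

lemma isUnit_intCast {a : ℤ} (ha : Odd a) : IsUnit (a : ZMod (2 ^ k)) := by
  obtain ⟨m, rfl⟩ := ha
  have hunit := isUnit_one_sub_two_mul (k := k) (-m : ZMod (2 ^ k))
  rwa [mul_neg, sub_neg_eq_add, add_comm, ← Int.cast_ofNat, ← Int.cast_mul, ← Int.cast_one,
    ← Int.cast_add] at hunit

instance : Fintype (Slope k) := inferInstanceAs (Fintype (ZMod (2 ^ k)))

instance : DecidableEq (Slope k) := inferInstanceAs (DecidableEq (ZMod (2 ^ k)))

instance : Zero (Slope k) := ⟨(0 : ZMod (2 ^ k))⟩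

instance : Neg (Slope k) := ⟨fun a : ZMod (2 ^ k) => (-a : ZMod (2 ^ k))⟩

instance : Add (Slope k) :=
  ⟨fun a b : ZMod (2 ^ k) => ((a + b) * (1 - 2 * (a * b))⁻¹ : ZMod (2 ^ k))⟩

/-- A residue class modulo `2 ^ k`, as a slope. -/
def of (a : ZMod (2 ^ k)) : Slope k := a

lemma of_add_of (a b : ZMod (2 ^ k)) : of a + of b = of ((a + b) * (1 - 2 * (a * b))⁻¹) := rfl

lemma neg_of (a : ZMod (2 ^ k)) : -of a = of (-a) := rfl

lemma of_zero : of (0 : ZMod (2 ^ k)) = 0 := rfl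

lemma of_injective : Function.Injective (of : ZMod (2 ^ k) → Slope k) := fun _ _ h => h

lemma of_surjective : Function.Surjective (of : ZMod (2 ^ k) → Slope k) := fun a => ⟨a, rfl⟩

lemma of_add_of_eq {a b c : ZMod (2 ^ k)} (h : c * (1 - 2 * (a * b)) = a + b) :
    of a + of b = of c := by
  rw [of_add_of, ← h, mul_assoc, ZMod.mul_inv_of_unit _ (isUnit_one_sub_two_mul _), mul_one]

lemma exists_of_add_of (a b : ZMod (2 ^ k)) :
    ∃ c, of a + of b = of c ∧ c * (1 - 2 * (a * b)) = a + b :=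
  ⟨(a + b) * (1 - 2 * (a * b))⁻¹, rfl, by
    rw [mul_assoc, ZMod.inv_mul_of_unit _ (isUnit_one_sub_two_mul _), mul_one]⟩

instance : AddCommGroup (Slope k) where
  add_assoc a b c := by
    obtain ⟨a, rfl⟩ := of_surjective a
    obtain ⟨b, rfl⟩ := of_surjective b
    obtain ⟨c, rfl⟩ := of_surjective c
    obtain ⟨u, hu, hu'⟩ := exists_of_add_of a b
    obtain ⟨v, hv, hv'⟩ := exists_of_add_of b c
    obtain ⟨w, hw, hw'⟩ := exists_of_add_of u c
    rw [hu, hv, hw]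
    symm
    refine of_add_of_eq ((isUnit_one_sub_two_mul (b * c)).mul_left_injective ?_)
    have hsymm : w * (1 - 2 * (a * b + b * c + a * c)) = a + b + c - 2 * (a * b * c) := by
      linear_combination (1 - 2 * (a * b)) * hw' + (2 * w * c + 1) * hu'
    change w * (1 - 2 * (a * v)) * (1 - 2 * (b * c)) = (a + v) * (1 - 2 * (b * c))
    linear_combination hsymm - (2 * w * a + 1) * hv'
  zero_add a := by
    obtain ⟨a, rfl⟩ := of_surjective a
    rw [← of_zero]
    exact of_add_of_eq (by ring)
  add_zero a := by
    obtain ⟨a, rfl⟩ := of_surjective a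
    rw [← of_zero]
    exact of_add_of_eq (by ring)
  neg_add_cancel a := by
    obtain ⟨a, rfl⟩ := of_surjective a
    rw [neg_of, ← of_zero]
    exact of_add_of_eq (by ring)
  add_comm a b := by
    obtain ⟨a, rfl⟩ := of_surjective a
    obtain ⟨b, rfl⟩ := of_surjective b
    rw [of_add_of, of_add_of, add_comm a b, mul_comm a b]
  nsmul := nsmulRec
  zsmul := zsmulRec

lemma exists_add_self_eq (u : ZMod (2 ^ k)) : ∃ x : Slope k, x + x = of (2 * u) := by
  have hinj : Function.Injective fun x : ZMod (2 ^ k) => x + 2 * u * x ^ 2 := by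
    intro x y hxy
    have hfactor : (x - y) * (1 - 2 * (-u * (x + y))) = 0 := by
      dsimp only at hxy
      linear_combination hxy
    exact sub_eq_zero.mp ((isUnit_one_sub_two_mul _).mul_left_eq_zero.mp hfactor)
  obtain ⟨x, hx⟩ := Finite.surjective_of_injective hinj u
  dsimp only at hx
  exact ⟨of x, of_add_of_eq (by linear_combination -2 * hx)⟩

end Slope

namespace ZSqrtNegTwo

open Slope

section Characters

variable {k : ℕ}

/-- The slope `im α / re α` modulo `2 ^ k` of an element `α` with odd real part. -/
def slope (k : ℕ) (α : ZSqrtNegTwo) : Slope k :=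
  of ((α.im : ZMod (2 ^ k)) * (α.re : ZMod (2 ^ k))⁻¹)

lemma slope_eq_of_iff {α : ZSqrtNegTwo} (hα : Odd α.re) {t : ZMod (2 ^ k)} :
    slope k α = of t ↔ (α.im : ZMod (2 ^ k)) = α.re * t := by
  have hu := isUnit_intCast (k := k) hα
  rw [slope, of_injective.eq_iff]
  constructor
  · rintro rfl
    rw [mul_left_comm, ZMod.mul_inv_of_unit _ hu, mul_one]
  · intro h
    rw [h, mul_right_comm, ZMod.mul_inv_of_unit _ hu, one_mul]

lemma odd_re_mul_iff {α β : ZSqrtNegTwo} : Odd (α * β).re ↔ Odd α.re ∧ Odd β.re := by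
  rw [Zsqrtd.re_mul, show α.re * β.re + -2 * α.im * β.im = α.re * β.re - 2 * (α.im * β.im) by ring,
    Int.odd_sub, Int.odd_mul]
  simp

lemma slope_mul {α β : ZSqrtNegTwo} (hα : Odd α.re) (hβ : Odd β.re) :
    slope k (α * β) = slope k α + slope k β := by
  obtain ⟨a, ha⟩ := of_surjective (slope k α)
  obtain ⟨b, hb⟩ := of_surjective (slope k β)
  obtain ⟨c, hc, hc'⟩ := exists_of_add_of a b
  rw [← ha, ← hb, hc, slope_eq_of_iff (odd_re_mul_iff.mpr ⟨hα, hβ⟩)]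
  rw [eq_comm, slope_eq_of_iff hα] at ha
  rw [eq_comm, slope_eq_of_iff hβ] at hb
  rw [Zsqrtd.re_mul, Zsqrtd.im_mul]
  push_cast
  rw [ha, hb]
  linear_combination -(α.re * β.re : ZMod (2 ^ k)) * hc'

lemma slope_neg {α : ZSqrtNegTwo} (hα : Odd α.re) : slope k (-α) = slope k α := by
  obtain ⟨a, ha⟩ := of_surjective (slope k α)
  have h : Odd (-α).re := by simpa using hα
  rw [← ha, slope_eq_of_iff h]
  rw [eq_comm, slope_eq_of_iff hα] at ha
  simp [ha]

lemma slope_star {α : ZSqrtNegTwo} (hα : Odd α.re) : slope k (star α) = -slope k α := by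
  obtain ⟨a, ha⟩ := of_surjective (slope k α)
  have h : Odd (star α).re := by simpa using hα
  rw [← ha, neg_of, slope_eq_of_iff h]
  rw [eq_comm, slope_eq_of_iff hα] at ha
  simp [ha]

lemma slope_one : slope k 1 = 0 := by
  rw [← of_zero, slope_eq_of_iff (by simp)]
  simp

lemma slope_surjective (t : Slope k) : ∃ α : ZSqrtNegTwo, Odd α.re ∧ slope k α = t := by
  obtain ⟨t, rfl⟩ := of_surjective t
  refine ⟨⟨1, t.val⟩, odd_one, ?_⟩
  rw [slope_eq_of_iff odd_one]
  simp

/-- The character of `ℤ[√-2]` attached to a character of the group of slopes. -/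
noncomputable def char (ψ : AddChar (Slope k) ℂ) : ZSqrtNegTwo →*₀ ℂ where
  toFun α := if Odd α.re then ψ (slope k α) else 0
  map_zero' := by simp
  map_one' := by simp [slope_one]
  map_mul' α β := by
    by_cases hα : Odd α.re
    · by_cases hβ : Odd β.re
      · rw [if_pos hα, if_pos hβ, if_pos (odd_re_mul_iff.mpr ⟨hα, hβ⟩), slope_mul hα hβ,
          AddChar.map_add_eq_mul]
      · rw [if_neg hβ, if_neg fun h => hβ (odd_re_mul_iff.mp h).2, mul_zero]
    · rw [if_neg hα, if_neg fun h => hα (odd_re_mul_iff.mp h).1, zero_mul]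

variable (ψ : AddChar (Slope k) ℂ)

lemma char_of_odd {α : ZSqrtNegTwo} (hα : Odd α.re) : char ψ α = ψ (slope k α) := if_pos hα

lemma char_of_not_odd {α : ZSqrtNegTwo} (hα : ¬ Odd α.re) : char ψ α = 0 := if_neg hα

lemma norm_char_of_odd {α : ZSqrtNegTwo} (hα : Odd α.re) : ‖char ψ α‖ = 1 := by
  rw [char_of_odd ψ hα, AddChar.norm_apply]

lemma norm_char_le (α : ZSqrtNegTwo) : ‖char ψ α‖ ≤ 1 := by
  by_cases hα : Odd α.re
  · exact (norm_char_of_odd ψ hα).le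
  · rw [char_of_not_odd ψ hα, norm_zero]; exact zero_le_one

lemma char_neg (α : ZSqrtNegTwo) : char ψ (-α) = char ψ α := by
  by_cases hα : Odd α.re
  · rw [char_of_odd ψ hα, char_of_odd ψ (by simpa using hα), slope_neg hα]
  · rw [char_of_not_odd ψ hα, char_of_not_odd ψ (by simpa using hα)]

variable {ψ}

lemma bijOn_slope_add {α : ZSqrtNegTwo} (hα : Odd α.re) :
    Set.BijOn (fun y : ℕ => slope k (α + ⟨0, y⟩)) (Finset.range (2 ^ k)) Set.univ := by
  have hodd (y : ℕ) : Odd (α + ⟨0, y⟩ : ZSqrtNegTwo).re := by simpa using hα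
  have hslope (y : ℕ) (t : ZMod (2 ^ k)) :
      slope k (α + ⟨0, y⟩) = of t ↔ (y : ZMod (2 ^ k)) = α.re * t - α.im := by
    rw [slope_eq_of_iff (hodd y), eq_sub_iff_add_eq']
    simp
  refine ⟨Set.mapsTo_univ _ _, fun y hy y' hy' heq => ?_, fun t _ => ?_⟩
  · obtain ⟨t, ht⟩ := of_surjective (slope k (α + ⟨0, y⟩))
    have hcast : (y : ZMod (2 ^ k)) = y' :=
      ((hslope y t).mp ht.symm).trans ((hslope y' t).mp (heq.symm.trans ht.symm)).symm
    rwa [ZMod.natCast_eq_natCast_iff', Nat.mod_eq_of_lt (Finset.mem_range.mp hy),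
      Nat.mod_eq_of_lt (Finset.mem_range.mp hy')] at hcast
  · obtain ⟨t, rfl⟩ := of_surjective t
    exact ⟨(α.re * t - α.im : ZMod (2 ^ k)).val, Finset.mem_coe.mpr
      (Finset.mem_range.mpr (ZMod.val_lt _)), (hslope _ t).mpr (ZMod.natCast_zmod_val _)⟩

lemma isBalanced_char (hψ : ψ ≠ 1) : IsBalanced (char ψ) where
  norm_le := norm_char_le ψ
  map_neg_one := by rw [char_neg, map_one]
  exists_sum_eq_zero := by
    refine ⟨2 ^ k, by positivity, fun α => ?_⟩
    by_cases hα : Odd α.re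
    · obtain ⟨-, hinj, hsurj⟩ := bijOn_slope_add (k := k) hα
      rw [← AddChar.sum_eq_zero_of_ne_one hψ]
      exact Finset.sum_bij (fun y _ => slope k (α + ⟨0, y⟩)) (fun _ _ => Finset.mem_univ _)
        (fun y hy y' hy' heq => hinj hy hy' heq)
        (fun t _ => by simpa [exists_prop] using hsurj (Set.mem_univ t))
        fun y _ => char_of_odd ψ (by simpa using hα)
    · exact Finset.sum_eq_zero fun y _ => char_of_not_odd ψ (by simpa using hα)

section OrderTwo

variable (hψ : ψ * ψ = 1)

include hψ

lemma char_mul_self_of_odd {α : ZSqrtNegTwo} (hα : Odd α.re) : char ψ α * char ψ α = 1 := by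
  rw [char_of_odd ψ hα, ← AddChar.mul_apply, hψ, AddChar.one_apply]

lemma char_eq_one_of_even_im {α : ZSqrtNegTwo} (hα : Odd α.re) (him : Even α.im) :
    char ψ α = 1 := by
  obtain ⟨m, hm⟩ := him.two_dvd
  obtain ⟨x, hx⟩ := exists_add_self_eq ((m : ZMod (2 ^ k)) * (α.re : ZMod (2 ^ k))⁻¹)
  have hdouble : slope k α = x + x := by
    rw [hx, slope, hm]
    push_cast
    rw [mul_assoc]
  rw [char_of_odd ψ hα, hdouble, AddChar.map_add_eq_mul, ← AddChar.mul_apply, hψ,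
    AddChar.one_apply]

lemma exists_char_eq_of_sq : ∃ ε : ℂ, (ε = 1 ∨ ε = -1) ∧ (ε = 1 → ψ = 1) ∧
    ∀ α : ZSqrtNegTwo, Odd α.re → char ψ α = if Even α.im then 1 else ε := by
  have hone : Odd (⟨1, -1⟩ : ZSqrtNegTwo).re := odd_one
  have hsq := char_mul_self_of_odd hψ hone
  set ε := char ψ ⟨1, -1⟩
  have hchar (α : ZSqrtNegTwo) (hα : Odd α.re) : char ψ α = if Even α.im then 1 else ε := by
    split_ifs with him
    · exact char_eq_one_of_even_im hψ hα him
    · have hmul : char ψ (α * ⟨1, -1⟩) = 1 := by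
        refine char_eq_one_of_even_im hψ (odd_re_mul_iff.mpr ⟨hα, hone⟩) ?_
        rw [Zsqrtd.im_mul, mul_neg_one, mul_one]
        exact hα.neg.add_odd (Int.not_even_iff_odd.mp him)
      rw [map_mul] at hmul
      linear_combination ε * hmul - char ψ α * hsq
  refine ⟨ε, mul_self_eq_one_iff.mp hsq, fun hε => ?_, hchar⟩
  ext t
  obtain ⟨α, hα, rfl⟩ := slope_surjective t
  rw [← char_of_odd ψ hα, hchar α hα, hε, ite_self, AddChar.one_apply]

end OrderTwo

end Characters

open Topology

/-! ### Reduction to rational primes -/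

section RationalPrimes

variable {χ : ZSqrtNegTwo →*₀ ℂ}

variable (χ) in
/-- The sum of `χ` over the elements of norm `n`, that is, the `n`-th coefficient of the Dirichlet
series of `χ`. -/
noncomputable def normSum (n : ℕ) : ℂ := ∑' α : natNorm ⁻¹' {n}, χ α

variable (χ) in
/-- The contribution to `primeSeries χ` of the primes whose norm is not a rational prime. -/
noncomputable def inertSeries (s : ℂ) : ℂ :=
  ∑' π, if (natNorm π).Prime then 0 else (logPrimeNorm π : ℂ) * term χ s π

lemma log_sq_mul_sq_rpow_neg_one_le {x : ℝ} (hx : 0 ≤ x) :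
    Real.log (x ^ 2) * (x ^ 2) ^ (-1 : ℝ) ≤ 4 * x ^ (-(3 / 2) : ℝ) := by
  rcases hx.eq_or_lt with rfl | hx
  · norm_num
  have hlog := Real.log_le_rpow_div (x := x ^ 2) (ε := 1 / 4) (by positivity) (by norm_num)
  have hpow (t : ℝ) : (x ^ 2) ^ t = x ^ (2 * t) := by
    rw [Real.rpow_mul hx.le, Real.rpow_two]
  calc Real.log (x ^ 2) * (x ^ 2) ^ (-1 : ℝ)
      ≤ (x ^ 2) ^ (1 / 4 : ℝ) / (1 / 4) * (x ^ 2) ^ (-1 : ℝ) := by gcongr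
    _ = 4 * (x ^ (2 * (1 / 4) : ℝ) * x ^ (2 * -1 : ℝ)) := by rw [hpow, hpow]; ring
    _ = 4 * x ^ (-(3 / 2) : ℝ) := by rw [← Real.rpow_add hx]; norm_num

lemma summable_log_natNorm_mul_rpow_of_im_eq_zero :
    Summable ({π : ZSqrtNegTwo | π.im = 0}.indicator fun π =>
      Real.log (natNorm π) * (natNorm π : ℝ) ^ (-1 : ℝ)) := by
  have hinj : Function.Injective ((↑) : ℤ → ZSqrtNegTwo) := Int.cast_injective
  refine (hinj.summable_iff fun π hπ => Set.indicator_of_notMem (fun him => hπ ⟨π.re, ?_⟩) _).mp ?_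
  · ext
    · simp
    · simpa using Eq.symm him
  · refine .of_nonneg_of_le (fun a => ?_) (fun a => ?_)
      ((Real.summable_abs_int_rpow (b := 3 / 2) (by norm_num)).mul_left 4)
    · rw [Function.comp_apply, Set.indicator_of_mem (by simp)]
      exact mul_nonneg (Real.log_natCast_nonneg _) (by positivity)
    · have hnorm : (natNorm (a : ZSqrtNegTwo) : ℝ) = |(a : ℝ)| ^ 2 := by
        rw [realCast_natNorm]
        simp
      rw [Function.comp_apply, Set.indicator_of_mem (by simp), hnorm]
      exact log_sq_mul_sq_rpow_neg_one_le (abs_nonneg _)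

lemma hasBoundaryLimits_inertSeries (hχ : ∀ α, ‖χ α‖ ≤ 1) :
    HasBoundaryLimits (inertSeries χ) := by
  refine .of_continuousOn (continuousOn_tsum (fun π => ?_)
    summable_log_natNorm_mul_rpow_of_im_eq_zero fun π s hs => ?_)
  · split_ifs
    · exact continuousOn_const
    · exact (continuous_const.mul (continuous_term π)).continuousOn
  · have hnonneg (α : ZSqrtNegTwo) : 0 ≤ Real.log (natNorm α) * (natNorm α : ℝ) ^ (-1 : ℝ) :=
      mul_nonneg (Real.log_natCast_nonneg _) (by positivity)
    by_cases hnorm : (natNorm π).Prime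
    · rw [if_pos hnorm, norm_zero]
      exact Set.indicator_nonneg (fun α _ => hnonneg α) π
    rw [if_neg hnorm]
    by_cases hπ : Prime π
    · rw [Set.indicator_of_mem (by exact im_eq_zero_of_prime hπ hnorm)]
      exact (norm_logPrimeNorm_mul_term_le hχ s π).trans (mul_le_mul_of_nonneg_left
        (natNorm_rpow_neg_le hs one_pos π) (Real.log_natCast_nonneg _))
    · rw [logPrimeNorm_of_not_prime hπ, Complex.ofReal_zero, zero_mul, norm_zero]
      exact Set.indicator_nonneg (fun α _ => hnonneg α) π

lemma hasSum_inertSeries (hχ : ∀ α, ‖χ α‖ ≤ 1) {s : ℂ} (hs : 1 < s.re) :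
    HasSum (fun π => if (natNorm π).Prime then 0 else (logPrimeNorm π : ℂ) * term χ s π)
      (inertSeries χ s) := by
  refine Summable.hasSum ((hasSum_primeSeries hχ hs).summable.norm.of_norm_bounded fun π => ?_)
  split_ifs
  · simpa only [norm_zero] using norm_nonneg _
  · rfl

lemma LSeriesHasSum_normSum (hχ : ∀ α, ‖χ α‖ ≤ 1) {s : ℂ} (hs : 1 < s.re) :
    LSeriesHasSum (fun n => (primeLog Set.univ n : ℂ) * normSum χ n) s
      (primeSeries χ s - inertSeries χ s) := by
  refine (((hasSum_primeSeries hχ hs).sub (hasSum_inertSeries hχ hs)).tsum_fiberwise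
    natNorm).congr_fun fun n => ?_
  by_cases hn : n.Prime
  · rw [LSeries.term_of_ne_zero hn.ne_zero, normSum, mul_div_right_comm, ← tsum_mul_left]
    refine tsum_congr fun ⟨α, hα⟩ => ?_
    obtain rfl : natNorm α = n := hα
    rw [if_pos hn, sub_zero, logPrimeNorm_of_prime (prime_of_natNorm_prime hn), term,
      Complex.cpow_neg, primeLog_of_mem hn (Set.mem_univ _)]
    ring
  · have hvanish (α : natNorm ⁻¹' {n}) : ((logPrimeNorm α : ℂ) * term χ s α -
        if (natNorm α).Prime then 0 else (logPrimeNorm α : ℂ) * term χ s α) = 0 := by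
      obtain ⟨α, rfl⟩ := α
      rw [if_neg hn, sub_self]
    simp [tsum_congr hvanish, LSeries.term_def, primeLog_of_not_prime hn]

lemma normSum_eq_zero {n : ℕ} (h : ∀ α, natNorm α = n → χ α = 0) : normSum χ n = 0 := by
  have hzero (α : natNorm ⁻¹' {n}) : χ α = 0 := h α α.2
  rw [normSum, tsum_congr hzero, tsum_zero]

lemma normSum_natNorm {α : ZSqrtNegTwo} (hα : (natNorm α).Prime) (hodd : Odd (natNorm α))
    (hneg : ∀ β, χ (-β) = χ β) : normSum χ (natNorm α) = 2 * (χ α + χ (star α)) := by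
  have hfiber : natNorm ⁻¹' {natNorm α} =
      (({α, -α, star α, -star α} : Finset ZSqrtNegTwo) : Set ZSqrtNegTwo) := setOf_natNorm_eq hα
  have hstar : star α ≠ -star α := fun h => ne_neg_self_of_odd_natNorm hodd (by
    simpa using congrArg star h)
  have hneg_star : -α ≠ star α := fun h => ne_neg_star_self_of_odd_natNorm hodd (by
    rw [← h, neg_neg])
  rw [normSum, hfiber, Finset.tsum_subtype', Finset.sum_insert, Finset.sum_insert,
    Finset.sum_insert, Finset.sum_singleton, hneg, hneg]
  · ring
  · simpa using hstar
  · simpa [hneg_star] using ne_star_self_of_natNorm_prime hα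
  · simp [ne_neg_self_of_odd_natNorm hodd, ne_star_self_of_natNorm_prime hα,
      ne_neg_star_self_of_odd_natNorm hodd]

end RationalPrimes

/-! ### The prime series of a character -/

section CharacterSeries

variable {k : ℕ} {ψ : AddChar (Slope k) ℂ}

lemma normSum_char_two : normSum (char ψ) 2 = 0 :=
  normSum_eq_zero fun α hα => char_of_not_odd ψ fun hre => by
    simpa [hα] using Nat.not_even_iff_odd.mpr (odd_natNorm_iff.mpr hre)

lemma primeLog_mul_normSum_char {ε : ℂ}
    (hε : ∀ α : ZSqrtNegTwo, Odd α.re → char ψ α = if Even α.im then 1 else ε) (p : ℕ) :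
    (primeLog Set.univ p : ℂ) * normSum (char ψ) p =
      4 * (primeLog {n | (n : ZMod 8) = 1} p : ℂ) +
        4 * ε * (primeLog {n | (n : ZMod 8) = 3} p : ℂ) := by
  by_cases hp : p.Prime
  swap
  · simp [primeLog_of_not_prime hp]
  have hmem (a : ℕ) : p ∈ {n : ℕ | (n : ZMod 8) = a} ↔ p % 8 = a % 8 :=
    ZMod.natCast_eq_natCast_iff' p a 8
  have hmem₁ : p ∈ {n : ℕ | (n : ZMod 8) = 1} ↔ p % 8 = 1 := by simpa using hmem 1
  have hmem₃ : p ∈ {n : ℕ | (n : ZMod 8) = 3} ↔ p % 8 = 3 := by simpa using hmem 3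
  rw [primeLog_of_mem hp (Set.mem_univ p)]
  by_cases hrep : ∃ α, natNorm α = p
  · obtain ⟨α, rfl⟩ := hrep
    rcases hp.eq_two_or_odd' with htwo | hodd
    · rw [primeLog_of_notMem (hmem₁.not.mpr (by simp [htwo])),
        primeLog_of_notMem (hmem₃.not.mpr (by simp [htwo])), htwo, normSum_char_two]
      simp
    · have hα := odd_natNorm_iff.mp hodd
      rw [normSum_natNorm hp hodd (char_neg ψ), hε α hα, hε (star α) (by simpa using hα)]
      simp only [Zsqrtd.im_star, even_neg]
      rcases natNorm_mod_eight hodd with ⟨him, hmod⟩ | ⟨him, hmod⟩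
      · rw [if_pos him, primeLog_of_mem hp (hmem₁.mpr hmod),
          primeLog_of_notMem (hmem₃.not.mpr (by simp [hmod]))]
        push_cast
        ring
      · rw [if_neg (Int.not_even_iff_odd.mpr him), primeLog_of_mem hp (hmem₃.mpr hmod),
          primeLog_of_notMem (hmem₁.not.mpr (by simp [hmod]))]
        push_cast
        ring
  · rw [normSum_eq_zero fun α hα => absurd ⟨α, hα⟩ hrep,
      primeLog_of_notMem fun h => hrep (exists_natNorm_eq hp (.inl (hmem₁.mp h))),
      primeLog_of_notMem fun h => hrep (exists_natNorm_eq hp (.inr (hmem₃.mp h)))]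
    simp

lemma primeSeries_char_sub_inertSeries {ε : ℂ}
    (hε : ∀ α : ZSqrtNegTwo, Odd α.re → char ψ α = if Even α.im then 1 else ε) {s : ℂ}
    (hs : 1 < s.re) : primeSeries (char ψ) s - inertSeries (char ψ) s =
      4 * LSeries (fun n => (primeLog {n | (n : ZMod 8) = 1} n : ℂ)) s +
        4 * ε * LSeries (fun n => (primeLog {n | (n : ZMod 8) = 3} n : ℂ)) s := by
  rw [← (LSeriesHasSum_normSum (norm_char_le ψ) hs).LSeries_eq, ← LSeries_smul, ← LSeries_smul,
    ← LSeries_add ((LSeriesSummable_primeLog _ hs).smul 4)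
      ((LSeriesSummable_primeLog _ hs).smul (4 * ε))]
  exact LSeries_congr (fun {n} _ => primeLog_mul_normSum_char hε n) s

-- The `3-4-1` argument fails here because `ψ ^ 2` is trivial; the primes modulo `8` replace it.
lemma hasBoundaryLimits_primeSeries_char_of_sq (hψ : ψ * ψ = 1) :
    HasBoundaryLimits fun s => primeSeries (char ψ) s - (if ψ = 1 then 2 else 0) / (s - 1) := by
  obtain ⟨ε, hε, hε1, hchar⟩ := exists_char_eq_of_sq hψ
  have hpole : (if ψ = 1 then (2 : ℂ) else 0) = 1 + ε := by
    split_ifs with hψ1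
    · have hodd : Odd (⟨1, 1⟩ : ZSqrtNegTwo).re := odd_one
      have hone := hchar ⟨1, 1⟩ hodd
      rw [char_of_odd ψ hodd, hψ1, AddChar.one_apply, if_neg (by decide)] at hone
      rw [← hone]
      norm_num
    · rw [hε.resolve_left fun h => hψ1 (hε1 h)]
      ring
  have hone := hasBoundaryLimits_primeLog_residue (q := 8) (a := 1) isUnit_one
  have hthree := hasBoundaryLimits_primeLog_residue (q := 8) (a := 3) (by decide)
  refine (((hone.const_mul 4).add (hthree.const_mul (4 * ε))).add
    (hasBoundaryLimits_inertSeries (norm_char_le ψ))).congr fun s hs => ?_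
  have htotient : Nat.totient 8 = 4 := by decide
  rw [hpole, htotient]
  push_cast
  linear_combination -primeSeries_char_sub_inertSeries hchar hs

lemma tendsto_sub_one_mul_of_hasBoundaryLimits {F : ℂ → ℂ} {c : ℂ}
    (h : HasBoundaryLimits fun s => F s - c / (s - 1)) :
    Tendsto (fun σ : ℝ => ((σ : ℂ) - 1) * F σ) (𝓝[>] 1) (𝓝 c) := by
  obtain ⟨l, hl⟩ := h 1 (by simp)
  have hpath : Tendsto (fun σ : ℝ => (σ : ℂ)) (𝓝[>] 1) (𝓝[{z | 1 < z.re}] 1) := by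
    refine tendsto_nhdsWithin_of_tendsto_nhds_of_eventually_within _ ?_ ?_
    · simpa using (Complex.continuous_ofReal.tendsto 1).mono_left nhdsWithin_le_nhds
    · filter_upwards [self_mem_nhdsWithin] with σ hσ
      simpa using hσ
  have hzero : Tendsto (fun σ : ℝ => (σ : ℂ) - 1) (𝓝[>] 1) (𝓝 0) := by
    simpa using (hpath.mono_right nhdsWithin_le_nhds).sub_const 1
  have hprod := (hzero.mul (hl.comp hpath)).add_const c
  rw [zero_mul, zero_add] at hprod
  refine hprod.congr' ?_
  filter_upwards [self_mem_nhdsWithin] with σ hσ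
  have hσ1 : (σ : ℂ) - 1 ≠ 0 := sub_ne_zero.mpr (by exact_mod_cast ne_of_gt hσ)
  simp only [Function.comp_apply]
  field_simp
  ring

lemma hasBoundaryLimits_primeSeries_char (ψ : AddChar (Slope k) ℂ) :
    HasBoundaryLimits fun s => primeSeries (char ψ) s - (if ψ = 1 then 2 else 0) / (s - 1) := by
  by_cases hψ : ψ * ψ = 1
  · exact hasBoundaryLimits_primeSeries_char_of_sq hψ
  have hψ1 : ψ ≠ 1 := by
    rintro rfl
    exact hψ (one_mul 1)
  have htrivial := hasBoundaryLimits_primeSeries_char_of_sq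
    (ψ := (1 : AddChar (Slope k) ℂ)) (one_mul 1)
  simp only [if_true] at htrivial
  simp only [if_neg hψ1, zero_div, sub_zero]
  refine hasBoundaryLimits_primeSeries (χ₀ := char 1) (χ₂ := char (ψ * ψ)) (fun α => ?_)
    (fun α => ?_) (fun α => ?_) (isBalanced_char hψ1) (isBalanced_char hψ)
    (tendsto_sub_one_mul_of_hasBoundaryLimits htrivial)
  all_goals by_cases hα : Odd α.re
  · exact .inr (norm_char_of_odd ψ hα)
  · exact .inl (char_of_not_odd ψ hα)
  · rw [norm_char_of_odd ψ hα, char_of_odd _ hα, AddChar.one_apply, Complex.ofReal_one]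
  · rw [char_of_not_odd _ hα, char_of_not_odd _ hα, norm_zero, Complex.ofReal_zero]
  · rw [char_of_odd _ hα, char_of_odd _ hα, AddChar.mul_apply, sq]
  · rw [char_of_not_odd _ hα, char_of_not_odd _ hα, zero_pow two_ne_zero]

end CharacterSeries

/-! ### Primes in `dihedralSet` -/

section Orthogonality

variable {k : ℕ}

lemma sum_addChar_neg_mul (t u : Slope k) :
    ∑ ψ : AddChar (Slope k) ℂ, ψ (-t) * ψ u = if u = t then 2 ^ k else 0 := by
  have hcard : Fintype.card (Slope k) = 2 ^ k := ZMod.card _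
  simp_rw [← AddChar.map_add_eq_mul]
  rw [AddChar.sum_apply_eq_ite, hcard]
  push_cast
  exact if_congr (by rw [neg_add_eq_zero, eq_comm]) rfl rfl

lemma exists_natNorm_eq_and_slope_eq_iff {α : ZSqrtNegTwo} (hα : (natNorm α).Prime)
    (hodd : Odd (natNorm α)) {t : Slope k} :
    (∃ β, natNorm β = natNorm α ∧ slope k β = t) ↔ slope k α = t ∨ slope k α = -t := by
  have hre := odd_natNorm_iff.mp hodd
  have hre' : Odd (star α).re := by simpa using hre
  simp only [← neg_eq_iff_eq_neg (a := slope k α), ← slope_star hre]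
  constructor
  · rintro ⟨β, hβ, rfl⟩
    rcases eq_or_of_natNorm_eq_prime hα hβ with rfl | rfl | rfl | rfl
    · exact .inl rfl
    · exact .inl (slope_neg hre).symm
    · exact .inr rfl
    · exact .inr (slope_neg hre').symm
  · rintro (h | h)
    · exact ⟨α, rfl, h⟩
    · exact ⟨star α, natNorm_star α, h⟩

lemma sum_char_mul_normSum_natNorm {α : ZSqrtNegTwo} (hα : (natNorm α).Prime)
    (hodd : Odd (natNorm α)) {t : Slope k} (ht : t ≠ -t) :
    ∑ ψ : AddChar (Slope k) ℂ, ψ (-t) * normSum (char ψ) (natNorm α) =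
      if slope k α = t ∨ slope k α = -t then 2 ^ (k + 1) else 0 := by
  have hre := odd_natNorm_iff.mp hodd
  have hre' : Odd (star α).re := by simpa using hre
  have hterm (ψ : AddChar (Slope k) ℂ) : ψ (-t) * normSum (char ψ) (natNorm α) =
      2 * (ψ (-t) * ψ (slope k α) + ψ (-t) * ψ (-slope k α)) := by
    rw [normSum_natNorm hα hodd (char_neg ψ), char_of_odd ψ hre, char_of_odd ψ hre',
      slope_star hre]
    ring
  simp_rw [hterm]
  rw [← Finset.mul_sum, Finset.sum_add_distrib, sum_addChar_neg_mul, sum_addChar_neg_mul]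
  simp_rw [neg_eq_iff_eq_neg]
  by_cases hpos : slope k α = t
  · rw [if_pos hpos, if_neg (hpos ▸ ht), if_pos (.inl hpos)]
    ring
  · by_cases hneg : slope k α = -t
    · rw [if_neg hpos, if_pos hneg, if_pos (.inr hneg)]
      ring
    · rw [if_neg hpos, if_neg hneg, if_neg (not_or.mpr ⟨hpos, hneg⟩)]
      ring

end Orthogonality

section DihedralSet

variable {n : ℕ}

lemma mem_dihedralSet_iff_exists_natNorm_eq {p : ℕ} :
    p ∈ dihedralSet n ↔ ∃ α : ZSqrtNegTwo, natNorm α = p ∧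
      (α.im : ZMod (2 ^ (n + 1))) = α.re * (1 + 2 ^ n) := by
  constructor
  · rintro ⟨x, y, hp, hxy⟩
    exact ⟨⟨x, y⟩, by exact_mod_cast (natCast_natNorm ⟨x, y⟩).trans hp, hxy⟩
  · rintro ⟨α, rfl, hα⟩
    exact ⟨α.re, α.im, (natCast_natNorm α).symm, hα⟩

lemma natNorm_mem_dihedralSet_iff {α : ZSqrtNegTwo} (hα : (natNorm α).Prime)
    (hodd : Odd (natNorm α)) : natNorm α ∈ dihedralSet n ↔
      slope (n + 1) α = of (1 + 2 ^ n) ∨ slope (n + 1) α = -of (1 + 2 ^ n) := by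
  rw [mem_dihedralSet_iff_exists_natNorm_eq, ← exists_natNorm_eq_and_slope_eq_iff hα hodd]
  refine exists_congr fun β => and_congr_right fun hβ => ?_
  exact (slope_eq_of_iff (odd_natNorm_iff.mp (hβ ▸ hodd))).symm

lemma two_notMem_dihedralSet : 2 ∉ dihedralSet n := by
  rintro ⟨x, y, hxy, hslope⟩
  obtain ⟨a, rfl⟩ : (2 : ℤ) ∣ x := Int.prime_two.dvd_of_dvd_pow (n := 2) ⟨1 - y ^ 2, by
    push_cast at hxy
    linear_combination hxy⟩
  obtain ⟨b, rfl⟩ : (2 : ℤ) ∣ y := by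
    have hdvd := (ZMod.intCast_eq_intCast_iff_dvd_sub y (2 * a * (1 + 2 ^ n)) (2 ^ (n + 1))).mp
      (by simpa using hslope)
    rw [mul_assoc, Nat.cast_pow] at hdvd
    exact (dvd_sub_right (dvd_mul_right 2 _)).mp ((dvd_pow_self 2 n.succ_ne_zero).trans hdvd)
  push_cast at hxy
  rw [mul_pow, mul_pow] at hxy
  lia

lemma of_one_add_two_pow_ne_neg_self (hn : 1 ≤ n) :
    of (1 + 2 ^ n : ZMod (2 ^ (n + 1))) ≠ -of (1 + 2 ^ n) := by
  intro heq
  rw [neg_of, of_injective.eq_iff] at heq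
  have hpow : (2 : ZMod (2 ^ (n + 1))) ^ (n + 1) = 0 := by
    exact_mod_cast ZMod.natCast_self (2 ^ (n + 1))
  have htwo : ((2 : ℕ) : ZMod (2 ^ (n + 1))) = 0 := by
    push_cast
    linear_combination heq - hpow
  have hle := Nat.le_of_dvd two_pos ((ZMod.natCast_eq_zero_iff _ _).mp htwo)
  exact hle.not_gt (lt_self_pow₀ one_lt_two (by lia))

lemma sum_char_mul_normSum (hn : 1 ≤ n) {p : ℕ} (hp : p.Prime) :
    ∑ ψ : AddChar (Slope (n + 1)) ℂ, ψ (-of (1 + 2 ^ n)) * normSum (char ψ) p =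
      (dihedralSet n).indicator (fun _ => 2 ^ (n + 2)) p := by
  classical
  by_cases hrep : ∃ α, natNorm α = p
  · obtain ⟨α, rfl⟩ := hrep
    rcases hp.eq_two_or_odd' with htwo | hodd
    · rw [htwo, Set.indicator_of_notMem two_notMem_dihedralSet]
      exact Finset.sum_eq_zero fun ψ _ => by rw [normSum_char_two, mul_zero]
    · rw [sum_char_mul_normSum_natNorm hp hodd (of_one_add_two_pow_ne_neg_self hn),
        Set.indicator_apply]
      exact if_congr (natNorm_mem_dihedralSet_iff hp hodd).symm rfl rfl
  · have hnotMem : p ∉ dihedralSet n := fun h =>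
      hrep ((mem_dihedralSet_iff_exists_natNorm_eq.mp h).imp fun _ => And.left)
    rw [Set.indicator_of_notMem hnotMem]
    refine Finset.sum_eq_zero fun ψ _ => ?_
    rw [normSum_eq_zero fun α hα => absurd ⟨α, hα⟩ hrep, mul_zero]

lemma LSeriesHasSum_primeLog_dihedralSet (hn : 1 ≤ n) {s : ℂ} (hs : 1 < s.re) :
    LSeriesHasSum (fun m => (primeLog (dihedralSet n) m : ℂ)) s (((2 : ℂ) ^ (n + 2))⁻¹ *
      ∑ ψ : AddChar (Slope (n + 1)) ℂ, ψ (-of (1 + 2 ^ n)) *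
        (primeSeries (char ψ) s - inertSeries (char ψ) s)) := by
  refine ((hasSum_sum fun ψ (_ : ψ ∈ Finset.univ) =>
    ((LSeriesHasSum_normSum (norm_char_le ψ) hs).mul_left
      (ψ (-of (1 + 2 ^ n))))).mul_left ((2 : ℂ) ^ (n + 2))⁻¹).congr_fun fun p => ?_
  by_cases hp : p.Prime
  · have hterm (ψ : AddChar (Slope (n + 1)) ℂ) : ψ (-of (1 + 2 ^ n)) *
        (((Real.log p : ℝ) : ℂ) * normSum (char ψ) p / (p : ℂ) ^ s) =
        ((Real.log p : ℝ) : ℂ) / (p : ℂ) ^ s * (ψ (-of (1 + 2 ^ n)) * normSum (char ψ) p) := by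
      ring
    simp_rw [LSeries.term_of_ne_zero hp.ne_zero, primeLog_of_mem hp (Set.mem_univ p), hterm]
    rw [← Finset.mul_sum, sum_char_mul_normSum hn hp]
    by_cases hmem : p ∈ dihedralSet n
    · rw [Set.indicator_of_mem hmem, primeLog_of_mem hp hmem]
      field_simp
    · rw [Set.indicator_of_notMem hmem, primeLog_of_notMem hmem]
      simp
  · simp [LSeries.term_def, primeLog_of_not_prime hp]

end DihedralSet

end ZSqrtNegTwo

open ZSqrtNegTwo Slope in
lemma hasBoundaryLimits_primeLog_dihedralSet {n : ℕ} (hn : 1 ≤ n) :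
    HasBoundaryLimits fun s => LSeries (fun m => (primeLog (dihedralSet n) m : ℂ)) s -
      (((1 / 2 : ℝ) ^ (n + 1) : ℝ) : ℂ) / (s - 1) := by
  have hlimits (ψ : AddChar (Slope (n + 1)) ℂ) : HasBoundaryLimits fun s =>
      ψ (-of (1 + 2 ^ n)) * (primeSeries (char ψ) s - (if ψ = 1 then 2 else 0) / (s - 1) -
        inertSeries (char ψ) s) :=
    ((hasBoundaryLimits_primeSeries_char ψ).sub
      (hasBoundaryLimits_inertSeries (norm_char_le ψ))).const_mul _
  refine ((HasBoundaryLimits.sum Finset.univ fun ψ _ => hlimits ψ).const_mul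
    ((2 : ℂ) ^ (n + 2))⁻¹).congr fun s hs => ?_
  have hpole : ∑ ψ : AddChar (Slope (n + 1)) ℂ, ψ (-of (1 + 2 ^ n)) *
      ((if ψ = 1 then 2 else 0) / (s - 1)) = 2 / (s - 1) := by
    rw [Fintype.sum_eq_single 1 fun ψ hψ => by simp [hψ]]
    simp
  have hconst : ((2 : ℂ) ^ (n + 2))⁻¹ * 2 = (((1 / 2 : ℝ) ^ (n + 1) : ℝ) : ℂ) := by
    push_cast
    rw [one_div, inv_pow, pow_succ 2 (n + 1)]
    field_simp
  rw [(LSeriesHasSum_primeLog_dihedralSet hn hs).LSeries_eq, ← hconst, mul_div_assoc, ← hpole,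
    ← mul_sub, ← Finset.sum_sub_distrib]
  exact congrArg _ (Finset.sum_congr rfl fun ψ _ => by ring)

end EtaDensity

/-- Theorem D, `ℚ(√−2)`-dihedral case: `D(24 ⬝ z_n) = 2^{-(n+1)}` for `n ≥ 1`,
where `z_n = (2·4^n + 1)/3`. -/
theorem etaPowerDensity_dihedral_sqrt_neg_two (n : ℕ) (hn : 1 ≤ n) :
    Tendsto
      (fun x : ℕ =>
        (etaDensityCount (24 * ((2 * 4 ^ n + 1) / 3)) x : ℝ) / (primePi x : ℝ))
      atTop (nhds ((1 / 2 : ℝ) ^ (n + 1))) := by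
  have hz : 3 * ((2 * 4 ^ n + 1) / 3) = 2 * 4 ^ n + 1 :=
    Nat.mul_div_cancel' (Nat.dvd_of_mod_eq_zero (by simp [Nat.add_mod, Nat.mul_mod, Nat.pow_mod]))
  exact EtaDensity.tendsto_etaDensityCount_div hn hz <|
    EtaDensity.tendsto_card_primesIn_div_primeCounting <|
      EtaDensity.hasBoundaryLimits_primeLog_dihedralSet hn
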